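/- arXiv:1710.07183 — 4 statements merged into one kernel-verified Lean document; each statement's English description precedes it below -/
import Mathlib

section
/- There is a function f : ℕ → ℕ → ℕ with the property that for any two finite non-abelian simple groups T₁ and T₂ of orders t₁ and t₂, every alternating group Alt(n) with n > f(t₁,t₂) is generated by a copy of T₁ and a copy of T₂; that is, there exist subgroups H₁, H₂ of Alt(n) with H₁ isomorphic to T₁, H₂ isomorphic to T₂, and H₁ ⊔ H₂ = Alt(n). -/
/-!
Let `G` and `H` be the two groups, and write `n = k |G| + r` with `0 < r ≤ |G|`. Let `G` act on `n`
points with `k` regular orbits and `r` fixed points, and thread a chain of regular orbits of `H`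
through the `k + r` orbits of `G`: each orbit of `H` meets each orbit of `G` at most twice, and all
orbits of `G` get connected, so that the action is transitive. The remaining freedom, namely which
points of the orbits of `G` are used, allows a word `x` in `G` and `H` that carries exactly one
moved point of `H` to a moved point `p` of `H`. For `y, z ∈ H` the permutations `y` and `x z x⁻¹`
then have at most the point `p` of their supports in common, so that their commutator is a 3-cycle
if both of them move `p`. These 3-cycles, together with a fixed point of `G` in the orbit of `p`
under `H`, make the action primitive, and the theorem of Jordan on 3-cycles applies.
-/

open Equiv Equiv.Perm MulAction
open scoped commutatorElement Pointwise

section ThreeCycle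

variable {Ω : Type*}

theorem apply_ne_apply_of_unique_moved {y z : Perm Ω} {p : Ω} (hy : y p ≠ p) (hz : z p ≠ p)
    (h : ∀ w, y w ≠ w → z w ≠ w → w = p) : z p ≠ y p := fun hzy ↦
  hy (h (y p) (y.injective.ne hy) (hzy ▸ z.injective.ne hz))

theorem commutator_eq_swap_mul_swap [DecidableEq Ω] {y z : Perm Ω} {p : Ω} (hy : y p ≠ p)
    (hz : z p ≠ p) (h : ∀ w, y w ≠ w → z w ≠ w → w = p) :
    ⁅y, z⁆ = swap p (z p) * swap p (y p) := by
  have hyz (w) (hw : z w ≠ w) (hwp : z w ≠ p) : y (z w) = z w :=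
    by_contra fun hne ↦ hwp (h _ hne (z.injective.ne hw))
  have hzy (w) (hw : y w ≠ w) (hwp : y w ≠ p) : z (y w) = y w :=
    by_contra fun hne ↦ hwp (h _ (y.injective.ne hw) hne)
  rw [commutatorElement_def, mul_inv_eq_iff_eq_mul, mul_inv_eq_iff_eq_mul]
  ext w
  simp only [Perm.mul_apply]
  grind [y.injective.eq_iff, z.injective.eq_iff, swap_apply_left, swap_apply_right,
    swap_apply_of_ne_of_ne]

theorem commutator_apply_of_unique_moved {y z : Perm Ω} {p : Ω} (hy : y p ≠ p) (hz : z p ≠ p)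
    (h : ∀ w, y w ≠ w → z w ≠ w → w = p) : ⁅y, z⁆ p = y p := by
  classical
  rw [commutator_eq_swap_mul_swap hy hz h, Perm.mul_apply, swap_apply_left,
    swap_apply_of_ne_of_ne hy (apply_ne_apply_of_unique_moved hy hz h).symm]

variable [Fintype Ω] [DecidableEq Ω]

theorem isThreeCycle_commutator {y z : Perm Ω} {p : Ω} (hy : y p ≠ p) (hz : z p ≠ p)
    (h : ∀ w, y w ≠ w → z w ≠ w → w = p) : ⁅y, z⁆.IsThreeCycle := by
  rw [commutator_eq_swap_mul_swap hy hz h]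
  exact isThreeCycle_swap_mul_swap_same hz.symm hy.symm (apply_ne_apply_of_unique_moved hy hz h)

theorem smul_eq_of_isBlock_of_isThreeCycle {G : Type*} [Group G] [MulAction G Ω] {B : Set Ω}
    (hB : IsBlock G B) (hB' : B.Nontrivial) {g : G} (hg : (toPerm g : Perm Ω).IsThreeCycle)
    {p : Ω} (hp : p ∈ B) (hgp : g • p ≠ p) : g • B = B := by
  obtain ⟨w, hw, hwp⟩ := hB'.exists_ne p
  by_cases hgw : g • w = w
  · exact hB.smul_eq_of_mem hw (hgw.symm ▸ hw)
  have hw_cycle : w = p ∨ w = g • p ∨ w = g • g • p := by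
    simpa [hg.support_eq_iff_mem_support.mpr (mem_support.mpr hgp)] using
      (mem_support (f := toPerm g)).mpr hgw
  rcases hw_cycle with rfl | rfl | rfl
  · exact absurd rfl hwp
  · exact hB.smul_eq_of_mem hp hw
  · have hg3 : g • g • g • p = p := by
      simpa [hg.orderOf, pow_succ] using Perm.congr_fun (pow_orderOf_eq_one (toPerm g)) p
    exact hB.smul_eq_of_mem hw (hg3.symm ▸ hp)

end ThreeCycle

section Criterion

variable {Ω : Type*} [Fintype Ω] [DecidableEq Ω] {G₁ G₂ : Subgroup (Perm Ω)}

theorem isPreprimitive_sup [IsPretransitive ↥(G₁ ⊔ G₂) Ω] {p f : Ω}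
    (hcycle : ∀ y ∈ G₂, y p ≠ p → ∃ c ∈ G₁ ⊔ G₂, c.IsThreeCycle ∧ c p = y p)
    (hf : f ∈ fixedPoints G₁ Ω) (hfp : f ∈ orbit G₂ p) :
    IsPreprimitive ↥(G₁ ⊔ G₂) Ω := by
  refine IsPreprimitive.of_isTrivialBlock_base p fun {B} hpB hB ↦ ?_
  rw [IsTrivialBlock, or_iff_not_imp_left, Set.not_subsingleton_iff]
  intro hBn
  -- A nontrivial block through `p` is preserved by every 3-cycle that moves `p`.
  have mem_of_mem_right (y) (hy : y ∈ G₂) : y p ∈ B := by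
    by_cases hyp : y p = p
    · exact hyp.symm ▸ hpB
    obtain ⟨c, hcG, hc, hcp⟩ := hcycle y hy hyp
    have hcB : (⟨c, hcG⟩ : ↥(G₁ ⊔ G₂)) • B = B :=
      smul_eq_of_isBlock_of_isThreeCycle hB hBn hc hpB (hcp.trans_ne hyp)
    rw [← hcp, ← hcB]
    exact Set.smul_mem_smul_set hpB
  have hfB : f ∈ B := by
    obtain ⟨y, rfl⟩ := hfp
    exact mem_of_mem_right y y.2
  have h_stab : G₁ ⊔ G₂ ≤ stabilizer (Perm Ω) B := sup_le
    (fun g hg ↦ hB.smul_eq_of_mem (g := ⟨g, Subgroup.mem_sup_left hg⟩) hfB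
      ((hf ⟨g, hg⟩ : g f = f).symm ▸ hfB :))
    (fun g hg ↦ hB.smul_eq_of_mem (g := ⟨g, Subgroup.mem_sup_right hg⟩) hpB
      (mem_of_mem_right g hg))
  refine Set.eq_univ_of_forall fun v ↦ ?_
  obtain ⟨g, rfl⟩ := exists_smul_eq ↥(G₁ ⊔ G₂) p v
  rw [← h_stab g.2]
  exact Set.smul_mem_smul_set hpB

theorem eq_of_moved_of_conj_moved {α : Type*} {H : Subgroup (Perm α)} {x : Perm α} {p : α}
    (hx : ∀ w, w ∉ fixedPoints H α → x w ∉ fixedPoints H α → x w = p)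
    {y z : Perm α} (hy : y ∈ H) (hz : z ∈ H) {w : α} (hyw : y w ≠ w)
    (hzw : (x * z * x⁻¹) w ≠ w) : w = p := by
  have hzxw : z (x⁻¹ w) ≠ x⁻¹ w := fun h ↦ hzw (by rw [Perm.mul_apply, Perm.mul_apply, h]; simp)
  simpa using hx (x⁻¹ w) (fun h ↦ hzxw (h ⟨z, hz⟩))
    (fun h ↦ hyw (by simpa using h ⟨y, hy⟩))

theorem alternatingGroup_le_sup [IsPretransitive ↥(G₁ ⊔ G₂) Ω] {x : Perm Ω} (hx : x ∈ G₁ ⊔ G₂)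
    {p f : Ω} (hxp : ∀ w, w ∉ fixedPoints G₂ Ω → x w ∉ fixedPoints G₂ Ω → x w = p)
    (hp : x⁻¹ p ∉ fixedPoints G₂ Ω) (hf : f ∈ fixedPoints G₁ Ω) (hfp : f ∈ orbit G₂ p)
    (hne : f ≠ p) : alternatingGroup Ω ≤ G₁ ⊔ G₂ := by
  obtain ⟨⟨z, hz⟩, hzp⟩ : ∃ z : G₂, z • x⁻¹ p ≠ x⁻¹ p := by
    simpa only [mem_fixedPoints, not_forall] using hp
  have hxzp : (x * z * x⁻¹) p ≠ p := fun h ↦ hzp (x.injective (by simpa using h))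
  have hxz : x * z * x⁻¹ ∈ G₁ ⊔ G₂ :=
    mul_mem (mul_mem hx (Subgroup.mem_sup_right hz)) (inv_mem hx)
  have hcycle (y) (hy : y ∈ G₂) (hyp : y p ≠ p) :
      ∃ c ∈ G₁ ⊔ G₂, c.IsThreeCycle ∧ c p = y p := by
    have h_eq (w) (hyw : y w ≠ w) (hzw : (x * z * x⁻¹) w ≠ w) : w = p :=
      eq_of_moved_of_conj_moved hxp hy hz hyw hzw
    have hyG : y ∈ G₁ ⊔ G₂ := Subgroup.mem_sup_right hy
    exact ⟨⁅y, x * z * x⁻¹⁆,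
      mul_mem (mul_mem (mul_mem hyG hxz) (inv_mem hyG)) (inv_mem hxz),
      isThreeCycle_commutator hyp hxzp h_eq, commutator_apply_of_unique_moved hyp hxzp h_eq⟩
  obtain ⟨y, rfl⟩ := id hfp
  obtain ⟨c, hcG, hc, -⟩ := hcycle y y.2 hne
  exact alternatingGroup_le_of_isPreprimitive_of_isThreeCycle_mem
    (isPreprimitive_sup hcycle hf hfp) hc hcG

end Criterion

section SemiregularHom

variable {I G Ω : Type*} [Group G] (ι : I × G ↪ Ω)

/-- The semiregular action of `G` on `Ω` whose regular orbits are the images under `ι` of the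
rows `{i} × G`, and which fixes every point outside the range of `ι`. -/
noncomputable def semiregularHom : G →* Perm Ω :=
  (viaEmbeddingHom ι).comp
    { toFun g := (Equiv.refl I).prodCongr (Equiv.mulLeft g)
      map_one' := by ext <;> simp
      map_mul' g h := by ext <;> simp [mul_assoc] }

theorem semiregularHom_apply (g : G) (u : I × G) :
    semiregularHom ι g (ι u) = ι (u.1, g * u.2) :=
  viaEmbedding_apply _ ι u

theorem semiregularHom_apply_of_notMem (g : G) {w : Ω} (hw : w ∉ Set.range ι) :
    semiregularHom ι g w = w :=
  viaEmbedding_apply_of_notMem _ ι w hw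

theorem semiregularHom_injective [Nonempty I] : Function.Injective (semiregularHom ι) := by
  intro g h hgh
  obtain ⟨i⟩ := ‹Nonempty I›
  have hι : ι (i, g * 1) = ι (i, h * 1) := by
    rw [← semiregularHom_apply ι g (i, 1), hgh, semiregularHom_apply]
  simpa using hι

theorem mem_fixedPoints_range_semiregularHom [Nontrivial G] {w : Ω} :
    w ∈ fixedPoints (semiregularHom ι).range Ω ↔ w ∉ Set.range ι := by
  constructor
  · rintro hw ⟨u, rfl⟩
    obtain ⟨g, hg⟩ := exists_ne (1 : G)
    have hι : ι (u.1, g * u.2) = ι u :=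
      (semiregularHom_apply ι g u).symm.trans (hw ⟨_, g, rfl⟩)
    exact hg (mul_eq_right.mp (congrArg Prod.snd (ι.injective hι)))
  · rintro hw ⟨_, g, rfl⟩
    exact semiregularHom_apply_of_notMem ι g hw

end SemiregularHom

/-- A combinatorial plan for two groups `G` and `H` acting on a common set, where `B` stands for
the underlying set of `H`. The nodes `V` index the orbits of `G`: those in `fixed` are single points
and the others are regular. The rows `{j} × B` of `L × B` index the regular orbits of `H`, and the
point `u` of such a row lies in the `G`-orbit `node u`. Two such points in the same `G`-orbit are
told apart by their flags. By `eq_univ_of_saturated`, the rows connect all nodes. The word whose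
conjugation action produces 3-cycles will move the point `source` to the point `target`. -/
structure OrbitPattern (V L B : Type*) where
  node : L × B → V
  flag : L × B → Bool
  fixed : Set V
  node_flag_injective : Function.Injective fun u ↦ (node u, flag u)
  flag_of_node_mem_fixed : ∀ {u}, node u ∈ fixed → flag u = false
  eq_of_node_mem_fixed : ∀ {u v}, u.1 = v.1 → node u ∈ fixed → node v ∈ fixed → u = v
  eq_univ_of_saturated : ∀ C : Set V, C.Nonempty →
    (∀ u v, u.1 = v.1 → node u ∈ C → node v ∈ C) → C = Set.univ
  source : L × B
  target : L × B
  node_source : node source = node target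
  flag_source : flag source = true
  flag_target : flag target = false
  exists_mem_fixed : ∃ u, u.1 = target.1 ∧ node u ∈ fixed

/-- Coordinates `label v b` in `G`, indexed by the flag `b`, for the at most two points of the
regular `H`-orbits in the `G`-orbit of index `v`. Left translation by `z₁` or by `z₂` moves the
labels of every node off themselves, whereas left translation by `z₂ * z₁` creates a single
coincidence of labels, at the node `v₀`. -/
structure OrbitLabelling (V G : Type*) [Group G] (v₀ : V) where
  label : V → Bool → G
  z₁ : G
  z₂ : G
  label_false : ∀ v, label v false = 1
  label_injective : ∀ v, Function.Injective (label v)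
  z₁_mul_label_ne : ∀ v b b', z₁ * label v b ≠ label v b'
  z₂_mul_label_ne : ∀ v b b', z₂ * label v b ≠ label v b'
  z₂_mul_z₁_mul_label : z₂ * z₁ * label v₀ true = 1
  eq_of_z₂_mul_z₁_mul_label : ∀ {v b b'}, z₂ * z₁ * label v b = label v b' → v = v₀ ∧ b = true

namespace OrbitPattern

theorem node_target_notMem_fixed {V L B : Type*} (P : OrbitPattern V L B) :
    P.node P.target ∉ P.fixed := by
  rw [← P.node_source]
  intro h
  simpa [P.flag_source] using P.flag_of_node_mem_fixed h

/-- The set on which `G` and `H` act according to a pattern: the points of a regular `G`-orbit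
are the pairs with its index as first entry, and the `G`-fixed point of index `v` is `(v, 1)`. -/
abbrev Point {V L B : Type*} (P : OrbitPattern V L B) (G : Type*) [One G] : Type _ :=
  {x : V × G // x.1 ∈ P.fixed → x.2 = 1}

section LeftAction

variable {V L B G : Type*} [Group G] (P : OrbitPattern V L B)

theorem card_point [Finite V] [Finite G] :
    Nat.card (P.Point G) = P.fixedᶜ.ncard * Nat.card G + P.fixed.ncard := by
  classical
  have := Fintype.ofFinite V
  have card_fiber (v : V) :
      Nat.card {g : G // v ∈ P.fixed → g = 1} = if v ∈ P.fixed then 1 else Nat.card G := by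
    split_ifs with hv <;> simp [hv]
  rw [Point, Nat.card_congr (Equiv.subtypeProdEquivSigmaSubtype fun v g ↦ v ∈ P.fixed → g = 1),
    Nat.card_sigma]
  simp_rw [card_fiber]
  rw [Finset.sum_ite, Finset.sum_const, Finset.sum_const, add_comm, smul_eq_mul, smul_eq_mul,
    mul_one, ← Set.ncard_coe_finset, ← Set.ncard_coe_finset]
  simp [Set.compl_def]

variable (G) in
/-- The union of the regular `G`-orbits. -/
def regularEmbedding : ↥P.fixedᶜ × G ↪ P.Point G where
  toFun x := ⟨(x.1, x.2), fun hx ↦ absurd hx x.1.2⟩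
  inj' x y hxy := by simpa [Prod.ext_iff, Subtype.ext_iff] using hxy

variable (G) in
/-- The action of `G` prescribed by the pattern. -/
noncomputable def leftHom : G →* Perm (P.Point G) :=
  semiregularHom (P.regularEmbedding G)

theorem leftHom_injective : Function.Injective (P.leftHom G) :=
  have : Nonempty ↥P.fixedᶜ := ⟨⟨_, P.node_target_notMem_fixed⟩⟩
  semiregularHom_injective _

theorem leftHom_apply_of_mem (g : G) {a : P.Point G} (ha : a.1.1 ∈ P.fixed) :
    P.leftHom G g a = a :=
  semiregularHom_apply_of_notMem _ g (by rintro ⟨x, rfl⟩; exact x.1.2 ha)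

theorem leftHom_apply_of_notMem (g : G) {a : P.Point G} (ha : a.1.1 ∉ P.fixed) :
    (P.leftHom G g a).1 = (a.1.1, g * a.1.2) :=
  congrArg Subtype.val (semiregularHom_apply (P.regularEmbedding G) g (⟨a.1.1, ha⟩, a.1.2))

theorem exists_leftHom_apply_eq {a b : P.Point G} (hab : a.1.1 = b.1.1) :
    ∃ g, P.leftHom G g a = b := by
  by_cases ha : a.1.1 ∈ P.fixed
  · refine ⟨1, Subtype.ext (Prod.ext (by simpa using hab) ?_)⟩
    simp [a.2 ha, b.2 (hab ▸ ha)]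
  · refine ⟨b.1.2 * a.1.2⁻¹, Subtype.ext ?_⟩
    rw [P.leftHom_apply_of_notMem _ ha, inv_mul_cancel_right, hab]

end LeftAction

section Thread

variable {V L B G : Type*} [Group G] {P : OrbitPattern V L B}
  (ℓ : OrbitLabelling V G (P.node P.target))

/-- The union of the regular `H`-orbits. -/
def threadEmbedding : L × B ↪ P.Point G where
  toFun u := ⟨(P.node u, ℓ.label (P.node u) (P.flag u)), fun hu ↦ by
    rw [P.flag_of_node_mem_fixed hu, ℓ.label_false]⟩
  inj' u v huv := by
    obtain ⟨hnode, hlabel⟩ := Prod.ext_iff.mp (congrArg Subtype.val huv)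
    dsimp only at hnode hlabel
    rw [← hnode] at hlabel
    exact P.node_flag_injective (Prod.ext hnode (ℓ.label_injective _ hlabel))

theorem notMem_range_threadEmbedding {a : P.Point G}
    (ha : ∀ b, a.1.2 ≠ ℓ.label a.1.1 b) : a ∉ Set.range (threadEmbedding ℓ) := by
  rintro ⟨u, rfl⟩
  exact ha (P.flag u) rfl

end Thread

section RightAction

variable {V L G H : Type*} [Group G] [Group H] {P : OrbitPattern V L H}
  (ℓ : OrbitLabelling V G (P.node P.target))

/-- The action of `H` prescribed by the pattern. -/
noncomputable def rightHom : H →* Perm (P.Point G) :=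
  semiregularHom (threadEmbedding ℓ)

theorem rightHom_injective : Function.Injective (rightHom ℓ) :=
  have : Nonempty L := ⟨P.target.1⟩
  semiregularHom_injective _

theorem exists_rightHom_apply_eq {u v : L × H} (huv : u.1 = v.1) :
    ∃ h, rightHom ℓ h (threadEmbedding ℓ u) = threadEmbedding ℓ v :=
  ⟨v.2 * u.2⁻¹, by rw [rightHom, semiregularHom_apply, inv_mul_cancel_right, huv]⟩

theorem isPretransitive_sup_range :
    IsPretransitive ↥((P.leftHom G).range ⊔ (rightHom ℓ).range) (P.Point G) := by
  set K := (P.leftHom G).range ⊔ (rightHom ℓ).range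
  have orbit_eq_of_fst_eq {a b : P.Point G} (hab : a.1.1 = b.1.1) : orbit K a = orbit K b := by
    obtain ⟨g, rfl⟩ := P.exists_leftHom_apply_eq hab
    exact (orbit_smul (⟨_, Subgroup.mem_sup_left ⟨g, rfl⟩⟩ : K) a).symm
  have orbit_thread_eq {u v : L × H} (huv : u.1 = v.1) :
      orbit K (threadEmbedding ℓ u) = orbit K (threadEmbedding ℓ v) := by
    obtain ⟨h, hh⟩ := exists_rightHom_apply_eq ℓ huv
    rw [← hh]
    exact (orbit_smul (⟨_, Subgroup.mem_sup_right ⟨h, rfl⟩⟩ : K) _).symm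
  let base : P.Point G := threadEmbedding ℓ P.target
  have reached : {v | ∃ a : P.Point G, orbit K a = orbit K base ∧ a.1.1 = v} = Set.univ := by
    refine P.eq_univ_of_saturated _ ⟨_, base, rfl, rfl⟩ ?_
    rintro u v huv ⟨a, ha, hau⟩
    exact ⟨threadEmbedding ℓ v,
      by rw [← orbit_thread_eq huv, ← ha, orbit_eq_of_fst_eq (b := threadEmbedding ℓ u) hau],
      rfl⟩
  have orbit_eq_base (b : P.Point G) : orbit K b = orbit K base := by
    obtain ⟨a, ha, hab⟩ := reached.symm ▸ Set.mem_univ b.1.1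
    rw [← ha, orbit_eq_of_fst_eq hab]
  exact ⟨fun a b ↦ mem_orbit_iff.mp (orbit_eq_iff.mp
    ((orbit_eq_base b).trans (orbit_eq_base a).symm))⟩

/-- The word in `G` and `H` that carries a single point of the regular `H`-orbits into one of
these orbits. -/
noncomputable def shift (h : H) : Perm (P.Point G) :=
  P.leftHom G ℓ.z₂ * rightHom ℓ h * P.leftHom G ℓ.z₁

theorem shift_mem (h : H) : shift ℓ h ∈ (P.leftHom G).range ⊔ (rightHom ℓ).range :=
  mul_mem (mul_mem (Subgroup.mem_sup_left ⟨_, rfl⟩) (Subgroup.mem_sup_right ⟨_, rfl⟩))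
    (Subgroup.mem_sup_left ⟨_, rfl⟩)

theorem shift_threadEmbedding_of_notMem (h : H) {u : L × H} (hu : P.node u ∉ P.fixed) :
    (shift ℓ h (threadEmbedding ℓ u)).1 =
      (P.node u, ℓ.z₂ * ℓ.z₁ * ℓ.label (P.node u) (P.flag u)) := by
  have h₁ : (P.leftHom G ℓ.z₁ (threadEmbedding ℓ u)).1 =
      (P.node u, ℓ.z₁ * ℓ.label (P.node u) (P.flag u)) := P.leftHom_apply_of_notMem _ hu
  have h₂ : rightHom ℓ h (P.leftHom G ℓ.z₁ (threadEmbedding ℓ u)) =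
      P.leftHom G ℓ.z₁ (threadEmbedding ℓ u) :=
    semiregularHom_apply_of_notMem _ h <| notMem_range_threadEmbedding ℓ fun b ↦ by
      rw [h₁]; exact ℓ.z₁_mul_label_ne _ _ _
  rw [shift, Perm.mul_apply, Perm.mul_apply, h₂, P.leftHom_apply_of_notMem _ (by rwa [h₁]), h₁,
    mul_assoc]

theorem shift_threadEmbedding_notMem_range {h : H} (hh : h ≠ 1) {u : L × H}
    (hu : P.node u ∈ P.fixed) :
    shift ℓ h (threadEmbedding ℓ u) ∉ Set.range (threadEmbedding ℓ) := by
  have hu' : P.node (u.1, h * u.2) ∉ P.fixed := fun hu' ↦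
    hh (mul_eq_right.mp (congrArg Prod.snd
      (P.eq_of_node_mem_fixed (u := (u.1, h * u.2)) (v := u) rfl hu' hu)))
  rw [shift, Perm.mul_apply, Perm.mul_apply,
    P.leftHom_apply_of_mem _ (a := threadEmbedding ℓ u) hu, rightHom, semiregularHom_apply]
  refine notMem_range_threadEmbedding ℓ fun b ↦ ?_
  rw [P.leftHom_apply_of_notMem _ hu']
  exact ℓ.z₂_mul_label_ne _ _ _

theorem shift_threadEmbedding_source (h : H) :
    shift ℓ h (threadEmbedding ℓ P.source) = threadEmbedding ℓ P.target := by
  have htarget : (threadEmbedding ℓ P.target).1 = (P.node P.target, 1) :=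
    Prod.ext rfl ((congrArg (ℓ.label _) P.flag_target).trans (ℓ.label_false _))
  rw [Subtype.ext_iff, htarget,
    shift_threadEmbedding_of_notMem ℓ h (P.node_source ▸ P.node_target_notMem_fixed),
    P.flag_source, P.node_source, ℓ.z₂_mul_z₁_mul_label]

theorem shift_threadEmbedding_eq {h : H} (hh : h ≠ 1) {u : L × H}
    (hu : shift ℓ h (threadEmbedding ℓ u) ∈ Set.range (threadEmbedding ℓ)) :
    shift ℓ h (threadEmbedding ℓ u) = threadEmbedding ℓ P.target := by
  have hu_fixed : P.node u ∉ P.fixed := fun hu' ↦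
    shift_threadEmbedding_notMem_range ℓ hh hu' hu
  obtain ⟨b, hb⟩ : ∃ b, ℓ.z₂ * ℓ.z₁ * ℓ.label (P.node u) (P.flag u) = ℓ.label (P.node u) b := by
    contrapose! hu
    exact notMem_range_threadEmbedding ℓ (by rwa [shift_threadEmbedding_of_notMem ℓ h hu_fixed])
  obtain ⟨hnode, hflag⟩ := ℓ.eq_of_z₂_mul_z₁_mul_label hb
  obtain rfl : u = P.source :=
    P.node_flag_injective
      (Prod.ext (hnode.trans P.node_source.symm) (hflag.trans P.flag_source.symm))
  exact shift_threadEmbedding_source ℓ h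

theorem alternatingGroup_le_sup_range [Nontrivial H] [Fintype (P.Point G)]
    [DecidableEq (P.Point G)] :
    alternatingGroup (P.Point G) ≤ (P.leftHom G).range ⊔ (rightHom ℓ).range := by
  obtain ⟨h, hh⟩ := exists_ne (1 : H)
  obtain ⟨u, hu_target, hu⟩ := P.exists_mem_fixed
  have := isPretransitive_sup_range ℓ
  have hsource : (shift ℓ h)⁻¹ (threadEmbedding ℓ P.target) = threadEmbedding ℓ P.source := by
    rw [Perm.inv_eq_iff_eq, shift_threadEmbedding_source]
  have mem_fixed {a : P.Point G} :
      a ∈ fixedPoints (rightHom ℓ).range (P.Point G) ↔ a ∉ Set.range (threadEmbedding ℓ) :=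
    mem_fixedPoints_range_semiregularHom _
  refine alternatingGroup_le_sup (x := shift ℓ h) (p := threadEmbedding ℓ P.target)
    (f := threadEmbedding ℓ u) (shift_mem ℓ h) ?_ ?_ ?_ ?_ ?_
  · simp only [mem_fixed, not_not]
    rintro _ ⟨v, rfl⟩ hv
    exact shift_threadEmbedding_eq ℓ hh hv
  · rw [hsource, mem_fixed, not_not]
    exact ⟨_, rfl⟩
  · rintro ⟨_, g, rfl⟩
    exact P.leftHom_apply_of_mem g hu
  · obtain ⟨g, hg⟩ := exists_rightHom_apply_eq ℓ hu_target.symm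
    exact ⟨⟨_, g, rfl⟩, hg⟩
  · intro h_eq
    rw [(threadEmbedding ℓ).injective h_eq] at hu
    exact P.node_target_notMem_fixed hu

end RightAction

end OrbitPattern

section Labelling

variable {G : Type*} [Group G]

theorem exists_notMem_mul_eq (D : Finset G) (hD : 2 * D.card < Nat.card G) (t : G) :
    ∃ z₁ z₂, z₁ ∉ D ∧ z₂ ∉ D ∧ z₂ * z₁ = t := by
  classical
  have := Nat.finite_of_card_ne_zero (Nat.ne_zero_of_lt hD)
  have := Fintype.ofFinite G
  have hcard : (D ∪ D.image fun z ↦ z⁻¹ * t).card < Fintype.card G := by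
    have := Finset.card_union_le D (D.image fun z ↦ z⁻¹ * t)
    have := Finset.card_image_le (s := D) (f := fun z ↦ z⁻¹ * t)
    rw [← Nat.card_eq_fintype_card]
    lia
  obtain ⟨z₁, -, hz₁⟩ := Finset.exists_mem_notMem_of_card_lt_card hcard
  rw [Finset.mem_union, not_or] at hz₁
  refine ⟨z₁, t * z₁⁻¹, hz₁.1, fun h ↦ hz₁.2 (Finset.mem_image.mpr ⟨_, h, by simp⟩), by simp⟩

theorem OrbitLabelling.nonempty_of_mul_self_ne_one {V : Type*} (hG : 10 < Nat.card G) {c : G}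
    (hc : c * c ≠ 1) (v₀ : V) : Nonempty (OrbitLabelling V G v₀) := by
  classical
  have hc₁ : c ≠ 1 := by rintro rfl; simp at hc
  obtain ⟨s, hs⟩ : ∃ s, s ∉ ({1, c, c⁻¹} : Finset G) := by
    obtain ⟨s, -, hs, -⟩ := exists_notMem_mul_eq ({1, c, c⁻¹} : Finset G)
      (by have := Finset.card_le_three (a := (1 : G)) (b := c) (c := c⁻¹); lia) 1
    exact ⟨s, hs⟩
  -- The avoided elements are the quotients of two labels of the same node, as defined below.
  obtain ⟨z₁, z₂, hz₁, hz₂, hz⟩ := exists_notMem_mul_eq ({1, c, c⁻¹, s, s⁻¹} : Finset G)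
    (by have := Finset.card_le_five (a := (1 : G)) (b := c) (c := c⁻¹) (d := s) (e := s⁻¹); lia)
    c⁻¹
  simp only [Finset.mem_insert, Finset.mem_singleton, not_or] at hs hz₁ hz₂
  have hcs : c * s ≠ 1 := fun h ↦ hs.2.2 (eq_inv_of_mul_eq_one_right h)
  let label (v : V) (b : Bool) : G := bif b then (if v = v₀ then c else s) else 1
  have mul_label_ne {z : G} (hz : z ≠ 1 ∧ z ≠ c ∧ z ≠ c⁻¹ ∧ z ≠ s ∧ z ≠ s⁻¹) (v : V)
      (b b' : Bool) : z * label v b ≠ label v b' := by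
    cases b <;> cases b' <;> by_cases hv : v = v₀ <;> simp [label, hv, hz, ← eq_inv_iff_mul_eq_one]
  exact ⟨{
    label
    z₁
    z₂
    label_false _ := rfl
    label_injective v b b' h := by
      by_contra hb
      cases b <;> cases b' <;> by_cases hv : v = v₀ <;> simp_all [label, eq_comm]
    z₁_mul_label_ne := mul_label_ne hz₁
    z₂_mul_label_ne := mul_label_ne hz₂
    z₂_mul_z₁_mul_label := by simp [label, hz]
    eq_of_z₂_mul_z₁_mul_label {v b b'} h := by
      rw [hz] at h
      cases b <;> cases b' <;> by_cases hv : v = v₀ <;>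
        simp_all [label, inv_mul_eq_iff_eq_mul, inv_eq_iff_mul_eq_one] }⟩

end Labelling

section Interval

theorem le_of_mul_lt_mul_add {d i j : ℕ} (h : d * i < d * j + d) : i ≤ j :=
  Nat.lt_succ_iff.mp (Nat.lt_of_mul_lt_mul_left (h.trans_eq (Nat.mul_succ d j).symm))

theorem eq_of_min_add_eq {d M i j s t : ℕ} (hd : 0 < d) (hi : d * i < M + d) (hj : d * j < M + d)
    (hs : s ≤ d) (ht : t ≤ d) (h : min (d * i) M + s = min (d * j) M + t)
    (hflag : min (d * i) M + s ≤ d * i ↔ min (d * j) M + t ≤ d * j) : i = j :=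
  -- In row `i`, the points `v ≤ d * i` satisfy `d * i < v + d`, the others `v ≤ d * i + d`.
  le_antisymm (le_of_mul_lt_mul_add (d := d) (by lia)) (le_of_mul_lt_mul_add (d := d) (by lia))

theorem eq_of_min_add_eq_mul_add_one {d M r i m t : ℕ} (hd : 2 ≤ d) (hM : d * r ≤ M)
    (ht : t ≤ d) (hm : m < r) (h : min (d * i) M + t = d * m + 1) :
    i = m ∧ t = 1 := by
  have hmM : d * m + d ≤ M := (Nat.mul_succ d m).symm.trans_le ((Nat.mul_le_mul_left d hm).trans hM)
  obtain rfl : i = m :=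
    le_antisymm (le_of_mul_lt_mul_add (d := d) (by lia)) (le_of_mul_lt_mul_add (d := d) (by lia))
  exact ⟨rfl, by lia⟩

theorem lt_min_mul_div_add {d M v : ℕ} (hd : 0 < d) (hv : v < M + d) :
    v < min (d * (v / d)) M + d := by
  have := Nat.lt_mul_div_succ v hd
  rw [Nat.mul_succ] at this
  lia

theorem eq_univ_of_castSucc_mem_iff {n : ℕ} {C : Set (Fin (n + 1))} (hC : C.Nonempty)
    (h : ∀ i : Fin n, i.castSucc ∈ C ↔ i.succ ∈ C) : C = Set.univ := by
  have mem_iff_zero_mem (v : Fin (n + 1)) : v ∈ C ↔ 0 ∈ C :=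
    Fin.induction Iff.rfl (fun i hi ↦ (h i).symm.trans hi) v
  obtain ⟨w, hw⟩ := hC
  exact Set.eq_univ_of_forall fun v ↦ (mem_iff_zero_mem v).mpr ((mem_iff_zero_mem w).mp hw)

theorem eq_univ_of_forall_interval {d M : ℕ} (hd : 0 < d) {C : Set (Fin (M + d + 1))}
    (hC : C.Nonempty)
    (h : ∀ j, d * j < M + d → ∀ v v' : Fin (M + d + 1),
      (v : ℕ) ∈ Set.Icc (min (d * j) M) (min (d * j) M + d) →
      (v' : ℕ) ∈ Set.Icc (min (d * j) M) (min (d * j) M + d) → v ∈ C → v' ∈ C) :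
    C = Set.univ := by
  refine eq_univ_of_castSucc_mem_iff hC fun i ↦ ?_
  have h_le : d * (i / d) ≤ i := Nat.mul_div_le i d
  have h_lt := lt_min_mul_div_add hd i.is_lt
  have hi_mem : (i.castSucc : ℕ) ∈ Set.Icc (min (d * (i / d)) M) (min (d * (i / d)) M + d) :=
    ⟨min_le_of_left_le h_le, h_lt.le⟩
  have hi_succ_mem : (i.succ : ℕ) ∈ Set.Icc (min (d * (i / d)) M) (min (d * (i / d)) M + d) :=
    ⟨hi_mem.1.trans (Nat.le_succ _), h_lt⟩
  exact ⟨h _ (by lia) _ _ hi_mem hi_succ_mem, h _ (by lia) _ _ hi_succ_mem hi_mem⟩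

/-- The pattern on the nodes `0, …, M + d` in which the rows are the intervals of `d + 1` nodes
that start at the multiples of `d` up to `M`, followed by the final interval `[M, M + d]` if `d`
does not divide `M`. The flagged points of a row are those it shares with the previous one, together
with the point `0` of the first row. The fixed nodes are `1, d + 1, …, (r - 1) * d + 1`. -/
def OrbitPattern.interval {B : Type*} {d r M : ℕ} (hd : 2 ≤ d) (hr : 0 < r) (hM : d * r ≤ M)
    (τ : B ≃ Fin (d + 1)) : OrbitPattern (Fin (M + d + 1)) {j : ℕ // d * j < M + d} B where
  node u := ⟨min (d * u.1) M + τ u.2, by lia⟩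
  flag u := decide (min (d * u.1) M + τ u.2 ≤ d * u.1)
  fixed := {v | ∃ m < r, (v : ℕ) = d * m + 1}
  node_flag_injective := by
    rintro ⟨⟨i, hi⟩, b⟩ ⟨⟨j, hj⟩, b'⟩ h
    simp only [Prod.mk.injEq, Fin.mk.injEq, decide_eq_decide] at h
    obtain rfl : i = j := eq_of_min_add_eq (by lia) hi hj (τ b).is_le (τ b').is_le h.1 h.2
    simpa [Fin.val_inj] using h.1
  flag_of_node_mem_fixed := by
    rintro ⟨⟨i, hi⟩, b⟩ ⟨m, hm, hb⟩
    obtain ⟨rfl, -⟩ := eq_of_min_add_eq_mul_add_one hd hM (τ b).is_le hm hb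
    exact decide_eq_false (hb.trans_gt (Nat.lt_succ_self _)).not_ge
  eq_of_node_mem_fixed := by
    rintro ⟨⟨i, hi⟩, b⟩ ⟨⟨j, hj⟩, b'⟩ hij ⟨m, hm, hb⟩ ⟨m', hm', hb'⟩
    refine Prod.ext hij (τ.injective (Fin.ext ?_))
    rw [(eq_of_min_add_eq_mul_add_one hd hM (τ b).is_le hm hb).2,
      (eq_of_min_add_eq_mul_add_one hd hM (τ b').is_le hm' hb').2]
  eq_univ_of_saturated C hC h := by
    refine eq_univ_of_forall_interval (by lia) hC fun j hj v v' ⟨hv, hvd⟩ ⟨hv', hvd'⟩ hvC ↦ ?_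
    have hvv' := h ⟨⟨j, hj⟩, τ.symm ⟨v - min (d * j) M, by lia⟩⟩
      ⟨⟨j, hj⟩, τ.symm ⟨v' - min (d * j) M, by lia⟩⟩ rfl
    simp only [Equiv.apply_symm_apply, Nat.add_sub_cancel' hv, Nat.add_sub_cancel' hv'] at hvv'
    exact hvv' hvC
  source := ⟨⟨1, by have := Nat.mul_le_mul_left d hr; lia⟩, τ.symm 0⟩
  target := ⟨⟨0, by lia⟩, τ.symm (Fin.last d)⟩
  node_source := by
    have := Nat.mul_le_mul_left d hr
    simp only [Equiv.apply_symm_apply, Fin.val_zero, Fin.val_last, Fin.mk.injEq]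
    lia
  flag_source := by simp
  flag_target := by
    simp only [Equiv.apply_symm_apply, Fin.val_last, decide_eq_false_iff_not]
    lia
  exists_mem_fixed := ⟨(⟨0, by lia⟩, τ.symm ⟨1, by lia⟩), rfl, 0, hr, by simp⟩

theorem OrbitPattern.ncard_fixed_interval {B : Type*} {d r M : ℕ} (hd : 2 ≤ d) (hr : 0 < r)
    (hM : d * r ≤ M) (τ : B ≃ Fin (d + 1)) : (interval hd hr hM τ).fixed.ncard = r := by
  have h_le {m : ℕ} (hm : m < r) : d * m + d ≤ M :=
    (Nat.mul_succ d m).symm.trans_le ((Nat.mul_le_mul_left d hm).trans hM)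
  have h_range : (interval hd hr hM τ).fixed =
      Set.range fun m : Fin r ↦ (⟨d * m + 1, by have := h_le m.is_lt; lia⟩ : Fin (M + d + 1)) := by
    ext v
    simp [interval, Fin.exists_iff, Fin.ext_iff, eq_comm]
  rw [h_range, Set.ncard_range_of_injective, Nat.card_fin]
  intro m m' h
  simpa [Fin.val_inj, (by lia : d ≠ 0)] using h

end Interval

theorem OrbitPattern.exists_card_eq {B : Type*} (hB : 2 < Nat.card B) {a n : ℕ} (ha : 0 < a)
    (hn : a * (a * Nat.card B + Nat.card B) < n) :
    ∃ (N : ℕ) (L : Type) (P : OrbitPattern (Fin N) L B),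
      P.fixedᶜ.ncard * a + P.fixed.ncard = n := by
  obtain ⟨d, hd⟩ : ∃ d, Nat.card B = d + 1 := ⟨Nat.card B - 1, by lia⟩
  have : Finite B := Nat.finite_of_card_ne_zero (by lia)
  let τ : B ≃ Fin (d + 1) := Finite.equivFinOfCardEq hd
  rw [hd] at hB hn
  obtain ⟨k, r, hr, hra, hk, rfl⟩ :
      ∃ k r, 0 < r ∧ r ≤ a ∧ a * (d + 1) + (d + 1) ≤ k ∧ n = k * a + r := by
    refine ⟨(n - 1) / a, (n - 1) % a + 1, Nat.succ_pos _, Nat.mod_lt _ ha, ?_, ?_⟩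
    · rw [Nat.le_div_iff_mul_le ha]
      lia
    · have := Nat.div_add_mod' (n - 1) a
      lia
  have hdr : d * r ≤ a * (d + 1) := mul_comm a _ ▸ Nat.mul_le_mul d.le_succ hra
  refine ⟨_, _, interval (M := k + r - (d + 1)) (by lia) hr (by lia) τ, ?_⟩
  rw [Set.ncard_compl, ncard_fixed_interval, Nat.card_fin]
  congr 2
  lia

section IndexTwo

variable {G : Type*} [Group G]

theorem range_le_alternatingGroup_of_index_ne_two (hG : ∀ K : Subgroup G, K.index ≠ 2)
    {Ω : Type*} [Fintype Ω] [DecidableEq Ω] (φ : G →* Perm Ω) : φ.range ≤ alternatingGroup Ω := by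
  have h_dvd : (sign.comp φ).ker.index ∣ 2 := by
    rw [Subgroup.index_ker]
    simpa using Subgroup.card_subgroup_dvd_card (sign.comp φ).range
  have h_ker : (sign.comp φ).ker = ⊤ := by
    rw [← Subgroup.index_eq_one]
    exact ((Nat.dvd_prime Nat.prime_two).mp h_dvd).resolve_right (hG _)
  rintro _ ⟨g, rfl⟩
  exact mem_alternatingGroup.mpr (h_ker.ge (Subgroup.mem_top g))

theorem two_lt_card_of_index_ne_two [Finite G] [Nontrivial G]
    (hG : ∀ K : Subgroup G, K.index ≠ 2) : 2 < Nat.card G := by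
  have h_one : 1 < Nat.card G := Finite.one_lt_card
  have h_two : Nat.card G ≠ 2 := Subgroup.index_bot (G := G) ▸ hG ⊥
  lia

theorem exists_mul_self_ne_one_of_index_ne_two [Finite G] [Nontrivial G]
    (hG : ∀ K : Subgroup G, K.index ≠ 2) : ∃ c : G, c * c ≠ 1 := by
  by_contra! h
  have hG₂ : IsPGroup 2 G := fun g ↦ ⟨1, by rw [pow_one, pow_two, h]⟩
  obtain ⟨k, hk⟩ := hG₂.exists_card_eq
  cases k with
  | zero => exact (Finite.one_lt_card (α := G)).ne' hk
  | succ k =>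
    obtain ⟨K, hK⟩ := Sylow.exists_subgroup_card_pow_prime (G := G) 2 (n := k)
      (hk ▸ pow_dvd_pow 2 k.le_succ)
    refine hG K (Nat.eq_of_mul_eq_mul_left (Nat.card_pos (α := K)) ?_)
    rw [K.card_mul_index, hk, hK, pow_succ]

end IndexTwo

section SimpleGroup

theorem isSolvable_of_card_le_ten {G : Type*} [Group G] [Finite G] (hG : Nat.card G ≤ 10) :
    Group.IsSolvable G := by
  by_cases h_sq : Squarefree (Nat.card G)
  · have := IsZGroup.of_squarefree h_sq
    infer_instance
  obtain ⟨p, hp, hp_dvd⟩ : ∃ p, p.Prime ∧ p * p ∣ Nat.card G := by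
    simpa [Nat.squarefree_iff_prime_squarefree] using h_sq
  obtain ⟨k, hk⟩ : ∃ k, Nat.card G = p ^ k := by
    have h_pos : 0 < Nat.card G := Nat.card_pos
    have hp_two : 2 ≤ p := hp.two_le
    have hp_three : p ≤ 3 := by nlinarith [Nat.le_of_dvd h_pos hp_dvd]
    interval_cases p
    · obtain h | h : Nat.card G = 2 ^ 2 ∨ Nat.card G = 2 ^ 3 := by lia
      exacts [⟨2, h⟩, ⟨3, h⟩]
    · exact ⟨2, by lia⟩
  have : Fact p.Prime := ⟨hp⟩
  have := (IsPGroup.of_card hk).isNilpotent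
  infer_instance

variable {T : Type*} [Group T] [IsSimpleGroup T]

theorem ten_lt_card_of_isSimpleGroup [Finite T] (hT : ¬ ∀ x y : T, x * y = y * x) :
    10 < Nat.card T := by
  contrapose! hT
  exact IsSimpleGroup.comm_iff_isSolvable.mpr (isSolvable_of_card_le_ten hT)

theorem index_ne_two_of_isSimpleGroup (hT : 2 < Nat.card T) (K : Subgroup T) : K.index ≠ 2 := by
  intro hK
  rcases (Subgroup.normal_of_index_eq_two hK).eq_bot_or_eq_top with rfl | rfl
  · exact hT.ne' (Subgroup.index_bot.symm.trans hK)
  · simp at hK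

end SimpleGroup

theorem nonempty_map_subgroupOf_range_mulEquiv {G A B : Type*} [Group G] [Group A] [Group B]
    {K : Subgroup A} (e : K ≃* B) {φ : G →* A} (hφ : Function.Injective φ) (hK : φ.range ≤ K) :
    Nonempty ((φ.range.subgroupOf K).map e.toMonoidHom ≃* G) :=
  ⟨(e.subgroupMap _).symm.trans
    ((Subgroup.subgroupOfEquivOfLe hK).trans (MonoidHom.ofInjective hφ).symm)⟩

theorem exists_subgroup_sup_eq_top {G H Ω : Type*} [Group G] [Group H] [Fintype Ω]
    [DecidableEq Ω] {φ : G →* Perm Ω} {ψ : H →* Perm Ω} (hφ : Function.Injective φ)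
    (hψ : Function.Injective ψ) (hφ_le : φ.range ≤ alternatingGroup Ω)
    (hψ_le : ψ.range ≤ alternatingGroup Ω) (h_le : alternatingGroup Ω ≤ φ.range ⊔ ψ.range) :
    ∃ H₁ H₂ : Subgroup (alternatingGroup (Fin (Nat.card Ω))),
      Nonempty (H₁ ≃* G) ∧ Nonempty (H₂ ≃* H) ∧ H₁ ⊔ H₂ = ⊤ := by
  let e := (Finite.equivFin Ω).altCongrHom
  refine ⟨_, _, nonempty_map_subgroupOf_range_mulEquiv e hφ hφ_le,
    nonempty_map_subgroupOf_range_mulEquiv e hψ hψ_le, ?_⟩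
  rw [← Subgroup.map_sup, ← Subgroup.subgroupOf_sup hφ_le hψ_le,
    Subgroup.subgroupOf_eq_top.mpr h_le, Subgroup.map_top_of_surjective _ e.surjective]

theorem stmt_0_general :
    ∃ f : ℕ → ℕ → ℕ,
      ∀ (T₁ T₂ : Type*) [Group T₁] [Group T₂] [Finite T₁] [Finite T₂] [Nontrivial T₂],
        10 < Nat.card T₁ → (∀ K : Subgroup T₁, K.index ≠ 2) → (∀ K : Subgroup T₂, K.index ≠ 2) →
        ∀ n : ℕ, n > f (Nat.card T₁) (Nat.card T₂) →
          ∃ H₁ H₂ : Subgroup (alternatingGroup (Fin n)),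
            Nonempty (H₁ ≃* T₁) ∧ Nonempty (H₂ ≃* T₂) ∧ H₁ ⊔ H₂ = ⊤ := by
  classical
  refine ⟨fun a b ↦ a * (a * b + b), fun T₁ T₂ _ _ _ _ _ hcard h₁ h₂ n hn ↦ ?_⟩
  have : Nontrivial T₁ := Finite.one_lt_card_iff_nontrivial.mp (by lia)
  obtain ⟨c, hc⟩ := exists_mul_self_ne_one_of_index_ne_two h₁
  obtain ⟨N, L, P, rfl⟩ :=
    OrbitPattern.exists_card_eq (two_lt_card_of_index_ne_two h₂) (Nat.zero_lt_of_lt hcard) hn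
  obtain ⟨ℓ⟩ := OrbitLabelling.nonempty_of_mul_self_ne_one hcard hc (P.node P.target)
  have := Fintype.ofFinite (P.Point T₁)
  rw [← P.card_point]
  exact exists_subgroup_sup_eq_top P.leftHom_injective (OrbitPattern.rightHom_injective ℓ)
    (range_le_alternatingGroup_of_index_ne_two h₁ _)
    (range_le_alternatingGroup_of_index_ne_two h₂ _)
    (OrbitPattern.alternatingGroup_le_sup_range ℓ)

/-- Theorem 2.1(ii): there is a function `f : ℕ → ℕ → ℕ` such that for any two finite
non-abelian simple groups `T₁, T₂` of orders `t₁, t₂`, every alternating group `Alt(n)`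
with `n > f t₁ t₂` is generated by a copy of `T₁` and a copy of `T₂`. -/
theorem stmt_0 :
    ∃ f : ℕ → ℕ → ℕ,
      ∀ (T₁ T₂ : Type) [Group T₁] [Group T₂] [Finite T₁] [Finite T₂]
        [IsSimpleGroup T₁] [IsSimpleGroup T₂],
        (¬ ∀ x y : T₁, x * y = y * x) → (¬ ∀ x y : T₂, x * y = y * x) →
        ∀ n : ℕ, n > f (Nat.card T₁) (Nat.card T₂) →
          ∃ H₁ H₂ : Subgroup (alternatingGroup (Fin n)),
            Nonempty (H₁ ≃* T₁) ∧ Nonempty (H₂ ≃* T₂) ∧ H₁ ⊔ H₂ = ⊤ := by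
  obtain ⟨f, hf⟩ := stmt_0_general
  refine ⟨f, fun T₁ T₂ _ _ _ _ _ _ h₁ h₂ ↦ ?_⟩
  have hcard₁ := ten_lt_card_of_isSimpleGroup h₁
  have hcard₂ := ten_lt_card_of_isSimpleGroup h₂
  exact hf T₁ T₂ hcard₁ (index_ne_two_of_isSimpleGroup (by lia))
    (index_ne_two_of_isSimpleGroup (by lia))
end

section
/- There is a function f : ℕ → ℕ → ℕ such that for any two finite non-abelian simple groups T₁ and T₂ of orders t₁ and t₂, and every n > f(t₁,t₂), the alternating group Alt(n) is an image of the free product T₁ * T₂; that is, there exists a surjective group homomorphism from T₁ * T₂ onto Alt(n). -/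
/-!
Let `a ∈ T₁` and `b ∈ T₂` act on a finite set so that `c` is the only point moved by both. Then the
commutator of `a` and `b` acts as a 3-cycle. If moreover the stabilizers of `c` in `T₁` and in `T₂`
are maximal, then a block through `c` and some `y ≠ c` is preserved by whichever of `a`, `b` fixes
`y`, hence by the whole group containing that element, hence also by the other group. So a
transitive such action of `T₁ * T₂` is primitive, and its image contains the alternating group by
Jordan's theorem.

Such an action is obtained by gluing a primitive `T₁`-orbit to a primitive `T₂`-orbit at one point
`c`, and it survives attaching further `T₁`-orbits along points fixed by `a`, and `T₂`-orbits along
points fixed by `b`. The order of a nontrivial finite perfect group is divisible by the square of a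
prime, so an element of prime order commutes with an element outside the subgroup it generates, and
therefore has two fixed points in some nontrivial orbit. Attaching that `T₁`-orbit at one or at two
points, followed by a fixed `T₂`-orbit at one point, raises the degree by `D` or by `D - 1`, and
these generate all large integers.
-/

open Equiv MulAction
open scoped Pointwise commutatorElement

theorem isPerfect_of_isSimpleGroup {T : Type*} [Group T] [IsSimpleGroup T]
    (h : ¬ ∀ x y : T, x * y = y * x) : Group.IsPerfect T := by
  refine ⟨(IsSimpleGroup.eq_bot_or_eq_top_of_normal (commutator T) inferInstance).resolve_left ?_⟩
  rw [commutator_eq_bot_iff_center_eq_top, Subgroup.eq_top_iff']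
  exact fun hT => h fun x y => (Subgroup.mem_center_iff.1 (hT y) x)

section Perfect

variable {T : Type*} [Group T] [Group.IsPerfect T]

theorem range_le_ker_of_isPerfect {G A : Type*} [Group G] [CommGroup A] (ρ : T →* G) (χ : G →* A) :
    ρ.range ≤ χ.ker := by
  rintro _ ⟨t, rfl⟩
  exact Abelianization.commutator_subset_ker (χ.comp ρ) Group.IsPerfect.mem_commutator

theorem three_le_index_of_isPerfect {H : Subgroup T} [H.FiniteIndex] (hH : H ≠ ⊤) :
    3 ≤ H.index := by
  have one_lt : 1 < H.index := H.one_lt_index_of_ne_top hH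
  have ne_two : H.index ≠ 2 := by
    intro h
    have := Subgroup.normal_of_index_eq_two h
    have : Fact (Nat.Prime 2) := ⟨Nat.prime_two⟩
    have : IsCyclic (T ⧸ H) := isCyclic_of_prime_card h
    exact hH (QuotientGroup.subgroup_eq_top_of_subsingleton H
      Group.IsPerfect.subsingleton_of_isMulCommutative)
  lia

theorem not_squarefree_card_of_isPerfect [Finite T] [Nontrivial T] : ¬ Squarefree (Nat.card T) := by
  intro h
  have := IsZGroup.of_squarefree h
  exact Group.IsPerfect.not_isSolvable T inferInstance

end Perfect

theorem exists_commute_notMem_zpowers {G : Type*} [Group G] [Finite G]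
    (hG : ¬ Squarefree (Nat.card G)) :
    ∃ a k : G, a ≠ 1 ∧ Commute a k ∧ k ∉ Subgroup.zpowers a := by
  obtain ⟨p, hp, hdvd⟩ : ∃ p, p.Prime ∧ p * p ∣ Nat.card G := by
    simpa [Nat.squarefree_iff_prime_squarefree] using hG
  have := Fact.mk hp
  obtain ⟨K, hK⟩ := Sylow.exists_subgroup_card_pow_prime (G := G) p (n := 2) (by rwa [pow_two])
  have := IsPGroup.isMulCommutative_of_card_eq_prime_sq hK
  obtain ⟨a, ha⟩ := exists_prime_orderOf_dvd_card' (G := K) p (hK ▸ dvd_pow_self p two_ne_zero)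
  obtain ⟨k, hk⟩ : ∃ k : K, k ∉ Subgroup.zpowers a := by
    by_contra! h
    have card_eq := Nat.card_zpowers a
    rw [(Subgroup.eq_top_iff' _).2 h, Subgroup.card_top, hK, ha] at card_eq
    exact (lt_self_pow₀ hp.one_lt one_lt_two).ne' card_eq
  refine ⟨a, k, ?_, congrArg Subtype.val (mul_comm' a k), ?_⟩
  · rw [Ne, OneMemClass.coe_eq_one, ← orderOf_eq_one_iff, ha]
    exact hp.ne_one
  · rintro ⟨i, hi⟩
    exact hk ⟨i, Subtype.ext hi⟩

theorem exists_notMem_isCoatom_and_fixed_pair (T : Type*) [Group T] [Finite T] [Nontrivial T]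
    [Group.IsPerfect T] :
    ∃ a : T, (∃ M : Subgroup T, IsCoatom M ∧ a ∉ M) ∧
      ∃ (H : Subgroup T) (p : Fin 2 ↪ T ⧸ H), ∀ s, a • p s = p s := by
  obtain ⟨M, hM, -⟩ := (eq_top_or_exists_le_coatom (⊥ : Subgroup T)).resolve_left bot_ne_top
  have : Nontrivial (T ⧸ M.normalCore) := QuotientGroup.nontrivial_iff.2
    (M.normalCore_le.trans_lt hM.lt_top).ne
  obtain ⟨a, k, ha, hak, hk⟩ :=
    exists_commute_notMem_zpowers (not_squarefree_card_of_isPerfect (T := T ⧸ M.normalCore))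
  obtain ⟨a, rfl⟩ := QuotientGroup.mk_surjective a
  obtain ⟨k, rfl⟩ := QuotientGroup.mk_surjective k
  obtain ⟨g, hg⟩ : ∃ g, g * a * g⁻¹ ∉ M := by
    by_contra! h
    exact ha ((QuotientGroup.eq_one_iff a).2 h)
  let H := (Subgroup.zpowers (a : T ⧸ M.normalCore)).comap (QuotientGroup.mk' M.normalCore)
  have one_ne : ((1 : T) : T ⧸ H) ≠ k := by
    simpa [QuotientGroup.eq, H] using hk
  refine ⟨a, ⟨_, ((MulAut.conj g).comapSubgroup.isCoatom_iff M).2 hM, hg⟩, H,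
    ⟨![(1 : T), k], by simpa [Function.Injective, Fin.forall_fin_two] using ⟨one_ne, one_ne.symm⟩⟩,
    Fin.forall_fin_two.2 ⟨?_, ?_⟩⟩
  · have : a ∈ H := Subgroup.mem_zpowers _
    simpa [← QuotientGroup.mk_mul, QuotientGroup.eq] using this
  · have conj_mem : k⁻¹ * a * k ∈ H := by
      have : (k : T ⧸ M.normalCore)⁻¹ * a * k = a := by rw [mul_assoc, hak.eq, inv_mul_cancel_left]
      simp [H, this]
    exact (QuotientGroup.eq.2 (by simpa [mul_assoc] using conj_mem)).symm

theorem isThreeCycle_commutator_s1 {Ω : Type*} [Fintype Ω] [DecidableEq Ω] {a b : Perm Ω} {c : Ω}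
    (ha : a c ≠ c) (hb : b c ≠ c) (hab : ∀ x, a x ≠ x → b x ≠ x → x = c) :
    ⁅a, b⁆.IsThreeCycle := by
  have b_ac : b (a c) = a c := by
    by_contra h
    exact ha (hab (a c) (a.injective.ne ha) h)
  have bc_ne : b c ≠ a c := by
    rw [← b_ac]
    exact b.injective.ne ha.symm
  -- Splitting off a transposition from `a` leaves a permutation `d` commuting with `b`.
  let d := swap (a c) c * a
  have a_eq : a = swap (a c) c * d := by simp [d]
  have hdb : d.Disjoint b := by
    refine Perm.disjoint_iff_eq_or_eq.2 fun x => or_iff_not_imp_right.2 fun hbx => ?_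
    obtain rfl | hxc := eq_or_ne x c
    · simp [d]
    have hax : a x = x := by
      by_contra hax
      exact hxc (hab x hax hbx)
    have x_ne : x ≠ a c := fun h => hbx (h ▸ b_ac)
    simp [d, hax, swap_apply_of_ne_of_ne x_ne hxc]
  have conj_eq : b * a * b⁻¹ = swap (a c) (b c) * d := calc
    b * a * b⁻¹ = b * swap (a c) c * (d * b⁻¹) := by
      rw [mul_assoc, mul_assoc, ← mul_assoc _ d, ← a_eq]
    _ = swap (a c) (b c) * b * (b⁻¹ * d) := by
      rw [mul_swap_eq_swap_mul, b_ac, hdb.commute.inv_right.eq]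
    _ = swap (a c) (b c) * d := by group
  have comm_eq : ⁅a, b⁆ = swap (a c) c * swap (a c) (b c) := calc
    ⁅a, b⁆ = a * (b * a * b⁻¹)⁻¹ := by rw [commutatorElement_def]; group
    _ = swap (a c) c * swap (a c) (b c) := by
      rw [conj_eq, mul_inv_rev, swap_inv, ← mul_assoc, mul_inv_eq_of_eq_mul a_eq]
  rw [comm_eq]
  exact Perm.isThreeCycle_swap_mul_swap_same ha bc_ne.symm hb.symm

theorem smul_eq_of_isCoatom_stabilizer {G T Ω : Type*} [Group G] [MulAction G Ω] [Group T]
    {f : T →* G} {B : Set Ω} (hB : IsBlock G B) {c y : Ω} (hc : c ∈ B) (hy : y ∈ B)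
    (hf : IsCoatom ((stabilizer G c).comap f)) {t : T} (ht : f t • c ≠ c) (hty : f t • y ∈ B)
    (s : T) : f s • B = B := by
  have lt : (stabilizer G c).comap f < (stabilizer G B).comap f :=
    lt_of_le_of_ne (Subgroup.comap_mono (hB.stabilizer_le hc)) fun h =>
      ht (h.ge (hB.smul_eq_of_mem hy hty : f t • B = B))
  exact (hf.2 _ lt).ge (Subgroup.mem_top s)

section

variable {T₁ T₂ : Type*} [Group T₁] [Group T₂]

/-- Actions `ρ₁` of `T₁` and `ρ₂` of `T₂` on `Ω` that are linked at `c`: this is the only point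
moved by both `a` and `b`, its stabilizers in `T₁` and in `T₂` are maximal subgroups, and `T₁` and
`T₂` together act transitively. Transitivity is stated in terms of the invariant sets containing
`c`. -/
structure LinkedActions {Ω : Type*} (a : T₁) (b : T₂) (ρ₁ : T₁ →* Perm Ω) (ρ₂ : T₂ →* Perm Ω)
    (c : Ω) : Prop where
  left_ne : ρ₁ a c ≠ c
  right_ne : ρ₂ b c ≠ c
  eq_of_ne : ∀ x, ρ₁ a x ≠ x → ρ₂ b x ≠ x → x = c
  isCoatom_left : IsCoatom ((stabilizer (Perm Ω) c).comap ρ₁)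
  isCoatom_right : IsCoatom ((stabilizer (Perm Ω) c).comap ρ₂)
  eq_univ : ∀ S : Set Ω, c ∈ S → (∀ t, Set.MapsTo (ρ₁ t) S S) → (∀ t, Set.MapsTo (ρ₂ t) S S) →
    S = Set.univ

namespace LinkedActions

variable {Ω : Type*} {a : T₁} {b : T₂} {ρ₁ : T₁ →* Perm Ω} {ρ₂ : T₂ →* Perm Ω} {c : Ω}

theorem symm (h : LinkedActions a b ρ₁ ρ₂ c) : LinkedActions b a ρ₂ ρ₁ c where
  left_ne := h.right_ne
  right_ne := h.left_ne
  eq_of_ne x hx hy := h.eq_of_ne x hy hx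
  isCoatom_left := h.isCoatom_right
  isCoatom_right := h.isCoatom_left
  eq_univ S hc h₂ h₁ := h.eq_univ S hc h₁ h₂

variable {G : Subgroup (Perm Ω)}

theorem mapsTo_of_isBlock (h : LinkedActions a b ρ₁ ρ₂ c) (h₁ : ρ₁.range ≤ G) {B : Set Ω}
    (hB : IsBlock G B) {y : Ω} (hc : c ∈ B) (hy : y ∈ B) (hay : ρ₁ a y = y) (t : T₁) :
    Set.MapsTo (ρ₁ t) B B := by
  have smul_eq := smul_eq_of_isCoatom_stabilizer (f := ρ₁.codRestrict G fun t => h₁ ⟨t, rfl⟩)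
    (t := a) hB hc hy h.isCoatom_left h.left_ne (hay.symm ▸ hy : ρ₁ a y ∈ B) t
  intro x hx
  exact smul_eq.subset (Set.smul_mem_smul_set hx)

theorem eq_univ_of_isBlock (h : LinkedActions a b ρ₁ ρ₂ c) (h₁ : ρ₁.range ≤ G)
    (h₂ : ρ₂.range ≤ G) {B : Set Ω} (hB : IsBlock G B) {y : Ω} (hc : c ∈ B) (hy : y ∈ B)
    (hay : ρ₁ a y = y) : B = Set.univ := by
  have maps₁ := h.mapsTo_of_isBlock h₁ hB hc hy hay
  have fixed : ρ₂ b (ρ₁ a c) = ρ₁ a c := by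
    by_contra hne
    exact h.left_ne (h.eq_of_ne _ ((ρ₁ a).injective.ne h.left_ne) hne)
  exact h.eq_univ B hc maps₁ (h.symm.mapsTo_of_isBlock h₂ hB hc (maps₁ a hc) fixed)

theorem isPreprimitive (h : LinkedActions a b ρ₁ ρ₂ c) (h₁ : ρ₁.range ≤ G) (h₂ : ρ₂.range ≤ G) :
    IsPreprimitive G Ω := by
  refine .of_isTrivialBlock_of_notMem_fixedPoints (a := c)
    (fun hc => h.left_ne (hc ⟨ρ₁ a, h₁ ⟨a, rfl⟩⟩)) fun B hc hB => ?_
  by_cases hBc : B ⊆ {c}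
  · exact .inl (Set.subsingleton_singleton.anti hBc)
  obtain ⟨y, hy, hyc⟩ := Set.not_subset.1 hBc
  right
  by_cases hay : ρ₁ a y = y
  · exact h.eq_univ_of_isBlock h₁ h₂ hB hc hy hay
  · have hby : ρ₂ b y = y := by
      by_contra hby
      exact hyc (h.eq_of_ne y hay hby)
    exact h.symm.eq_univ_of_isBlock h₂ h₁ hB hc hy hby

theorem alternatingGroup_le [Fintype Ω] [DecidableEq Ω] (h : LinkedActions a b ρ₁ ρ₂ c)
    (h₁ : ρ₁.range ≤ G) (h₂ : ρ₂.range ≤ G) : alternatingGroup Ω ≤ G :=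
  Perm.alternatingGroup_le_of_isPreprimitive_of_isThreeCycle_mem (h.isPreprimitive h₁ h₂)
    (isThreeCycle_commutator_s1 h.left_ne h.right_ne h.eq_of_ne)
    (G.commutator_le_self (Subgroup.commutator_mem_commutator (h₁ ⟨a, rfl⟩) (h₂ ⟨b, rfl⟩)))

end LinkedActions

section Glue

variable {T Ω X Z : Type*} [Group T] (i : Ω ↪ Z) (j : X ↪ Z)

theorem viaEmbedding_apply_of_forall_eq {σ : Perm Ω} {x : X} (h : ∀ ω, i ω = j x → σ ω = ω) :
    σ.viaEmbedding i (j x) = j x := by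
  by_cases hx : j x ∈ Set.range i
  · obtain ⟨ω, hω⟩ := hx
    rw [← hω, Perm.viaEmbedding_apply, h ω hω]
  · exact σ.viaEmbedding_apply_of_notMem i _ hx

theorem commute_viaEmbedding {σ : Perm Ω} (τ : Perm X) (h : ∀ ω x, i ω = j x → σ ω = ω) :
    Commute (σ.viaEmbedding i) (τ.viaEmbedding j) := by
  refine Perm.Disjoint.commute fun z => or_iff_not_imp_right.2 fun hz => ?_
  obtain ⟨x, rfl⟩ : z ∈ Set.range j := not_imp_comm.1 (τ.viaEmbedding_apply_of_notMem j z) hz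
  exact viaEmbedding_apply_of_forall_eq i j fun ω => h ω x

variable (ρ : T →* Perm Ω) (π : T →* Perm X) (h : ∀ ω x, i ω = j x → ∀ t, ρ t ω = ω)

/-- The action obtained from actions on `Ω` and `X` by embedding both sets into `Z`, when the two
images meet only in points fixed in `Ω`. Points outside both images are fixed. -/
noncomputable def glueHom : T →* Perm Z :=
  (((Perm.viaEmbeddingHom i).comp ρ).noncommCoprod ((Perm.viaEmbeddingHom j).comp π)
    fun s t => commute_viaEmbedding i j (π t) fun ω x hωx => h ω x hωx s).comp
      ((MonoidHom.id T).prod (MonoidHom.id T))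

theorem glueHom_apply_right (t : T) (x : X) : glueHom i j ρ π h t (j x) = j (π t x) := by
  change (ρ t).viaEmbedding i ((π t).viaEmbedding j (j x)) = j (π t x)
  rw [Perm.viaEmbedding_apply]
  exact viaEmbedding_apply_of_forall_eq i j fun ω hω => h ω _ hω t

theorem glueHom_apply_left (t : T) {ω : Ω} (hω : i ω ∉ Set.range j) :
    glueHom i j ρ π h t (i ω) = i (ρ t ω) := by
  change (ρ t).viaEmbedding i ((π t).viaEmbedding j (i ω)) = i (ρ t ω)
  rw [Perm.viaEmbedding_apply_of_notMem _ _ _ hω, Perm.viaEmbedding_apply]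

theorem comap_stabilizer_viaEmbeddingHom (c : Ω) :
    (stabilizer (Perm Z) (i c)).comap ((Perm.viaEmbeddingHom i).comp ρ) =
      (stabilizer (Perm Ω) c).comap ρ := by
  ext t
  simp [Perm.viaEmbeddingHom_apply, Perm.viaEmbedding_apply]

end Glue

namespace LinkedActions

variable {Ω X Z : Type*} {a : T₁} {b : T₂} {ρ₁ : T₁ →* Perm Ω} {ρ₂ : T₂ →* Perm Ω} {c : Ω}

theorem extend [MulAction T₁ X] [IsPretransitive T₁ X] (h : LinkedActions a b ρ₁ ρ₂ c)
    {i : Ω ↪ Z} {j : X ↪ Z} (cover : ∀ z, z ∈ Set.range i ∨ z ∈ Set.range j)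
    (meet : ∃ ω x, i ω = j x) (hρ : ∀ ω x, i ω = j x → ∀ t, ρ₁ t ω = ω)
    (ha : ∀ ω x, i ω = j x → a • x = x) :
    LinkedActions a b (glueHom i j ρ₁ (toPermHom T₁ X) hρ)
      ((Perm.viaEmbeddingHom i).comp ρ₂) (i c) := by
  have c_notMem : i c ∉ Set.range j := fun ⟨x, hx⟩ => h.left_ne (hρ c x hx.symm a)
  refine ⟨?_, ?_, fun z hz₁ hz₂ => ?_, ?_, ?_, fun S hc h₁ h₂ => Set.eq_univ_of_forall ?_⟩
  · rw [glueHom_apply_left _ _ _ _ _ _ c_notMem]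
    exact i.injective.ne h.left_ne
  · simpa [Perm.viaEmbeddingHom_apply, Perm.viaEmbedding_apply] using h.right_ne
  · obtain ⟨ω, rfl⟩ : z ∈ Set.range i :=
      not_imp_comm.1 ((ρ₂ b).viaEmbedding_apply_of_notMem i z) hz₂
    have notMem : i ω ∉ Set.range j := by
      rintro ⟨x, hx⟩
      rw [← hx, glueHom_apply_right] at hz₁
      exact hz₁ (congrArg j (ha ω x hx.symm))
    rw [glueHom_apply_left _ _ _ _ _ _ notMem] at hz₁
    rw [MonoidHom.comp_apply, Perm.viaEmbeddingHom_apply, Perm.viaEmbedding_apply] at hz₂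
    exact congrArg i (h.eq_of_ne ω (ne_of_apply_ne i hz₁) (ne_of_apply_ne i hz₂))
  · convert h.isCoatom_left using 1
    ext t
    simp [glueHom_apply_left _ _ _ _ _ _ c_notMem]
  · rw [comap_stabilizer_viaEmbeddingHom]
    exact h.isCoatom_right
  · have left_mem : ∀ ω, i ω ∈ S := Set.eq_univ_iff_forall.1 <|
      h.eq_univ (i ⁻¹' S) hc (fun t ω hω => ?_) fun t ω hω => ?_
    · obtain ⟨ω₀, x₀, h₀⟩ := meet
      refine fun z => (cover z).elim (fun ⟨ω, hω⟩ => hω ▸ left_mem ω) fun ⟨x, hx⟩ => ?_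
      obtain ⟨t, rfl⟩ := exists_smul_eq T₁ x₀ x
      have := h₁ t (h₀ ▸ left_mem ω₀)
      rw [glueHom_apply_right] at this
      exact hx ▸ this
    · by_cases hj : i ω ∈ Set.range j
      · obtain ⟨x, hx⟩ := hj
        rwa [Set.mem_preimage, hρ ω x hx.symm t]
      · rw [Set.mem_preimage, ← glueHom_apply_left i j ρ₁ (toPermHom T₁ X) hρ t hj]
        exact h₁ t hω
    · rw [Set.mem_preimage, ← Perm.viaEmbedding_apply]
      exact h₂ t hω

end LinkedActions

theorem linkedActions_viaEmbeddingHom {X₁ X₂ Z : Type*} [MulAction T₁ X₁] [IsPretransitive T₁ X₁]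
    [MulAction T₂ X₂] [IsPretransitive T₂ X₂] {a : T₁} {b : T₂} {x₁ : X₁} {x₂ : X₂}
    (h₁ : IsCoatom (stabilizer T₁ x₁)) (h₂ : IsCoatom (stabilizer T₂ x₂)) (ha : a • x₁ ≠ x₁)
    (hb : b • x₂ ≠ x₂) {i : X₁ ↪ Z} {j : X₂ ↪ Z}
    (cover : ∀ z, z ∈ Set.range i ∨ z ∈ Set.range j)
    (meet : ∀ y₁ y₂, i y₁ = j y₂ ↔ x₁ = y₁ ∧ x₂ = y₂) :
    LinkedActions a b ((Perm.viaEmbeddingHom i).comp (toPermHom T₁ X₁))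
      ((Perm.viaEmbeddingHom j).comp (toPermHom T₂ X₂)) (i x₁) := by
  have h_eq : i x₁ = j x₂ := (meet _ _).2 ⟨rfl, rfl⟩
  refine ⟨?_, ?_, fun z hz₁ hz₂ => ?_, ?_, ?_, fun S hc maps₁ maps₂ =>
    Set.eq_univ_of_forall fun z => ?_⟩
  · simpa [Perm.viaEmbeddingHom_apply, Perm.viaEmbedding_apply] using ha
  · simpa [h_eq, Perm.viaEmbeddingHom_apply, Perm.viaEmbedding_apply] using hb
  · obtain ⟨y₁, rfl⟩ : z ∈ Set.range i :=
      not_imp_comm.1 (Perm.viaEmbedding_apply_of_notMem _ i z) hz₁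
    obtain ⟨y₂, hy⟩ : i y₁ ∈ Set.range j :=
      not_imp_comm.1 (Perm.viaEmbedding_apply_of_notMem _ j _) hz₂
    rw [((meet y₁ y₂).1 hy.symm).1]
  · rwa [comap_stabilizer_viaEmbeddingHom]
  · rwa [h_eq, comap_stabilizer_viaEmbeddingHom]
  · obtain ⟨y, rfl⟩ | ⟨y, rfl⟩ := cover z
    · obtain ⟨t, rfl⟩ := exists_smul_eq T₁ x₁ y
      simpa [Perm.viaEmbeddingHom_apply, Perm.viaEmbedding_apply] using maps₁ t hc
    · obtain ⟨t, rfl⟩ := exists_smul_eq T₂ x₂ y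
      simpa [h_eq, Perm.viaEmbeddingHom_apply, Perm.viaEmbedding_apply] using maps₂ t hc

theorem castAdd_ne_natAdd {n r : ℕ} (ω : Fin n) (y : Fin r) : Fin.castAdd r ω ≠ Fin.natAdd n y :=
  Fin.ne_of_lt (ω.is_lt.trans_le (Nat.le_add_right _ _))

theorem exists_embedding_fin_add {κ X : Type*} [Finite X] (p : κ ↪ X) {n r : ℕ} (e : κ ↪ Fin n)
    (hr : Nat.card κ + r = Nat.card X) :
    ∃ j : X ↪ Fin (n + r), (∀ y, Fin.natAdd n y ∈ Set.range j) ∧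
      ∀ ω x, Fin.castAdd _ ω = j x ↔ ∃ s, e s = ω ∧ p s = x := by
  classical
  have card_compl : Nat.card ↑(Set.range p)ᶜ = r := by
    rw [Nat.card_coe_set_eq, Set.ncard_compl, ← Nat.card_coe_set_eq,
      Nat.card_range_of_injective p.injective, ← hr, Nat.add_sub_cancel_left]
  let g : X ≃ κ ⊕ Fin r := (Equiv.Set.sumCompl (Set.range p)).symm.trans <|
    (Equiv.ofInjective p p.injective).symm.sumCongr (Finite.equivFinOfCardEq card_compl)
  have g_apply (s : κ) : g (p s) = Sum.inl s := by
    simp [g, Set.sumCompl_symm_apply_of_mem]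
  refine ⟨g.toEmbedding.trans ((e.sumMap (.refl _)).trans finSumFinEquiv.toEmbedding),
    fun y => ⟨g.symm (Sum.inr y), by simp⟩, fun ω x => ?_⟩
  obtain ⟨y, rfl⟩ := g.symm.surjective x
  have eq_symm (s : κ) : p s = g.symm y ↔ Sum.inl s = y := by
    rw [Equiv.eq_symm_apply, g_apply]
  obtain s | r := y
  · simp [eq_symm, eq_comm]
  · simpa [eq_symm] using castAdd_ne_natAdd ω r

theorem LinkedActions.exists_attach {n r : ℕ} {a : T₁} {b : T₂} {ρ₁ : T₁ →* Perm (Fin n)}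
    {ρ₂ : T₂ →* Perm (Fin n)} {c : Fin n} (h : LinkedActions a b ρ₁ ρ₂ c) {X κ : Type*} [Finite X]
    [MulAction T₁ X] [IsPretransitive T₁ X] [Nonempty κ] (p : κ ↪ X) (hp : ∀ s, a • p s = p s)
    (e : κ ↪ Fin n) (he : ∀ t s, ρ₁ t (e s) = e s)
    (hr : Nat.card κ + r = Nat.card X) :
    ∃ (σ₁ : T₁ →* Perm (Fin (n + r))) (σ₂ : T₂ →* Perm (Fin (n + r))) (c' : Fin (n + r)),
      LinkedActions a b σ₁ σ₂ c' ∧ ∀ t y, σ₂ t (Fin.natAdd n y) = Fin.natAdd n y := by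
  obtain ⟨j, natAdd_mem, meet⟩ := exists_embedding_fin_add p e hr
  let i := Fin.castAddEmb (n := n) r
  have cover (z) : z ∈ Set.range i ∨ z ∈ Set.range j :=
    Fin.addCases (fun ω => .inl ⟨ω, rfl⟩) (fun y => .inr (natAdd_mem y)) z
  have s : κ := Classical.arbitrary κ
  refine ⟨_, _, _, h.extend cover ⟨e s, p s, (meet _ _).2 ⟨s, rfl, rfl⟩⟩ ?_ ?_, fun t y => ?_⟩
  · rintro ω x hωx t
    obtain ⟨s, rfl, -⟩ := (meet ω x).1 hωx
    exact he t s
  · rintro ω x hωx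
    obtain ⟨s, -, rfl⟩ := (meet ω x).1 hωx
    exact hp s
  · refine Perm.viaEmbedding_apply_of_notMem _ i _ ?_
    rintro ⟨ω, hω⟩
    exact castAdd_ne_natAdd ω y hω

/-- There are linked actions of degree `n` for which two points are fixed by the whole first group.
These two points are where the next orbit can be attached. -/
def HasLinkedActions (a : T₁) (b : T₂) (n : ℕ) : Prop :=
  ∃ (ρ₁ : T₁ →* Perm (Fin n)) (ρ₂ : T₂ →* Perm (Fin n)) (c : Fin n), LinkedActions a b ρ₁ ρ₂ c ∧
    ∃ e : Fin 2 ↪ Fin n, ∀ t s, ρ₁ t (e s) = e s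

namespace HasLinkedActions

variable {a : T₁} {b : T₂}

theorem of_isCoatom {M₁ : Subgroup T₁} {M₂ : Subgroup T₂} [M₁.FiniteIndex] [M₂.FiniteIndex]
    (h₁ : IsCoatom M₁) (h₂ : IsCoatom M₂) (ha : a ∉ M₁) (hb : b ∉ M₂) {r : ℕ} (two_le : 2 ≤ r)
    (hr : 1 + r = M₂.index) : HasLinkedActions a b (M₁.index + r) := by
  let x₁ : T₁ ⧸ M₁ := (1 : T₁)
  let x₂ : T₂ ⧸ M₂ := (1 : T₂)
  let g : T₁ ⧸ M₁ ≃ Fin M₁.index := Finite.equivFin _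
  obtain ⟨j, natAdd_mem, meet⟩ := exists_embedding_fin_add (κ := Unit) (r := r) (.punit x₂)
    (.punit (g x₁)) (by rwa [Nat.card_unique])
  let i := g.toEmbedding.trans (Fin.castAddEmb r)
  have cover (z) : z ∈ Set.range i ∨ z ∈ Set.range j :=
    Fin.addCases (fun ω => .inl ⟨g.symm ω, by simp [i]⟩) (fun y => .inr (natAdd_mem y)) z
  have linked := linkedActions_viaEmbeddingHom (a := a) (b := b) (i := i) (j := j)
    (x₁ := x₁) (x₂ := x₂) (by rwa [stabilizer_quotient]) (by rwa [stabilizer_quotient])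
    (by rwa [← stabilizer_quotient M₁] at ha) (by rwa [← stabilizer_quotient M₂] at hb) cover
    fun y₁ y₂ => (meet _ _).trans (by simp [Function.Embedding.punit])
  refine ⟨_, _, _, linked, (Fin.castLEEmb two_le).trans (Fin.natAddEmb _), fun t s => ?_⟩
  refine Perm.viaEmbedding_apply_of_notMem _ i _ ?_
  rintro ⟨ω, hω⟩
  exact castAdd_ne_natAdd _ _ hω

theorem add {X₁ X₂ κ : Type*} [Finite X₁] [Finite X₂] [MulAction T₁ X₁] [IsPretransitive T₁ X₁]
    [MulAction T₂ X₂] [IsPretransitive T₂ X₂] {n r₁ r₂ : ℕ} (h : HasLinkedActions a b n)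
    [Nonempty κ] (ι : κ ↪ Fin 2) (p : κ ↪ X₁) (hp : ∀ s, a • p s = p s) (r₁_pos : 0 < r₁)
    (hr₁ : Nat.card κ + r₁ = Nat.card X₁) {q : X₂} (hq : b • q = q) (two_le : 2 ≤ r₂)
    (hr₂ : 1 + r₂ = Nat.card X₂) : HasLinkedActions a b (n + r₁ + r₂) := by
  obtain ⟨ρ₁, ρ₂, c, hρ, e, he⟩ := h
  obtain ⟨σ₁, σ₂, c', hσ, fixed₂⟩ := hρ.exists_attach p hp (ι.trans e) (fun t s => he t _) hr₁
  obtain ⟨τ₂, τ₁, c'', hτ, fixed₁⟩ := hσ.symm.exists_attach (κ := Unit) (.punit q) (fun _ => hq)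
    (.punit (Fin.natAdd n ⟨0, r₁_pos⟩)) (fun t _ => fixed₂ t _) (by rwa [Nat.card_unique])
  exact ⟨τ₁, τ₂, c'', hτ.symm, (Fin.castLEEmb two_le).trans (Fin.natAddEmb _),
    fun t s => fixed₁ t _⟩

end HasLinkedActions

end

theorem of_add_of_add_of_coprime {P : ℕ → Prop} {n₀ m m' n : ℕ} (hm : m.Coprime m') (base : P n₀)
    (step : ∀ n, P n → P (n + m)) (step' : ∀ n, P n → P (n + m'))
    (hn : n₀ + (m - 1) * (m' - 1) ≤ n) : P n := by
  obtain ⟨u, v, huv⟩ := Nat.exists_add_mul_eq_of_gcd_dvd_of_mul_pred_le m m' (n - n₀)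
    (by simp [hm.gcd_eq_one]) (Nat.le_sub_of_add_le' hn)
  have iterate {m : ℕ} (hstep : ∀ n, P n → P (n + m)) (u n : ℕ) (hn : P n) : P (n + u * m) := by
    induction u with
    | zero => simpa using hn
    | succ u ih => simpa [add_mul, ← add_assoc] using hstep _ ih
  have := iterate step' v _ (iterate step u _ base)
  rwa [add_assoc, huv, Nat.add_sub_cancel' (by lia)] at this

theorem exists_forall_hasLinkedActions (T₁ T₂ : Type*) [Group T₁] [Group T₂] [Finite T₁]
    [Finite T₂] [Nontrivial T₁] [Nontrivial T₂] [Group.IsPerfect T₁] [Group.IsPerfect T₂] :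
    ∃ (a : T₁) (b : T₂), ∀ n, (Nat.card T₁ + Nat.card T₂) ^ 2 ≤ n → HasLinkedActions a b n := by
  obtain ⟨a, ⟨M₁, hM₁, haM⟩, H₁, p, hp⟩ := exists_notMem_isCoatom_and_fixed_pair T₁
  obtain ⟨b, ⟨M₂, hM₂, hbM⟩, H₂, q, hq⟩ := exists_notMem_isCoatom_and_fixed_pair T₂
  have hd₁ := three_le_index_of_isPerfect (QuotientGroup.nontrivial_iff.1 p.injective.nontrivial)
  have hd₂ := three_le_index_of_isPerfect (QuotientGroup.nontrivial_iff.1 q.injective.nontrivial)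
  have hM₂' := three_le_index_of_isPerfect hM₂.1
  have step {k : ℕ} [NeZero k] (hk : k ≤ 2) (n : ℕ) (h : HasLinkedActions a b n) :
      HasLinkedActions a b (n + (H₁.index - k + (H₂.index - 1))) := by
    rw [← add_assoc]
    exact h.add (Fin.castLEEmb hk) ((Fin.castLEEmb hk).trans p) (fun s => hp _) (by lia)
      (by rw [Nat.card_fin]; exact Nat.add_sub_cancel' (by lia)) (hq 0) (by lia)
      (Nat.add_sub_cancel' (by lia))
  have base := HasLinkedActions.of_isCoatom hM₁ hM₂ haM hbM (r := M₂.index - 1) (by lia) (by lia)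
  refine ⟨a, b, fun n hn =>
    of_add_of_add_of_coprime ?_ base (step one_le_two) (step le_rfl) (le_trans ?_ hn)⟩
  · rw [show H₁.index - 1 + (H₂.index - 1) = H₁.index - 2 + (H₂.index - 1) + 1 by lia]
    simp
  · have le_M₁ := Nat.le_of_dvd Nat.card_pos M₁.index_dvd_card
    have le_M₂ := Nat.le_of_dvd Nat.card_pos M₂.index_dvd_card
    have le_H₁ := Nat.le_of_dvd Nat.card_pos H₁.index_dvd_card
    have le_H₂ := Nat.le_of_dvd Nat.card_pos H₂.index_dvd_card
    obtain ⟨t, ht⟩ : ∃ t, Nat.card T₁ + Nat.card T₂ = t + 1 := Nat.exists_eq_add_of_le' (by lia)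
    calc M₁.index + (M₂.index - 1) + (H₁.index - 1 + (H₂.index - 1) - 1) *
          (H₁.index - 2 + (H₂.index - 1) - 1)
        ≤ t + 1 + t * t := Nat.add_le_add (by lia) (Nat.mul_le_mul (by lia) (by lia))
      _ ≤ (Nat.card T₁ + Nat.card T₂) ^ 2 := by rw [ht]; lia

theorem stmt_1_general {T₁ T₂ : Type*} [Group T₁] [Group T₂] [Finite T₁] [Finite T₂]
    [Nontrivial T₁] [Nontrivial T₂] [Group.IsPerfect T₁] [Group.IsPerfect T₂] {n : ℕ}
    (hn : (Nat.card T₁ + Nat.card T₂) ^ 2 ≤ n) :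
    ∃ φ : Monoid.Coprod T₁ T₂ →* alternatingGroup (Fin n), Function.Surjective φ := by
  obtain ⟨a, b, hab⟩ := exists_forall_hasLinkedActions T₁ T₂
  obtain ⟨ρ₁, ρ₂, c, h, -⟩ := hab n hn
  let φ := Monoid.Coprod.lift ρ₁ ρ₂
  have range_eq : φ.range = ρ₁.range ⊔ ρ₂.range := Monoid.Coprod.range_lift ρ₁ ρ₂
  have range_le : φ.range ≤ alternatingGroup (Fin n) := range_eq.trans_le <|
    sup_le (range_le_ker_of_isPerfect ρ₁ Perm.sign) (range_le_ker_of_isPerfect ρ₂ Perm.sign)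
  have le_range : alternatingGroup (Fin n) ≤ φ.range :=
    range_eq ▸ h.alternatingGroup_le le_sup_left le_sup_right
  refine ⟨φ.codRestrict _ fun x => range_le ⟨x, rfl⟩, fun ⟨σ, hσ⟩ => ?_⟩
  obtain ⟨x, hx⟩ := le_range hσ
  exact ⟨x, Subtype.ext hx⟩

/-- Corollary 2.2 (alternating case): there is a function `f : ℕ → ℕ → ℕ` such that for any
two finite non-abelian simple groups `T₁, T₂` of orders `t₁, t₂` and every `n > f t₁ t₂`,
the alternating group `Alt(n)` is an image of the free product `T₁ * T₂`. -/
theorem stmt_1 :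
    ∃ f : ℕ → ℕ → ℕ,
      ∀ (T₁ T₂ : Type) [Group T₁] [Group T₂] [Finite T₁] [Finite T₂]
        [IsSimpleGroup T₁] [IsSimpleGroup T₂],
        (¬ ∀ x y : T₁, x * y = y * x) → (¬ ∀ x y : T₂, x * y = y * x) →
        ∀ n : ℕ, n > f (Nat.card T₁) (Nat.card T₂) →
          ∃ φ : Monoid.Coprod T₁ T₂ →* alternatingGroup (Fin n),
            Function.Surjective φ := by
  refine ⟨fun t₁ t₂ => (t₁ + t₂) ^ 2, fun T₁ T₂ _ _ _ _ _ _ h₁ h₂ n hn => ?_⟩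
  have := isPerfect_of_isSimpleGroup h₁
  have := isPerfect_of_isSimpleGroup h₂
  exact stmt_1_general hn.le
end

section
/- There is a function f : ℕ → ℕ → ℕ such that for any two finite non-abelian simple groups T₁ and T₂ of orders t₁ and t₂, every n > f(t₁,t₂), and every finite field K, the projective special linear group PSL_n(K) is generated by a copy of T₁ and a copy of T₂; that is, there exist subgroups H₁, H₂ of PSL_n(K) with H₁ isomorphic to T₁, H₂ isomorphic to T₂, and H₁ ⊔ H₂ = PSL_n(K). -/
/-!
Realise `T₁` and `T₂` by even permutations of a set `Ω` so that the supports of some `x ∈ T₁` and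
`y ∈ T₂` meet in a single point; then `⁅x, y⁆` is a three-cycle. Replace the permutation matrices
of `T₂` by their conjugates under a transvection `g = E_{pr}(c)` with `c` a generator of `Kˣ`. As
`g` commutes with the permutation matrices fixing `p` and `r`, the commutator `⁅x, y⁆` still lies in
the generated group `G`, and its conjugates spread over `Ω` until `G` contains `Alt(Ω)`. Then `G`
contains `g y g⁻¹ y⁻¹ = E_{pr}(c) E_{y(p)y(r)}(-c)`, and commutators of its `Alt(Ω)`-conjugates
give `E_{ij}(c ^ n)` for all `n ≥ 2`, hence every transvection.

To build `Ω`, glue transitive `T₁`-sets and `T₂`-sets alternately at single points into a chain,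
which fixes `|Ω|` modulo a constant. Each link may identify one further pair of points, lowering
`|Ω|` by one, so that every large cardinality is reached.
-/

section Commutator

open scoped commutatorElement

variable {S : Type*} [Group S]

theorem commutatorElement_mul_eq_of_commute {a b c d : S}
    (hbc : Commute b (c * d)) (had : Commute a d) : ⁅a * b, c * d⁆ = ⁅a, c⁆ := by
  rw [commutatorElement_mul_left_eq_conj_mul, hbc.commutator_eq,
    commutatorElement_mul_right_eq_mul_conj, had.commutator_eq]
  group

variable {G : Subgroup S} {g a b : S}

theorem conj_mem_of_commute (ha : g * a * g⁻¹ ∈ G) (hb : b ∈ G) (hgb : Commute g b)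
    (hgab : Commute g (a * b * a⁻¹)) : a * b * a⁻¹ ∈ G := by
  have heq : a * b * a⁻¹ = g * a * g⁻¹ * b * (g * a * g⁻¹)⁻¹ := calc
    a * b * a⁻¹ = g * (a * b * a⁻¹) * g⁻¹ := by rw [hgab.eq, mul_inv_cancel_right]
    _ = g * a * g⁻¹ * (g * b * g⁻¹) * (g * a * g⁻¹)⁻¹ := by group
    _ = g * a * g⁻¹ * b * (g * a * g⁻¹)⁻¹ := by rw [hgb.eq, mul_inv_cancel_right]
  exact heq ▸ G.mul_mem (G.mul_mem ha hb) (G.inv_mem ha)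

theorem commutatorElement_mem_of_commute (ha : a ∈ G) (hb : g * b * g⁻¹ ∈ G) (hga : Commute g a)
    (hgab : Commute g ⁅a, b⁆) : ⁅a, b⁆ ∈ G := by
  have heq : ⁅a, b⁆ = ⁅a, g * b * g⁻¹⁆ := calc
    ⁅a, b⁆ = g * ⁅a, b⁆ * g⁻¹ := by rw [hgab.eq, mul_inv_cancel_right]
    _ = ⁅g * a * g⁻¹, g * b * g⁻¹⁆ := (conjugate_commutatorElement ..)
    _ = ⁅a, g * b * g⁻¹⁆ := by rw [hga.eq, mul_inv_cancel_right]
  exact heq ▸ G.commutator_le_self (Subgroup.commutator_mem_commutator ha hb)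

end Commutator

section SpecialLinearGroup

open Matrix Matrix.SpecialLinearGroup
open scoped commutatorElement

section Field

variable {ι K : Type*} [Fintype ι] [DecidableEq ι] [Field K]

theorem diag2n_eq_prod_transvections {i j : ι} (hij : i ≠ j) {a : K} (ha : a ≠ 0) :
    diag2n hij a ha =
      transvection hij a * transvection hij.symm (-a⁻¹) * transvection hij a *
        (transvection hij (-1) * transvection hij.symm 1 * transvection hij (-1)) := by
  ext k l
  simp only [diag2n_coe, coe_mul, transvection_coe, mul_add, add_mul, one_mul, mul_one,
    single_mul_single_same, single_mul_single_of_ne _ _ _ _ hij,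
    single_mul_single_of_ne _ _ _ _ hij.symm, add_zero,
    Matrix.add_apply, diagonal_apply, one_apply, single_apply]
  have := mul_inv_cancel₀ ha
  split_ifs <;> grind

theorem eq_top_of_forall_transvection_mem [Nontrivial ι] {G : Subgroup (SpecialLinearGroup ι K)}
    (h : ∀ (i j : ι) (hij : i ≠ j) (a : K), transvection hij a ∈ G) : G = ⊤ := by
  refine (Subgroup.eq_top_iff' G).2 fun M => diagonal_transvection_induction' (· ∈ G) M ?_ h
    fun _ _ => G.mul_mem
  intro i j hij a ha
  rw [diag2n_eq_prod_transvections]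
  exact G.mul_mem (G.mul_mem (G.mul_mem (h ..) (h ..)) (h ..))
    (G.mul_mem (G.mul_mem (h ..) (h ..)) (h ..))

end Field

section CommRing

variable {ι R : Type*} [Fintype ι] [DecidableEq ι] [CommRing R]

theorem commute_transvection {i j k l : ι} (hij : i ≠ j) (hkl : k ≠ l) (hjk : j ≠ k)
    (hli : l ≠ i) (a b : R) : Commute (transvection hij a) (transvection hkl b) := by
  refine Subtype.ext ?_
  simp only [coe_mul, transvection_coe, mul_add, add_mul, one_mul, mul_one,
    single_mul_single_of_ne _ _ _ _ hjk, single_mul_single_of_ne _ _ _ _ hli, add_zero]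
  abel

theorem commutatorElement_transvection {i j k : ι} (hij : i ≠ j) (hjk : j ≠ k) (hik : i ≠ k)
    (a b : R) : ⁅transvection hij a, transvection hjk b⁆ = transvection hik (a * b) := by
  rw [commutatorElement_def, mul_inv_eq_iff_eq_mul, mul_inv_eq_iff_eq_mul]
  refine Subtype.ext ?_
  simp only [coe_mul, transvection_coe, mul_add, add_mul, one_mul, mul_one,
    single_mul_single_same, single_mul_single_of_ne _ _ _ _ hjk.symm,
    single_mul_single_of_ne _ _ _ _ hik.symm, add_zero]
  abel

variable (ι R) in
/-- The permutation matrices of determinant one. -/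
def evenPermMatrixHom : alternatingGroup ι →* SpecialLinearGroup ι R where
  toFun σ := ⟨permMatrixHom (R := R) σ.1, by
    rw [permMatrixHom_apply, det_permutation, Equiv.Perm.sign_inv, σ.2, Units.val_one,
      Int.cast_one]⟩
  map_one' := Subtype.ext (map_one _)
  map_mul' σ τ := Subtype.ext (map_mul _ σ.1 τ.1)

theorem evenPermMatrixHom_injective [Nontrivial R] :
    Function.Injective (evenPermMatrixHom ι R) := by
  intro σ τ h
  have h' : (σ.1⁻¹).permMatrix R = (τ.1⁻¹).permMatrix R := congrArg Subtype.val h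
  refine Subtype.ext (inv_injective (Equiv.ext fun i => ?_))
  simpa [PEquiv.toMatrix_apply] using congrFun (congrFun h' i) ((τ.1⁻¹) i)

theorem evenPermMatrixHom_conj_transvection (σ : alternatingGroup ι) {i j : ι} (hij : i ≠ j)
    (a : R) :
    evenPermMatrixHom ι R σ * transvection hij a * (evenPermMatrixHom ι R σ)⁻¹ =
      transvection (σ.1.injective.ne hij) a := by
  rw [mul_inv_eq_iff_eq_mul]
  refine Subtype.ext ?_
  change (σ.1⁻¹).permMatrix R * (1 + single i j a) =
    (1 + single (σ.1 i) (σ.1 j) a) * (σ.1⁻¹).permMatrix R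
  rw [mul_add, add_mul, mul_one, one_mul, PEquiv.toMatrix_toPEquiv_mul,
    PEquiv.mul_toMatrix_toPEquiv, ← Equiv.coe_refl, submatrix_single_equiv,
    submatrix_single_equiv]
  simp [Equiv.Perm.inv_def]

end CommRing

section Generation

variable {ι R K : Type*} [Fintype ι] [DecidableEq ι]

theorem exists_alternatingGroup_map_eq {l l' : List ι} (hl : l.Nodup) (hl' : l'.Nodup)
    (hlen : l.length = l'.length) (hcard : l.length + 2 ≤ Fintype.card ι) :
    ∃ σ : alternatingGroup ι, l.map σ.1 = l' := by
  have := alternatingGroup.isMultiplyPretransitive ι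
  have : MulAction.IsMultiplyPretransitive (alternatingGroup ι) ι l.length :=
    MulAction.isMultiplyPretransitive_of_le' (n := Nat.card ι - 2)
      (by rw [Nat.card_eq_fintype_card]; omega) (by simp)
  obtain ⟨σ, hσ⟩ := MulAction.exists_smul_eq (alternatingGroup ι)
    (⟨l.get, hl.injective_get⟩ : Fin l.length ↪ ι)
    ⟨l'.get ∘ Fin.cast hlen, hl'.injective_get.comp (Fin.cast_injective hlen)⟩
  refine ⟨σ, List.ext_get (by simpa using hlen) fun n h₁ _ => ?_⟩
  rw [List.length_map] at h₁
  exact (List.getElem_map _).trans (DFunLike.congr_fun hσ ⟨n, h₁⟩)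

theorem nodup_of_disjoint {α : Type*} {p r q s : α} (hpr : p ≠ r) (hqs : q ≠ s)
    (h : Disjoint ({p, r} : Set α) {q, s}) : [p, r, q, s].Nodup := by
  simp only [Set.disjoint_insert_left, Set.disjoint_singleton_left, Set.mem_insert_iff,
    Set.mem_singleton_iff, not_or] at h
  simp [hpr, hqs, h.1, h.2]

variable [CommRing R] {G : Subgroup (SpecialLinearGroup ι R)}

theorem transvection_mul_transvection_mem (hcard : 6 ≤ Fintype.card ι)
    (hG : (evenPermMatrixHom ι R).range ≤ G) {a b : R} {p r q s : ι} {hpr : p ≠ r} {hqs : q ≠ s}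
    (hdisj : Disjoint ({p, r} : Set ι) {q, s})
    (h : transvection hpr a * transvection hqs b ∈ G)
    {p' r' q' s' : ι} (hpr' : p' ≠ r') (hqs' : q' ≠ s')
    (hdisj' : Disjoint ({p', r'} : Set ι) {q', s'}) :
    transvection hpr' a * transvection hqs' b ∈ G := by
  obtain ⟨σ, hσ⟩ := exists_alternatingGroup_map_eq (l := [p, r, q, s]) (l' := [p', r', q', s'])
    (nodup_of_disjoint hpr hqs hdisj) (nodup_of_disjoint hpr' hqs' hdisj') rfl hcard
  obtain ⟨rfl, rfl, rfl, rfl⟩ : σ.1 p = p' ∧ σ.1 r = r' ∧ σ.1 q = q' ∧ σ.1 s = s' := by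
    simpa using hσ
  have hσG : evenPermMatrixHom ι R σ ∈ G := hG ⟨σ, rfl⟩
  rw [← evenPermMatrixHom_conj_transvection σ hpr, ← evenPermMatrixHom_conj_transvection σ hqs,
    ← MulAut.conj_apply, ← MulAut.conj_apply, ← map_mul]
  exact G.mul_mem (G.mul_mem hσG h) (G.inv_mem hσG)

theorem transvection_mul_mem {c d d' b : R} (hcard : 5 ≤ Fintype.card ι)
    (hG : ∀ {p r q s : ι} (hpr : p ≠ r) (hqs : q ≠ s), Disjoint ({p, r} : Set ι) {q, s} →
      transvection hpr c * transvection hqs b ∈ G)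
    (hd : ∀ {p r q s : ι} (hpr : p ≠ r) (hqs : q ≠ s), Disjoint ({p, r} : Set ι) {q, s} →
      transvection hpr d * transvection hqs d' ∈ G)
    {i j : ι} (hij : i ≠ j) : transvection hij (c * d) ∈ G := by
  have hcompl : 2 < ({i, j} : Finset ι)ᶜ.card := by
    rw [Finset.card_compl, Finset.card_pair hij]
    omega
  obtain ⟨k, q, s, hk, hq, hs, hkq, hks, hqs⟩ := Finset.two_lt_card_iff.1 hcompl
  simp only [Finset.mem_compl, Finset.mem_insert, Finset.mem_singleton, not_or] at hk hq hs
  have hik : i ≠ k := Ne.symm hk.1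
  have hcomm := G.commutator_le_self <| Subgroup.commutator_mem_commutator
    (hG hik hqs (by grind)) (hd hk.2 hqs (by grind))
  rw [commutatorElement_mul_eq_of_commute, commutatorElement_transvection _ _ hij] at hcomm
  · exact hcomm
  · exact (commute_transvection _ _ hks.symm (Ne.symm hq.2) ..).mul_right
      (commute_transvection _ _ hqs.symm hqs.symm ..)
  · exact commute_transvection _ _ hkq hs.1 ..

theorem eq_top_of_transvection_mul_transvection_mem [Field K]
    {G : Subgroup (SpecialLinearGroup ι K)} (hcard : 6 ≤ Fintype.card ι)
    (hG : (evenPermMatrixHom ι K).range ≤ G) {c : Kˣ} (hc : ∀ u, u ∈ Submonoid.powers c)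
    {p r q s : ι} {hpr : p ≠ r} {hqs : q ≠ s} (hdisj : Disjoint ({p, r} : Set ι) {q, s})
    (h : transvection hpr (c : K) * transvection hqs (-c : K) ∈ G) : G = ⊤ := by
  have : Nontrivial ι := ⟨p, r, hpr⟩
  have hc_mem {p r q s : ι} (hpr : p ≠ r) (hqs : q ≠ s)
      (hdisj : Disjoint ({p, r} : Set ι) {q, s}) :
      transvection hpr (c : K) * transvection hqs (-c : K) ∈ G :=
    transvection_mul_transvection_mem hcard hG ‹_› h hpr hqs hdisj
  have hpow (n : ℕ) : ∀ {i j : ι} (hij : i ≠ j), transvection hij ((c : K) * c ^ (n + 1)) ∈ G := by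
    induction n with
    | zero =>
      intro i j hij
      rw [zero_add, pow_one]
      exact transvection_mul_mem (by omega) hc_mem hc_mem hij
    | succ n ih =>
      intro i j hij
      refine transvection_mul_mem (d' := 0) (by omega) hc_mem ?_ hij
      intro p r q s hpr hqs _
      rw [transvection_coeff_zero, mul_one, pow_succ']
      exact ih hpr
  refine eq_top_of_forall_transvection_mem fun i j hij a => ?_
  rcases eq_or_ne a 0 with rfl | ha
  · simp
  · obtain ⟨n, hn : c ^ n = Units.mk0 a ha * (c ^ 2)⁻¹⟩ := hc _
    have ha' : a = c * (c : K) ^ (n + 1) := calc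
      a = ((c ^ n * c ^ 2 : Kˣ) : K) := by rw [hn, inv_mul_cancel_right, Units.val_mk0]
      _ = c * (c : K) ^ (n + 1) := by push_cast; ring
    exact ha' ▸ hpow n hij

end Generation

end SpecialLinearGroup

section ThreeCycle

open Equiv Equiv.Perm
open scoped commutatorElement

variable {α : Type*} [DecidableEq α]

theorem swap_mul_swap_mem_fixingSubgroup {i j k : α} {A : Set α} (hA : ∀ a ∈ A, a ∉ [i, j, k]) :
    swap i j * swap j k ∈ fixingSubgroup (Perm α) A :=
  fun a => List.formPerm_apply_of_notMem (hA a a.2)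

theorem conj_swap_mul_swap (σ : Perm α) (i j k : α) :
    σ * (swap i j * swap j k) * σ⁻¹ = swap (σ i) (σ j) * swap (σ j) (σ k) := by
  simp only [swap_apply_apply, conj_mul]

/-- `H` contains the three-cycle `i ↦ j ↦ k ↦ i`, where `i`, `j`, `k` are distinct. -/
def HasThreeCycle (H : Subgroup (Perm α)) (i j k : α) : Prop :=
  [i, j, k].Nodup ∧ swap i j * swap j k ∈ H

namespace HasThreeCycle

variable {H H' : Subgroup (Perm α)} {i j k l m : α}

theorem mono (h : HasThreeCycle H i j k) (hH : H ≤ H') : HasThreeCycle H' i j k :=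
  ⟨h.1, hH h.2⟩

theorem map {σ : Perm α} (h : HasThreeCycle H i j k) (hσ : ∀ τ ∈ H, σ * τ * σ⁻¹ ∈ H) :
    HasThreeCycle H (σ i) (σ j) (σ k) :=
  ⟨h.1.map σ.injective, conj_swap_mul_swap σ i j k ▸ hσ _ h.2⟩

theorem inf_fixingSubgroup {A : Set α} (h : HasThreeCycle H i j k) (hA : ∀ a ∈ A, a ∉ [i, j, k]) :
    HasThreeCycle (H ⊓ fixingSubgroup (Perm α) A) i j k :=
  ⟨h.1, h.2, swap_mul_swap_mem_fixingSubgroup hA⟩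

theorem rotate (h : HasThreeCycle H i j k) : HasThreeCycle H j k i := by
  refine ⟨(List.nodup_rotate (n := 1)).2 h.1, ?_⟩
  convert h.2 using 1
  exact List.formPerm_rotate_one [i, j, k] h.1

theorem reverse (h : HasThreeCycle H i j k) : HasThreeCycle H k j i := by
  refine ⟨List.nodup_reverse.2 h.1, ?_⟩
  simpa only [mul_inv_rev, swap_inv, swap_comm] using H.inv_mem h.2

theorem swap (h : HasThreeCycle H i j k) : HasThreeCycle H j i k :=
  h.reverse.rotate

theorem of_common_pair (h : HasThreeCycle H i j k) (h' : HasThreeCycle H i j l) (hkl : k ≠ l) :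
    HasThreeCycle H j k l := by
  have h₁ := h.1
  have h₂ := h'.1
  convert h'.map (fun τ hτ => H.mul_mem (H.mul_mem h.2 hτ) (H.inv_mem h.2)) using 1 <;>
    simp only [List.nodup_cons, List.mem_cons, List.not_mem_nil, mul_apply, swap_apply_def] at * <;>
    grind

theorem of_common_point (h : HasThreeCycle H i j k) (h' : HasThreeCycle H i l m)
    (hd : Disjoint ({j, k} : Set α) {l, m}) : HasThreeCycle H j l m := by
  have h₁ := h.1
  have h₂ := h'.1
  simp only [Set.disjoint_insert_left, Set.disjoint_singleton_left,
    Set.mem_insert_iff, Set.mem_singleton_iff] at hd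
  convert h'.map (fun τ hτ => H.mul_mem (H.mul_mem h.2 hτ) (H.inv_mem h.2)) using 1 <;>
    simp only [List.nodup_cons, List.mem_cons, List.not_mem_nil, mul_apply, swap_apply_def] at * <;>
    grind

theorem trans_of_common_third {a : α} (h : HasThreeCycle H i j a) (h' : HasThreeCycle H j k a)
    (hik : i ≠ k) : HasThreeCycle H i j k :=
  (h.reverse.of_common_pair h'.rotate.rotate hik).swap

theorem trans {a b : α} (h : HasThreeCycle H i j a) (h' : HasThreeCycle H j k b) (hik : i ≠ k) :
    HasThreeCycle H i j k := by
  rcases eq_or_ne a k with rfl | hak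
  · exact h
  rcases eq_or_ne i b with rfl | hib
  · exact h'.rotate.rotate
  rcases eq_or_ne a b with rfl | hab
  · exact h.trans_of_common_third h' hik
  have hikb : HasThreeCycle H i k b := h.swap.of_common_point h' (by grind)
  have hij : i ≠ j := List.ne_of_not_mem_cons (List.nodup_cons.1 h.1).1
  exact (hikb.trans_of_common_third h'.swap hij).swap.rotate

end HasThreeCycle

variable (H : Subgroup (Perm α))

/-- Two points are related if they are equal or lie on a common three-cycle of `H`. -/
def threeCycleSetoid : Setoid α where
  r i j := i = j ∨ ∃ k, HasThreeCycle H i j k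
  iseqv.refl _ := .inl rfl
  iseqv.symm := by
    rintro _ _ (rfl | ⟨k, h⟩)
    exacts [.inl rfl, .inr ⟨k, h.swap⟩]
  iseqv.trans := by
    rintro i j k (rfl | ⟨a, h⟩) (rfl | ⟨b, h'⟩)
    · exact .inl rfl
    · exact .inr ⟨b, h'⟩
    · exact .inr ⟨a, h⟩
    · rcases eq_or_ne i k with rfl | hik
      exacts [.inl rfl, .inr ⟨j, (h.trans h' hik).rotate.swap.rotate.rotate⟩]

variable {H} {i j k : α}

theorem HasThreeCycle.threeCycleSetoid_rel (h : HasThreeCycle H i j k) : threeCycleSetoid H i j :=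
  .inr ⟨k, h⟩

theorem hasThreeCycle_of_rel (hij : threeCycleSetoid H i j) (hjk : threeCycleSetoid H j k)
    (h : [i, j, k].Nodup) : HasThreeCycle H i j k := by
  obtain ⟨a, ha⟩ := hij.resolve_left (by grind)
  obtain ⟨b, hb⟩ := hjk.resolve_left (by grind)
  exact ha.trans hb (by grind)

theorem threeCycleSetoid_mono {H H' : Subgroup (Perm α)} (hH : H ≤ H') :
    threeCycleSetoid H ≤ threeCycleSetoid H' := by
  rintro i j (rfl | ⟨k, h⟩)
  exacts [.inl rfl, .inr ⟨k, h.mono hH⟩]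

theorem threeCycleSetoid_map {σ : Perm α} (hσ : ∀ τ ∈ H, σ * τ * σ⁻¹ ∈ H)
    (h : threeCycleSetoid H i j) : threeCycleSetoid H (σ i) (σ j) := by
  obtain rfl | ⟨k, h⟩ := h
  exacts [.inl rfl, .inr ⟨σ k, h.map hσ⟩]

theorem alternatingGroup_le_of_threeCycleSetoid_eq_top [Fintype α] (h : threeCycleSetoid H = ⊤) :
    alternatingGroup α ≤ H := by
  rw [← closure_three_cycles_eq_alternating, Subgroup.closure_le]
  intro σ (hσ : σ.IsThreeCycle)
  obtain ⟨a, ha⟩ : σ.support.Nonempty := Finset.card_pos.1 (by rw [hσ.card_support]; simp)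
  rw [hσ.eq_swap_mul_swap_iff_mem_support.2 ha]
  exact (hasThreeCycle_of_rel (h ▸ trivial) (h ▸ trivial) (hσ.nodup_iff_mem_support.2 ha)).2

theorem commutatorElement_eq_swap_mul_swap {σ τ : Perm α} {a : α}
    (hστ : ∀ b, σ b ≠ b → τ b ≠ b → b = a) (hσ : σ a ≠ a) (hτ : τ a ≠ a) :
    [σ a, τ a, a].Nodup ∧ ⁅σ, τ⁆ = swap (σ a) (τ a) * swap (τ a) a := by
  have hfix : σ (τ a) = τ a := by
    by_contra hne
    exact hτ (hστ _ hne (τ.injective.ne hτ))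
  have hdisj : Perm.Disjoint σ (swap a (τ a) * τ) := by
    intro b
    by_cases hσb : σ b = b
    · exact .inl hσb
    refine .inr ?_
    by_cases hτb : τ b = b
    · rw [mul_apply, hτb, swap_apply_of_ne_of_ne]
      · exact fun hb => hτ (hb ▸ hτb)
      · exact fun hb => hσb (hb ▸ hfix)
    · rw [mul_apply, hστ b hσb hτb, swap_apply_right]
  have hne : σ a ≠ τ a := fun hne => hσ (σ.injective (by rw [hne, hfix]))
  refine ⟨by simp [hne, hσ, hτ], ?_⟩
  calc
    ⁅σ, τ⁆ = σ * swap a (τ a) * (swap a (τ a) * τ * σ⁻¹ * (swap a (τ a) * τ)⁻¹) *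
        swap a (τ a) := by
      rw [commutatorElement_def, mul_inv_rev, swap_inv]
      simp only [mul_assoc, swap_mul_self_mul, swap_mul_self, mul_one]
    _ = σ * swap a (τ a) * σ⁻¹ * swap a (τ a) := by
      rw [hdisj.commute.inv_left.symm.eq, mul_inv_cancel_right]
    _ = swap (σ a) (τ a) * swap (τ a) a := by
      rw [← swap_apply_apply, hfix, swap_comm a]

end ThreeCycle

section Linked

open Equiv
open scoped commutatorElement

variable {T Ω : Type*} [Group T]

theorem rel_apply_of_isCoatom_stabilizer {ρ : T →* Perm Ω} {a : Ω}
    (ha : IsCoatom ((MulAction.stabilizer (Perm Ω) a).comap ρ)) (s : Setoid Ω)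
    (hs : ∀ t b c, s b c → s (ρ t b) (ρ t c)) {x : T} (hx : ρ x a ≠ a) (hxa : s (ρ x a) a)
    (t : T) : s (ρ t a) a := by
  let S : Subgroup T :=
    { carrier := {u | s (ρ u a) a}
      one_mem' := by simp
      mul_mem' := fun {u v} hu hv => by simpa using s.trans (hs u _ _ hv) hu
      inv_mem' := fun {u} hu => by simpa using s.symm (hs u⁻¹ _ _ hu) }
  have hlt : (MulAction.stabilizer (Perm Ω) a).comap ρ < S := by
    refine SetLike.lt_iff_le_and_exists.2 ⟨fun u (hu : ρ u a = a) => ?_, x, hxa, hx⟩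
    change s (ρ u a) a
    rw [hu]
  exact (Subgroup.eq_top_iff' S).1 (ha.2 S hlt) t

variable {T₁ T₂ : Type*} [Group T₁] [Group T₂]

/-- Two permutation groups, given by `ρ₁` and `ρ₂`, whose elements `x` and `y` have supports
meeting only in `ω`, and which connect all points even when the moves of `ρ₂` into and out of the
set `L` are forbidden. The copy of `T₂` used for generation is conjugated by a transvection
commuting with all permutation matrices that fix `L` pointwise. -/
structure IsLinked (ρ₁ : T₁ →* Perm Ω) (ρ₂ : T₂ →* Perm Ω) (x : T₁) (y : T₂) (ω : Ω)
    (L : Set Ω) : Prop where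
  isCoatom_left : IsCoatom ((MulAction.stabilizer (Perm Ω) ω).comap ρ₁)
  isCoatom_right : IsCoatom ((MulAction.stabilizer (Perm Ω) ω).comap ρ₂)
  left_apply_ne : ρ₁ x ω ≠ ω
  right_apply_ne : ρ₂ y ω ≠ ω
  eq_of_apply_ne : ∀ a, ρ₁ x a ≠ a → ρ₂ y a ≠ a → a = ω
  left_apply_eq : ∀ l ∈ L, ρ₁ x l = l
  right_apply_notMem : ∀ z, ρ₂ z ω ∉ L
  right_apply_left_apply_notMem : ∀ z, ρ₂ z (ρ₁ x ω) ∉ L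
  disjoint : Disjoint L (ρ₂ y '' L)
  forall_mem : ∀ D : Set Ω, ω ∈ D → (∀ t, ∀ d ∈ D, ρ₁ t d ∈ D) →
    (∀ z, ∀ d ∈ D, d ∉ L → ρ₂ z d ∉ L → ρ₂ z d ∈ D) → ∀ a, a ∈ D

namespace IsLinked

variable {ρ₁ : T₁ →* Perm Ω} {ρ₂ : T₂ →* Perm Ω} {x : T₁} {y : T₂} {ω : Ω} {L : Set Ω}

theorem notMem_of_right_apply_mem (h : IsLinked ρ₁ ρ₂ x y ω L) {a : Ω} (ha : ∃ z, ρ₂ z a ∈ L) :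
    a ∉ [ρ₁ x ω, ρ₂ y ω, ω] := by
  obtain ⟨z, hz⟩ := ha
  simp only [List.mem_cons, List.not_mem_nil, or_false]
  rintro (rfl | rfl | rfl)
  · exact h.right_apply_left_apply_notMem z hz
  · exact h.right_apply_notMem (z * y) (by rwa [map_mul])
  · exact h.right_apply_notMem z hz

theorem commutatorElement_eq_swap_mul_swap [DecidableEq Ω] (h : IsLinked ρ₁ ρ₂ x y ω L) :
    [ρ₁ x ω, ρ₂ y ω, ω].Nodup ∧
      ⁅ρ₁ x, ρ₂ y⁆ = swap (ρ₁ x ω) (ρ₂ y ω) * swap (ρ₂ y ω) ω :=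
  _root_.commutatorElement_eq_swap_mul_swap h.eq_of_apply_ne h.left_apply_ne h.right_apply_ne

theorem commutatorElement_mem_fixingSubgroup (h : IsLinked ρ₁ ρ₂ x y ω L) :
    ⁅ρ₁ x, ρ₂ y⁆ ∈ fixingSubgroup (Perm Ω) L := by
  classical
  rw [h.commutatorElement_eq_swap_mul_swap.2]
  exact swap_mul_swap_mem_fixingSubgroup fun l hl =>
    h.notMem_of_right_apply_mem ⟨1, by simpa using hl⟩

variable {H : Subgroup (Perm Ω)}

theorem conj_mem_inf_fixingSubgroup
    (hρ₂ : ∀ z, ∀ τ ∈ H ⊓ fixingSubgroup (Perm Ω) L,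
      ρ₂ z * τ * (ρ₂ z)⁻¹ ∈ fixingSubgroup (Perm Ω) L → ρ₂ z * τ * (ρ₂ z)⁻¹ ∈ H) (z : T₂) :
    ∀ τ ∈ H ⊓ fixingSubgroup (Perm Ω) {a | ∃ u, ρ₂ u a ∈ L},
      ρ₂ z * τ * (ρ₂ z)⁻¹ ∈ H ⊓ fixingSubgroup (Perm Ω) {a | ∃ u, ρ₂ u a ∈ L} := by
  rintro τ ⟨hτ, hτM⟩
  have hle := fixingSubgroup_antitone (Perm Ω) Ω
    (show L ⊆ {a | ∃ u, ρ₂ u a ∈ L} from fun a ha => ⟨1, by simpa⟩)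
  have hconj : ρ₂ z * τ * (ρ₂ z)⁻¹ ∈ fixingSubgroup (Perm Ω) {a | ∃ u, ρ₂ u a ∈ L} := by
    rintro ⟨a, u, hu⟩
    have hfix : τ ((ρ₂ z)⁻¹ a) = (ρ₂ z)⁻¹ a := hτM ⟨(ρ₂ z)⁻¹ a, u * z, by simpa⟩
    rw [Perm.smul_def, Perm.mul_apply, Perm.mul_apply, hfix]
    exact (ρ₂ z).apply_symm_apply a
  exact ⟨hρ₂ z τ ⟨hτ, hle hτM⟩ (hle hconj), hconj⟩

variable [DecidableEq Ω]

theorem rel_right_apply (h : IsLinked ρ₁ ρ₂ x y ω L)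
    (hρ₂ : ∀ z, ∀ τ ∈ H ⊓ fixingSubgroup (Perm Ω) L,
      ρ₂ z * τ * (ρ₂ z)⁻¹ ∈ fixingSubgroup (Perm Ω) L → ρ₂ z * τ * (ρ₂ z)⁻¹ ∈ H)
    (hxy : ⁅ρ₁ x, ρ₂ y⁆ ∈ H) (z : T₂) :
    threeCycleSetoid H (ρ₂ z ω) ω ∧ threeCycleSetoid H (ρ₂ z (ρ₁ x ω)) ω := by
  let H₂ : Subgroup (Perm Ω) := H ⊓ fixingSubgroup (Perm Ω) {a | ∃ z, ρ₂ z a ∈ L}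
  have hH₂ (u : T₂) : ∀ τ ∈ H₂, ρ₂ u * τ * (ρ₂ u)⁻¹ ∈ H₂ := conj_mem_inf_fixingSubgroup hρ₂ u
  obtain ⟨hnodup, hcomm⟩ := h.commutatorElement_eq_swap_mul_swap
  have hcycle : HasThreeCycle H₂ (ρ₁ x ω) (ρ₂ y ω) ω :=
    HasThreeCycle.inf_fixingSubgroup ⟨hnodup, hcomm ▸ hxy⟩ fun _ => h.notMem_of_right_apply_mem
  have hω : threeCycleSetoid H₂ (ρ₂ z ω) ω :=
    rel_apply_of_isCoatom_stabilizer h.isCoatom_right _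
      (fun u _ _ => threeCycleSetoid_map (hH₂ u)) h.right_apply_ne
      hcycle.rotate.threeCycleSetoid_rel z
  have hxω : threeCycleSetoid H₂ (ρ₂ z (ρ₁ x ω)) (ρ₂ z ω) :=
    threeCycleSetoid_map (hH₂ z) hcycle.rotate.rotate.swap.threeCycleSetoid_rel
  exact ⟨threeCycleSetoid_mono inf_le_left hω,
    threeCycleSetoid_mono inf_le_left (Setoid.trans' _ hxω hω)⟩

theorem rel_right_apply_of_rel (h : IsLinked ρ₁ ρ₂ x y ω L)
    (hρ₂ : ∀ z, ∀ τ ∈ H ⊓ fixingSubgroup (Perm Ω) L,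
      ρ₂ z * τ * (ρ₂ z)⁻¹ ∈ fixingSubgroup (Perm Ω) L → ρ₂ z * τ * (ρ₂ z)⁻¹ ∈ H)
    (hxy : ⁅ρ₁ x, ρ₂ y⁆ ∈ H) {d : Ω} (hd : threeCycleSetoid H d ω) (hdL : d ∉ L) {z : T₂}
    (hzd : ρ₂ z d ∉ L) : threeCycleSetoid H (ρ₂ z d) ω := by
  have hω := h.rel_right_apply hρ₂ hxy
  rcases eq_or_ne d ω with rfl | hdω
  · exact (hω z).1
  rcases eq_or_ne d (ρ₁ x ω) with rfl | hdx
  · exact (hω z).2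
  have hxω : threeCycleSetoid H ω (ρ₁ x ω) := by simpa using Setoid.symm' _ (hω 1).2
  have hnodup : [d, ω, ρ₁ x ω].Nodup := by simp [hdω, hdx, h.left_apply_ne.symm]
  have hnotMem (u : T₂) (hu : ρ₂ u d ∉ L) :
      ∀ l ∈ L, l ∉ [ρ₂ u d, ρ₂ u ω, ρ₂ u (ρ₁ x ω)] := by
    intro l hl
    simp only [List.mem_cons, List.not_mem_nil, or_false]
    rintro (rfl | rfl | rfl)
    exacts [hu hl, h.right_apply_notMem u hl, h.right_apply_left_apply_notMem u hl]
  have hcycle : HasThreeCycle (H ⊓ fixingSubgroup (Perm Ω) L) d ω (ρ₁ x ω) :=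
    (hasThreeCycle_of_rel hd hxω hnodup).inf_fixingSubgroup
      (by simpa using hnotMem 1 (by simpa using hdL))
  have hmem := hρ₂ z _ hcycle.2
  rw [conj_swap_mul_swap] at hmem
  have hzcycle : HasThreeCycle H (ρ₂ z d) (ρ₂ z ω) (ρ₂ z (ρ₁ x ω)) :=
    ⟨hnodup.map (ρ₂ z).injective, hmem (swap_mul_swap_mem_fixingSubgroup (hnotMem z hzd))⟩
  exact Setoid.trans' _ hzcycle.threeCycleSetoid_rel (hω z).1

theorem alternatingGroup_le [Fintype Ω] (h : IsLinked ρ₁ ρ₂ x y ω L) (hρ₁ : ∀ t, ρ₁ t ∈ H)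
    (hρ₂ : ∀ z, ∀ τ ∈ H ⊓ fixingSubgroup (Perm Ω) L,
      ρ₂ z * τ * (ρ₂ z)⁻¹ ∈ fixingSubgroup (Perm Ω) L → ρ₂ z * τ * (ρ₂ z)⁻¹ ∈ H)
    (hxy : ⁅ρ₁ x, ρ₂ y⁆ ∈ H) : alternatingGroup Ω ≤ H := by
  obtain ⟨hnodup, hcomm⟩ := h.commutatorElement_eq_swap_mul_swap
  have hcycle : HasThreeCycle H (ρ₁ x ω) (ρ₂ y ω) ω := ⟨hnodup, hcomm ▸ hxy⟩
  have hmap (t : T₁) {a b : Ω} : threeCycleSetoid H a b → threeCycleSetoid H (ρ₁ t a) (ρ₁ t b) :=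
    threeCycleSetoid_map fun τ hτ => H.mul_mem (H.mul_mem (hρ₁ t) hτ) (H.inv_mem (hρ₁ t))
  have hω (t : T₁) : threeCycleSetoid H (ρ₁ t ω) ω :=
    rel_apply_of_isCoatom_stabilizer h.isCoatom_left _ (fun t _ _ => hmap t) h.left_apply_ne
      hcycle.rotate.rotate.swap.threeCycleSetoid_rel t
  have hrel : ∀ a, a ∈ {d | threeCycleSetoid H d ω} :=
    h.forall_mem _ (Setoid.refl' (threeCycleSetoid H) ω)
      (fun t d hd => Setoid.trans' _ (hmap t hd) (hω t))
      fun z d hd hdL hzd => h.rel_right_apply_of_rel hρ₂ hxy hd hdL hzd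
  exact alternatingGroup_le_of_threeCycleSetoid_eq_top <|
    Setoid.eq_top_iff.2 fun a b => Setoid.trans' _ (hrel a) (Setoid.symm' _ (hrel b))

end IsLinked

end Linked

section LinkedGeneration

open Equiv Matrix.SpecialLinearGroup
open scoped commutatorElement

variable {T₁ T₂ Ω R K : Type*} [Group T₁] [Group T₂] [Fintype Ω] [DecidableEq Ω] [CommRing R]

theorem commute_transvection_evenPermMatrixHom {p r : Ω} (hpr : p ≠ r) (c : R)
    {σ : alternatingGroup Ω} (hσ : (σ : Perm Ω) ∈ fixingSubgroup (Perm Ω) {p, r}) :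
    Commute (transvection hpr c) (evenPermMatrixHom Ω R σ) := by
  have hp : σ.1 p = p := hσ ⟨p, .inl rfl⟩
  have hr : σ.1 r = r := hσ ⟨r, .inr rfl⟩
  have := evenPermMatrixHom_conj_transvection σ hpr c
  simp only [hp, hr] at this
  exact (mul_inv_eq_iff_eq_mul.1 this).symm

namespace IsLinked

variable {ρ₁ : T₁ →* alternatingGroup Ω} {ρ₂ : T₂ →* alternatingGroup Ω} {x : T₁} {y : T₂}
  {ω p r : Ω}

theorem evenPermMatrixHom_range_le
    (h : IsLinked ((alternatingGroup Ω).subtype.comp ρ₁) ((alternatingGroup Ω).subtype.comp ρ₂)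
      x y ω {p, r}) (hpr : p ≠ r) {c : R}
    {G : Subgroup (Matrix.SpecialLinearGroup Ω R)} (hG₁ : ∀ t, evenPermMatrixHom Ω R (ρ₁ t) ∈ G)
    (hG₂ : ∀ z, transvection hpr c * evenPermMatrixHom Ω R (ρ₂ z) * (transvection hpr c)⁻¹ ∈ G) :
    (evenPermMatrixHom Ω R).range ≤ G := by
  have hcomm {σ : alternatingGroup Ω} (hσ : σ.1 ∈ fixingSubgroup (Perm Ω) {p, r}) :
      Commute (transvection hpr c) (evenPermMatrixHom Ω R σ) :=
    commute_transvection_evenPermMatrixHom hpr c hσ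
  have hle : alternatingGroup Ω ≤
      (G.comap (evenPermMatrixHom Ω R)).map (alternatingGroup Ω).subtype := by
    refine h.alternatingGroup_le (fun t => ⟨ρ₁ t, hG₁ t, rfl⟩) ?_ ?_
    · rintro z _ ⟨⟨τ, hτ, rfl⟩, hτL⟩ hconj
      refine ⟨ρ₂ z * τ * (ρ₂ z)⁻¹, ?_, rfl⟩
      have hmem := conj_mem_of_commute (hG₂ z) hτ (hcomm hτL)
      rw [← map_inv (evenPermMatrixHom Ω R), ← map_mul, ← map_mul] at hmem
      exact hmem (hcomm hconj)
    · refine ⟨⁅ρ₁ x, ρ₂ y⁆, ?_, rfl⟩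
      have hmem := commutatorElement_mem_of_commute (hG₁ x) (hG₂ y)
        (hcomm fun l => h.left_apply_eq l l.2)
      rw [← map_commutatorElement] at hmem
      exact hmem (hcomm h.commutatorElement_mem_fixingSubgroup)
  rintro _ ⟨σ, rfl⟩
  obtain ⟨τ, hτ, hτσ⟩ := hle σ.2
  exact Subtype.ext hτσ ▸ hτ

theorem range_sup_range_eq_top [Field K]
    (h : IsLinked ((alternatingGroup Ω).subtype.comp ρ₁) ((alternatingGroup Ω).subtype.comp ρ₂)
      x y ω {p, r}) (hpr : p ≠ r)
    (hcard : 6 ≤ Fintype.card Ω) {c : Kˣ} (hc : ∀ u, u ∈ Submonoid.powers c) :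
    ((evenPermMatrixHom Ω K).comp ρ₁).range ⊔
      ((MulAut.conj (transvection hpr (c : K))).toMonoidHom.comp
        ((evenPermMatrixHom Ω K).comp ρ₂)).range = ⊤ := by
  set G := ((evenPermMatrixHom Ω K).comp ρ₁).range ⊔
      ((MulAut.conj (transvection hpr (c : K))).toMonoidHom.comp
        ((evenPermMatrixHom Ω K).comp ρ₂)).range
  have hG₁ (t : T₁) : evenPermMatrixHom Ω K (ρ₁ t) ∈ G := Subgroup.mem_sup_left ⟨t, rfl⟩
  have hG₂ (z : T₂) :
      transvection hpr (c : K) * evenPermMatrixHom Ω K (ρ₂ z) * (transvection hpr (c : K))⁻¹ ∈ G :=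
    Subgroup.mem_sup_right ⟨z, rfl⟩
  have hG := h.evenPermMatrixHom_range_le hpr hG₁ hG₂
  have hdisj : Disjoint ({p, r} : Set Ω) {(ρ₂ y).1 p, (ρ₂ y).1 r} := by
    simpa [Set.image_pair] using h.disjoint
  refine eq_top_of_transvection_mul_transvection_mem hcard hG hc (hpr := hpr)
    (hqs := (ρ₂ y).1.injective.ne hpr) hdisj ?_
  rw [← evenPermMatrixHom_conj_transvection (ρ₂ y) hpr, ← transvection_inv]
  have := G.mul_mem (hG₂ y) (G.inv_mem (hG ⟨ρ₂ y, rfl⟩))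
  simpa only [mul_assoc] using this

end IsLinked

end LinkedGeneration

section Simple

variable {T G : Type*} [Group T] [Group G]

theorem exists_commute_notMem_zpowers_s2 [Finite G] (hG : ¬ Group.IsSolvable G) :
    ∃ x t : G, x ≠ 1 ∧ Commute x t ∧ t ∉ Subgroup.zpowers x := by
  have hZ : ¬ IsZGroup G := fun _ => hG inferInstance
  rw [isZGroup_iff] at hZ
  push Not at hZ
  obtain ⟨p, hp, P, hP⟩ := hZ
  have : Fact p.Prime := ⟨hp⟩
  have : Nontrivial P := not_subsingleton_iff_nontrivial.1 fun _ => hP inferInstance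
  have := P.2.center_nontrivial
  obtain ⟨⟨x, hx⟩, hx1⟩ := exists_ne (1 : Subgroup.center P)
  obtain ⟨t, ht⟩ : ∃ t : P, t ∉ Subgroup.zpowers x := by
    by_contra! h
    exact hP ⟨x, h⟩
  refine ⟨x, t, fun h => hx1 (Subtype.ext (Subtype.ext h)), ?_, ?_⟩
  · exact congrArg Subtype.val (Subgroup.mem_center_iff.1 hx t).symm
  · rintro ⟨n, hn⟩
    exact ht ⟨n, Subtype.ext hn⟩

variable [IsSimpleGroup T]

theorem injective_or_eq_one (f : T →* G) : Function.Injective f ∨ f = 1 := by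
  rw [← MonoidHom.ker_eq_bot_iff, ← MonoidHom.ker_eq_top_iff]
  exact f.normal_ker.eq_bot_or_eq_top

theorem eq_one_of_not_comm {A : Type*} [CommGroup A] (hT : ¬ ∀ a b : T, a * b = b * a)
    (f : T →* A) : f = 1 :=
  (injective_or_eq_one f).resolve_left fun hf =>
    hT fun a b => hf (by rw [map_mul, map_mul, mul_comm])

theorem exists_alternatingGroup_subtype_comp_eq {Ω : Type*} [Fintype Ω] [DecidableEq Ω]
    (hT : ¬ ∀ a b : T, a * b = b * a) (ρ : T →* Equiv.Perm Ω) :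
    ∃ ρ' : T →* alternatingGroup Ω, (alternatingGroup Ω).subtype.comp ρ' = ρ :=
  ⟨ρ.codRestrict _ fun t =>
    DFunLike.congr_fun (eq_one_of_not_comm hT (Equiv.Perm.sign.comp ρ)) t, rfl⟩

theorem mk'_center_comp_injective (hT : ¬ ∀ a b : T, a * b = b * a) {f : T →* G}
    (hf : Function.Injective f) :
    Function.Injective ((QuotientGroup.mk' (Subgroup.center G)).comp f) := by
  refine (injective_or_eq_one _).resolve_right fun h => hT fun a b => hf ?_
  have hb : f b ∈ Subgroup.center G :=
    (QuotientGroup.eq_one_iff (f b)).1 (DFunLike.congr_fun h b)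
  rw [map_mul, map_mul, Subgroup.mem_center_iff.1 hb]

theorem exists_sup_eq_top_quotient_center {T₁ T₂ : Type*} [Group T₁] [Group T₂] [IsSimpleGroup T₁]
    [IsSimpleGroup T₂] (hT₁ : ¬ ∀ a b : T₁, a * b = b * a) (hT₂ : ¬ ∀ a b : T₂, a * b = b * a)
    {f₁ : T₁ →* G} {f₂ : T₂ →* G} (hf₁ : Function.Injective f₁) (hf₂ : Function.Injective f₂)
    (h : f₁.range ⊔ f₂.range = ⊤) :
    ∃ H₁ H₂ : Subgroup (G ⧸ Subgroup.center G),
      Nonempty (H₁ ≃* T₁) ∧ Nonempty (H₂ ≃* T₂) ∧ H₁ ⊔ H₂ = ⊤ := by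
  refine ⟨_, _, ⟨(MonoidHom.ofInjective (mk'_center_comp_injective hT₁ hf₁)).symm⟩,
    ⟨(MonoidHom.ofInjective (mk'_center_comp_injective hT₂ hf₂)).symm⟩, ?_⟩
  rw [MonoidHom.range_comp, MonoidHom.range_comp, ← Subgroup.map_sup, h,
    Subgroup.map_top_of_surjective _ (QuotientGroup.mk'_surjective _)]

theorem exists_smul_ne {X : Type*} [MulAction T X] [MulAction.IsPretransitive T X] [Nontrivial X]
    {x : T} (hx : x ≠ 1) : ∃ v : X, x • v ≠ v := by
  by_contra! h
  rcases injective_or_eq_one (MulAction.toPermHom T X) with hinj | htriv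
  · exact hx (hinj (Equiv.ext fun v => by simpa using h v))
  · obtain ⟨u, v, huv⟩ := exists_pair_ne X
    obtain ⟨t, rfl⟩ := MulAction.exists_smul_eq T u v
    exact huv (Equiv.congr_fun (DFunLike.congr_fun htriv t) u).symm

end Simple

section Quotient

open MulAction

variable {T : Type*} [Group T]

theorem isPreprimitive_quotient_of_isCoatom {A : Subgroup T} (hA : IsCoatom A) :
    IsPreprimitive T (T ⧸ A) := by
  have := QuotientGroup.nontrivial_iff.2 hA.1
  rw [← isCoatom_stabilizer_iff_preprimitive T ((1 : T) : T ⧸ A)]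
  rwa [stabilizer_quotient]

theorem card_quotient_le [Finite T] (C : Subgroup T) : Nat.card (T ⧸ C) ≤ Nat.card T :=
  Nat.le_of_dvd Nat.card_pos C.card_quotient_dvd_card

theorem smul_mk_eq_of_commute {C : Subgroup T} {x t : T} (hx : x ∈ C) (h : Commute x t) :
    x • (t : T ⧸ C) = t := by
  rw [Quotient.smul_coe, smul_eq_mul, h.eq, QuotientGroup.mk_mul_of_mem t hx]

theorem two_lt_card_of_smul_ne {X : Type*} [MulAction T X] [Finite X] {x : T} {u v : X}
    (hu : x • u = u) (hv : x • v ≠ v) : 2 < Nat.card X := by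
  have h₁ : u ≠ v := fun h => hv (h ▸ hu)
  have h₂ : u ≠ x • v := fun h => h₁ (smul_left_cancel x (hu.trans h))
  have := Fintype.ofFinite X
  rw [Nat.card_eq_fintype_card]
  exact Fintype.two_lt_card_iff.2 ⟨u, v, x • v, h₁, h₂, hv.symm⟩

end Quotient

section Amalgam

theorem exists_embedding_apply_eq_apply_iff {S₁ S₂ J Ω : Type*} [Finite S₁] [Finite S₂]
    [Finite J] [Finite Ω] {g₁ : J → S₁} {g₂ : J → S₂} (hg₁ : Function.Injective g₁)
    (hg₂ : Function.Injective g₂)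
    (hcard : Nat.card Ω + Nat.card J = Nat.card S₁ + Nat.card S₂) :
    ∃ (i₁ : S₁ ↪ Ω) (i₂ : S₂ ↪ Ω), (∀ a b, i₁ a = i₂ b ↔ ∃ j, g₁ j = a ∧ g₂ j = b) ∧
      ∀ ω, ω ∈ Set.range i₁ ∨ ω ∈ Set.range i₂ := by
  classical
  let e₂ : J ⊕ ↥(Set.range g₂)ᶜ ≃ S₂ :=
    ((Equiv.ofInjective g₂ hg₂).sumCongr (Equiv.refl _)).trans (Equiv.Set.sumCompl _)
  have hcard₂ := Nat.card_congr e₂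
  have hcardΩ : Nat.card (S₁ ⊕ ↥(Set.range g₂)ᶜ) = Nat.card Ω := by
    rw [Nat.card_sum] at hcard₂ ⊢
    omega
  obtain ⟨e⟩ := Finite.card_eq.1 hcardΩ
  have hinj : Function.Injective (Sum.map g₁ (id : ↥(Set.range g₂)ᶜ → _)) :=
    hg₁.sumMap Function.injective_id
  refine ⟨⟨e ∘ Sum.inl, e.injective.comp Sum.inl_injective⟩,
    ⟨e ∘ Sum.map g₁ id ∘ e₂.symm, e.injective.comp (hinj.comp e₂.symm.injective)⟩, ?_, ?_⟩
  · intro a b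
    obtain ⟨j | b, rfl⟩ := e₂.surjective b
    · have hj (j' : J) : g₂ j' = e₂ (.inl j) ↔ j' = j := hg₂.eq_iff (b := j)
      simp [hj, eq_comm]
    · have hb (j : J) : g₂ j ≠ e₂ (.inr b) := fun h => b.2 ⟨j, h⟩
      simp [hb]
  · intro ω
    obtain ⟨a | b, rfl⟩ := e.surjective ω
    · exact .inl ⟨a, rfl⟩
    · exact .inr ⟨e₂ (.inr b), by simp⟩

end Amalgam

section Extend

open Equiv MulAction

variable (T : Type*) {S Ω : Type*} [Group T] [MulAction T S]

/-- The permutation representation of `T` on `Ω` which is the given action on the image of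
`i : S ↪ Ω` and trivial elsewhere. -/
noncomputable def permHomOfEmbedding (i : S ↪ Ω) : T →* Perm Ω :=
  (Perm.viaEmbeddingHom i).comp (toPermHom T S)

variable {T}

@[simp]
theorem permHomOfEmbedding_apply (i : S ↪ Ω) (t : T) (a : S) :
    permHomOfEmbedding T i t (i a) = i (t • a) :=
  Perm.viaEmbedding_apply ..

theorem permHomOfEmbedding_apply_of_notMem (i : S ↪ Ω) (t : T) {ω : Ω} (h : ω ∉ Set.range i) :
    permHomOfEmbedding T i t ω = ω :=
  Perm.viaEmbedding_apply_of_notMem _ _ _ h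

theorem permHomOfEmbedding_apply_ne_iff {i : S ↪ Ω} {t : T} {ω : Ω} :
    permHomOfEmbedding T i t ω ≠ ω ↔ ∃ a, t • a ≠ a ∧ i a = ω := by
  by_cases h : ω ∈ Set.range i
  · obtain ⟨a, rfl⟩ := h
    simp
  · rw [permHomOfEmbedding_apply_of_notMem i t h]
    exact iff_of_false (· rfl) fun ⟨a, _, ha⟩ => h ⟨a, ha⟩

theorem comap_permHomOfEmbedding_stabilizer (i : S ↪ Ω) (a : S) :
    (stabilizer (Perm Ω) (i a)).comap (permHomOfEmbedding T i) = stabilizer T a := by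
  ext t
  simp

end Extend

section Chain

open Equiv MulAction

variable {T₁ T₂ X₀ X Y Ω : Type*} {k : ℕ}

/-- `Ω` is glued from one copy of `X₀`, copies `X(0), …, X(k-1)` of `X` and copies
`Y(0), …, Y(k)` of `Y`, embedded by `i₁` and `i₂`, into the chain
`X₀ — Y(0) — X(0) — Y(1) — X(1) — ⋯ — Y(k)`. The point `w` of `X₀` meets `v₁` in `Y(0)`; the
points `u₂`, `u₀` of `X(i)` meet `v₀` in `Y(i)` and `v₁` in `Y(i+1)`; and for `i ∈ s` the point
`u₁` of `X(i)` also meets `v₂` in `Y(i+1)`. -/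
structure IsOrbitChain (i₁ : X₀ ⊕ (Σ _ : Fin k, X) ↪ Ω) (i₂ : (Σ _ : Fin (k + 1), Y) ↪ Ω)
    (s : Finset (Fin k)) (w : X₀) (u₀ u₁ u₂ : X) (v₀ v₁ v₂ : Y) : Prop where
  base : i₁ (.inl w) = i₂ ⟨0, v₁⟩
  link_castSucc : ∀ i, i₁ (.inr ⟨i, u₂⟩) = i₂ ⟨i.castSucc, v₀⟩
  link_succ : ∀ i, i₁ (.inr ⟨i, u₀⟩) = i₂ ⟨i.succ, v₁⟩
  extra : ∀ i ∈ s, i₁ (.inr ⟨i, u₁⟩) = i₂ ⟨i.succ, v₂⟩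
  eq_cases : ∀ {a b}, i₁ a = i₂ b →
    a = .inl w ∨ ∃ i, a = .inr ⟨i, u₂⟩ ∧ b.2 = v₀ ∨ a = .inr ⟨i, u₀⟩ ∨ a = .inr ⟨i, u₁⟩
  mem_range : ∀ ω, ω ∈ Set.range i₁ ∨ ω ∈ Set.range i₂

theorem exists_isOrbitChain [Finite X₀] [Finite X] [Finite Y] [Finite Ω] (s : Finset (Fin k))
    (w : X₀) {u₀ u₁ u₂ : X} {v₀ v₁ v₂ : Y} (hu : [u₀, u₁, u₂].Nodup) (hv : [v₀, v₁, v₂].Nodup)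
    (hcard : Nat.card Ω + (1 + (k + (k + s.card))) =
      Nat.card X₀ + k * Nat.card X + (k + 1) * Nat.card Y) :
    ∃ (i₁ : X₀ ⊕ (Σ _ : Fin k, X) ↪ Ω) (i₂ : (Σ _ : Fin (k + 1), Y) ↪ Ω),
      IsOrbitChain i₁ i₂ s w u₀ u₁ u₂ v₀ v₁ v₂ := by
  let g₁ : Unit ⊕ Fin k ⊕ Fin k ⊕ s → X₀ ⊕ (Σ _ : Fin k, X) :=
    Sum.elim (fun _ => .inl w) <| Sum.elim (fun i => .inr ⟨i, u₂⟩) <|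
      Sum.elim (fun i => .inr ⟨i, u₀⟩) fun i => .inr ⟨i, u₁⟩
  let g₂ : Unit ⊕ Fin k ⊕ Fin k ⊕ s → Σ _ : Fin (k + 1), Y :=
    Sum.elim (fun _ => ⟨0, v₁⟩) <| Sum.elim (fun i => ⟨i.castSucc, v₀⟩) <|
      Sum.elim (fun i => ⟨i.succ, v₁⟩) fun i => ⟨i.1.succ, v₂⟩
  have hg₁ : Function.Injective g₁ := by
    rintro (_ | i | i | i) (_ | j | j | j) h <;> simp_all [g₁]
  have hg₂ : Function.Injective g₂ := by
    rintro (_ | i | i | i) (_ | j | j | j) h <;> simp_all [g₂, (Fin.succ_ne_zero _).symm]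
  obtain ⟨i₁, i₂, hi, hrange⟩ :=
    exists_embedding_apply_eq_apply_iff (Ω := Ω) hg₁ hg₂ (by simpa [Nat.card_sigma] using hcard)
  refine ⟨i₁, i₂, ?_, fun i => ?_, fun i => ?_, fun i his => ?_, fun {a b} h => ?_, hrange⟩
  · exact (hi _ _).2 ⟨.inl (), rfl, rfl⟩
  · exact (hi _ _).2 ⟨.inr (.inl i), rfl, rfl⟩
  · exact (hi _ _).2 ⟨.inr (.inr (.inl i)), rfl, rfl⟩
  · exact (hi _ _).2 ⟨.inr (.inr (.inr ⟨i, his⟩)), rfl, rfl⟩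
  · obtain ⟨_ | i | i | i, rfl, rfl⟩ := (hi a b).1 h
    exacts [.inl rfl, .inr ⟨i, .inl ⟨rfl, rfl⟩⟩, .inr ⟨i, .inr (.inl rfl)⟩,
      .inr ⟨i, .inr (.inr rfl)⟩]

namespace IsOrbitChain

variable [Group T₁] [Group T₂] [MulAction T₁ X₀] [MulAction T₁ X] [MulAction T₂ Y]
  {i₁ : X₀ ⊕ (Σ _ : Fin k, X) ↪ Ω} {i₂ : (Σ _ : Fin (k + 1), Y) ↪ Ω} {s : Finset (Fin k)}
  {w : X₀} {u₀ u₁ u₂ : X} {v₀ v₁ v₂ : Y} {x : T₁} {y : T₂} {L : Set Ω}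

theorem eq_of_apply_ne (h : IsOrbitChain i₁ i₂ s w u₀ u₁ u₂ v₀ v₁ v₂) (hu₀ : x • u₀ = u₀)
    (hu₁ : x • u₁ = u₁) (hv₀ : y • v₀ = v₀) (ω : Ω) (hx : permHomOfEmbedding T₁ i₁ x ω ≠ ω)
    (hy : permHomOfEmbedding T₂ i₂ y ω ≠ ω) : ω = i₁ (.inl w) := by
  obtain ⟨a, ha, rfl⟩ := permHomOfEmbedding_apply_ne_iff.1 hx
  obtain ⟨⟨l, v⟩, hb, hab⟩ := permHomOfEmbedding_apply_ne_iff.1 hy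
  obtain rfl | ⟨i, ⟨rfl, rfl⟩ | rfl | rfl⟩ := h.eq_cases hab.symm
  · rfl
  · simp [hv₀] at hb
  · simp [hu₀] at ha
  · simp [hu₁] at ha

theorem eq_succ_of_apply_mem (h : IsOrbitChain i₁ i₂ s w u₀ u₁ u₂ v₀ v₁ v₂)
    (hL : L ⊆ (fun i => i₁ (.inr ⟨i, u₀⟩)) '' s) {l : Fin (k + 1)} {v : Y} (hlv : i₂ ⟨l, v⟩ ∈ L) :
    v = v₁ ∧ ∃ i ∈ s, l = i.succ := by
  obtain ⟨i, hi, hiv⟩ := hL hlv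
  obtain ⟨rfl, rfl⟩ : i.succ = l ∧ v₁ = v := by simpa [h.link_succ] using hiv
  exact ⟨rfl, i, hi, rfl⟩

theorem apply_zero_notMem (h : IsOrbitChain i₁ i₂ s w u₀ u₁ u₂ v₀ v₁ v₂)
    (hL : L ⊆ (fun i => i₁ (.inr ⟨i, u₀⟩)) '' s) (v : Y) : i₂ ⟨0, v⟩ ∉ L := by
  intro hvL
  obtain ⟨-, i, -, hi⟩ := h.eq_succ_of_apply_mem hL hvL
  exact Fin.succ_ne_zero i hi.symm

theorem forall_mem_succ [IsPretransitive T₁ X] [IsPretransitive T₂ Y]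
    (h : IsOrbitChain i₁ i₂ s w u₀ u₁ u₂ v₀ v₁ v₂) (hv₂ : v₂ ≠ v₁)
    (hL : L ⊆ (fun i => i₁ (.inr ⟨i, u₀⟩)) '' s) {D : Set Ω}
    (hD₁ : ∀ t : T₁, ∀ d ∈ D, permHomOfEmbedding T₁ i₁ t d ∈ D)
    (hD₂ : ∀ z : T₂, ∀ d ∈ D, d ∉ L → permHomOfEmbedding T₂ i₂ z d ∉ L →
      permHomOfEmbedding T₂ i₂ z d ∈ D)
    {i : Fin k} (hi : i₂ ⟨i.castSucc, v₀⟩ ∈ D) :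
    (∀ u, i₁ (.inr ⟨i, u⟩) ∈ D) ∧ ∀ v, i₂ ⟨i.succ, v⟩ ∈ D := by
  have hX (u : X) : i₁ (.inr ⟨i, u⟩) ∈ D := by
    obtain ⟨t, rfl⟩ := exists_smul_eq T₁ u₂ u
    have hmem := hD₁ t _ ((h.link_castSucc i).symm ▸ hi)
    rwa [permHomOfEmbedding_apply] at hmem
  have hne (v : Y) (hv : v ≠ v₁) : i₂ ⟨i.succ, v⟩ ∉ L := fun hvL =>
    hv (h.eq_succ_of_apply_mem hL hvL).1
  obtain ⟨v, hvD, hv⟩ : ∃ v, i₂ ⟨i.succ, v⟩ ∈ D ∧ i₂ ⟨i.succ, v⟩ ∉ L := by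
    by_cases his : i ∈ s
    · exact ⟨v₂, h.extra i his ▸ hX u₁, hne v₂ hv₂⟩
    · refine ⟨v₁, h.link_succ i ▸ hX u₀, fun hvL => his ?_⟩
      obtain ⟨-, i', hi', hii'⟩ := h.eq_succ_of_apply_mem hL hvL
      rwa [Fin.succ_injective _ hii']
  refine ⟨hX, fun v' => ?_⟩
  rcases eq_or_ne v' v₁ with rfl | hv'
  · exact h.link_succ i ▸ hX u₀
  · obtain ⟨z, rfl⟩ := exists_smul_eq T₂ v v'
    simpa using hD₂ z _ hvD hv (by simpa using hne _ hv')

theorem forall_mem [IsPretransitive T₁ X₀] [IsPretransitive T₁ X] [IsPretransitive T₂ Y]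
    (h : IsOrbitChain i₁ i₂ s w u₀ u₁ u₂ v₀ v₁ v₂) (hv₂ : v₂ ≠ v₁)
    (hL : L ⊆ (fun i => i₁ (.inr ⟨i, u₀⟩)) '' s) {D : Set Ω}
    (hw : i₁ (.inl w) ∈ D) (hD₁ : ∀ t : T₁, ∀ d ∈ D, permHomOfEmbedding T₁ i₁ t d ∈ D)
    (hD₂ : ∀ z : T₂, ∀ d ∈ D, d ∉ L → permHomOfEmbedding T₂ i₂ z d ∉ L →
      permHomOfEmbedding T₂ i₂ z d ∈ D) (ω : Ω) : ω ∈ D := by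
  have hX₀ (w' : X₀) : i₁ (.inl w') ∈ D := by
    obtain ⟨t, rfl⟩ := exists_smul_eq T₁ w w'
    simpa using hD₁ t _ hw
  have hY₀ (v : Y) : i₂ ⟨0, v⟩ ∈ D := by
    obtain ⟨z, rfl⟩ := exists_smul_eq T₂ v₁ v
    have hnotMem (v : Y) : i₂ ⟨0, v⟩ ∉ L := h.apply_zero_notMem hL v
    simpa using hD₂ z _ (h.base ▸ hw) (hnotMem v₁) (by simpa using hnotMem (z • v₁))
  have hY (l : Fin (k + 1)) : ∀ v, i₂ ⟨l, v⟩ ∈ D := by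
    induction l using Fin.induction with
    | zero => exact hY₀
    | succ i ih => exact (h.forall_mem_succ hv₂ hL hD₁ hD₂ (ih v₀)).2
  obtain ⟨w' | ⟨i, u⟩, rfl⟩ | ⟨⟨l, v⟩, rfl⟩ := h.mem_range ω
  · exact hX₀ w'
  · exact (h.forall_mem_succ hv₂ hL hD₁ hD₂ (hY _ v₀)).1 u
  · exact hY l v

theorem isLinked [IsPreprimitive T₁ X₀] [IsPretransitive T₁ X] [IsPreprimitive T₂ Y]
    (h : IsOrbitChain i₁ i₂ s w u₀ u₁ u₂ v₀ v₁ (y • v₁))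
    (hw : x • w ≠ w) (hu₀ : x • u₀ = u₀) (hu₁ : x • u₁ = u₁) (hv₀ : y • v₀ = v₀)
    (hv₁ : y • v₁ ≠ v₁) (hL : L ⊆ (fun i => i₁ (.inr ⟨i, u₀⟩)) '' s) :
    IsLinked (permHomOfEmbedding T₁ i₁) (permHomOfEmbedding T₂ i₂) x y (i₁ (.inl w)) L where
  isCoatom_left := by
    have : Nontrivial X₀ := ⟨_, _, hw⟩
    have : stabilizer T₁ (Sum.inl w : X₀ ⊕ (Σ _ : Fin k, X)) = stabilizer T₁ w := by ext; simp
    rw [comap_permHomOfEmbedding_stabilizer, this]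
    exact IsPreprimitive.isCoatom_stabilizer_of_isPreprimitive T₁ w
  isCoatom_right := by
    have : Nontrivial Y := ⟨_, _, hv₁⟩
    have : stabilizer T₂ (⟨0, v₁⟩ : Σ _ : Fin (k + 1), Y) = stabilizer T₂ v₁ := by ext; simp
    rw [h.base, comap_permHomOfEmbedding_stabilizer, this]
    exact IsPreprimitive.isCoatom_stabilizer_of_isPreprimitive T₂ v₁
  left_apply_ne := by simp [hw]
  right_apply_ne := by simp [h.base, hv₁]
  eq_of_apply_ne := h.eq_of_apply_ne hu₀ hu₁ hv₀
  left_apply_eq l hl := by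
    obtain ⟨i, -, rfl⟩ := hL hl
    simp [hu₀]
  right_apply_notMem z := by simpa [h.base] using h.apply_zero_notMem hL (z • v₁)
  right_apply_left_apply_notMem z := by
    have hnotMem : i₁ (.inl (x • w)) ∉ Set.range i₂ := by
      rintro ⟨b, hb⟩
      simpa [hw] using h.eq_cases hb.symm
    rw [permHomOfEmbedding_apply, Sum.smul_inl, permHomOfEmbedding_apply_of_notMem i₂ z hnotMem]
    intro hmem
    obtain ⟨i, -, hi⟩ := hL hmem
    simp at hi
  disjoint := by
    refine Set.disjoint_right.2 ?_
    rintro _ ⟨l, hl, rfl⟩ hmem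
    obtain ⟨i, -, rfl⟩ := hL hl
    simp only [h.link_succ, permHomOfEmbedding_apply, Sigma.smul_mk] at hmem
    exact hv₁ (h.eq_succ_of_apply_mem hL hmem).1
  forall_mem _ hω hD₁ hD₂ := h.forall_mem hv₁ hL hω hD₁ hD₂

end IsOrbitChain

end Chain

section Existence

open Equiv MulAction

theorem exists_mul_eq_add {m N : ℕ} (hm : 0 < m) (h : m ^ 2 ≤ N + 1) :
    ∃ k e, 2 ≤ e ∧ e ≤ k ∧ m * k = N + e := by
  set k := (N + m + 1) / m
  have hdiv : m * k + (N + m + 1) % m = N + m + 1 := Nat.div_add_mod ..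
  have hmod : (N + m + 1) % m < m := Nat.mod_lt _ hm
  have hk : m < k := Nat.lt_of_mul_lt_mul_left (a := m) (by rw [← sq]; omega)
  exact ⟨k, m * k - N, by omega, by omega, by omega⟩

theorem exists_add_eq_chain_card {n t₁ t₂ a₀ a b : ℕ} (h : (t₁ + t₂) ^ 2 ≤ n) (ha₀ : a₀ ≤ t₁)
    (ha : 2 < a) (hat : a ≤ t₁) (hb : 2 < b) (hbt : b ≤ t₂) :
    ∃ k e, 2 ≤ e ∧ e ≤ k ∧ n + (1 + (k + (k + e))) = a₀ + k * a + (k + 1) * b := by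
  obtain ⟨a, rfl⟩ := Nat.exists_eq_add_of_lt ha
  obtain ⟨b, rfl⟩ := Nat.exists_eq_add_of_lt hb
  obtain ⟨N, hN⟩ : ∃ N, N + (a₀ + (2 + b + 1)) = n + 1 := ⟨n + 1 - (a₀ + (2 + b + 1)), by
    have : t₁ + t₂ ≤ (t₁ + t₂) ^ 2 := Nat.le_self_pow two_ne_zero _
    omega⟩
  obtain ⟨k, e, he, hek, hk⟩ := exists_mul_eq_add (m := a + b + 4) (N := N) (by omega)
    (by nlinarith)
  exact ⟨k, e, he, hek, by linarith⟩

variable {T₁ T₂ Ω : Type*} [Group T₁] [Group T₂] [Finite Ω]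

theorem exists_isLinked_of_isPreprimitive {X₀ X Y : Type*} [Finite X₀] [Finite X] [Finite Y]
    [MulAction T₁ X₀] [MulAction T₁ X] [MulAction T₂ Y] [IsPreprimitive T₁ X₀]
    [IsPretransitive T₁ X] [IsPreprimitive T₂ Y] {x : T₁} {y : T₂} {w : X₀} {u₀ u₁ u₂ : X}
    {v₀ v₁ : Y} (hw : x • w ≠ w) (hu : u₀ ≠ u₁) (hu₀ : x • u₀ = u₀) (hu₁ : x • u₁ = u₁)
    (hu₂ : x • u₂ ≠ u₂) (hv₀ : y • v₀ = v₀) (hv₁ : y • v₁ ≠ v₁) {t₁ t₂ : ℕ}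
    (hX₀ : Nat.card X₀ ≤ t₁) (hX : Nat.card X ≤ t₁) (hY : Nat.card Y ≤ t₂)
    (hΩ : (t₁ + t₂) ^ 2 ≤ Nat.card Ω) :
    ∃ (ρ₁ : T₁ →* Perm Ω) (ρ₂ : T₂ →* Perm Ω) (ω p r : Ω),
      p ≠ r ∧ IsLinked ρ₁ ρ₂ x y ω {p, r} := by
  obtain ⟨k, e, he, hek, hcard⟩ := exists_add_eq_chain_card hΩ hX₀
    (two_lt_card_of_smul_ne hu₀ hu₂) hX (two_lt_card_of_smul_ne hv₀ hv₁) hY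
  obtain ⟨s, -, rfl⟩ : ∃ s ⊆ (Finset.univ : Finset (Fin k)), s.card = e :=
    Finset.exists_subset_card_eq (by simpa using hek)
  have hu_nodup : [u₀, u₁, u₂].Nodup := by
    have h₀ : u₀ ≠ u₂ := by rintro rfl; exact hu₂ hu₀
    have h₁ : u₁ ≠ u₂ := by rintro rfl; exact hu₂ hu₁
    simp [hu, h₀, h₁]
  have hv_nodup : [v₀, v₁, y • v₁].Nodup := by
    have h₁ : v₀ ≠ v₁ := by rintro rfl; exact hv₁ hv₀
    have h₂ : v₀ ≠ y • v₁ := fun h => h₁ (smul_left_cancel y (hv₀.trans h))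
    simp [h₁, h₂, hv₁.symm]
  obtain ⟨i₁, i₂, h⟩ := exists_isOrbitChain (Ω := Ω) s w hu_nodup hv_nodup hcard
  obtain ⟨j, hj, j', hj', hjj'⟩ := Finset.one_lt_card.1 he
  refine ⟨_, _, _, i₁ (.inr ⟨j, u₀⟩), i₁ (.inr ⟨j', u₀⟩), by simpa using hjj',
    h.isLinked hw hu₀ hu₁ hv₀ hv₁ ?_⟩
  rintro _ (rfl | rfl)
  exacts [⟨j, hj, rfl⟩, ⟨j', hj', rfl⟩]

theorem exists_isCoatom_mem [Finite T₁] {x t : T₁} (ht : t ∉ Subgroup.zpowers x) :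
    ∃ A : Subgroup T₁, IsCoatom A ∧ x ∈ A := by
  obtain h | ⟨A, hA, hxA⟩ := eq_top_or_exists_le_coatom (Subgroup.zpowers x)
  · exact absurd (h ▸ Subgroup.mem_top t) ht
  · exact ⟨A, hA, hxA (Subgroup.mem_zpowers x)⟩

theorem exists_isLinked [Finite T₁] [Finite T₂] [IsSimpleGroup T₁] [IsSimpleGroup T₂]
    (hT₁ : ¬ ∀ a b : T₁, a * b = b * a) (hT₂ : ¬ ∀ a b : T₂, a * b = b * a)
    (hΩ : (Nat.card T₁ + Nat.card T₂) ^ 2 ≤ Nat.card Ω) :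
    ∃ (ρ₁ : T₁ →* Perm Ω) (ρ₂ : T₂ →* Perm Ω) (x : T₁) (y : T₂) (ω p r : Ω),
      p ≠ r ∧ IsLinked ρ₁ ρ₂ x y ω {p, r} := by
  obtain ⟨x, t, hx, hxt, ht⟩ :=
    exists_commute_notMem_zpowers_s2 (mt IsSimpleGroup.comm_iff_isSolvable.2 hT₁)
  obtain ⟨y, t', hy, -, ht'⟩ :=
    exists_commute_notMem_zpowers_s2 (mt IsSimpleGroup.comm_iff_isSolvable.2 hT₂)
  obtain ⟨A, hA, -⟩ := exists_isCoatom_mem ht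
  obtain ⟨B, hB, hyB⟩ := exists_isCoatom_mem ht'
  have := isPreprimitive_quotient_of_isCoatom hA
  have := isPreprimitive_quotient_of_isCoatom hB
  have := QuotientGroup.nontrivial_iff.2 hA.1
  have := QuotientGroup.nontrivial_iff.2 hB.1
  have : Nontrivial (T₁ ⧸ Subgroup.zpowers x) :=
    QuotientGroup.nontrivial_iff.2 fun h => ht (h ▸ Subgroup.mem_top t)
  obtain ⟨w, hw⟩ := exists_smul_ne (X := T₁ ⧸ A) hx
  obtain ⟨u₂, hu₂⟩ := exists_smul_ne (X := T₁ ⧸ Subgroup.zpowers x) hx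
  obtain ⟨v₁, hv₁⟩ := exists_smul_ne (X := T₂ ⧸ B) hy
  have hne : ((1 : T₁) : T₁ ⧸ Subgroup.zpowers x) ≠ t := by simpa [QuotientGroup.eq] using ht
  have hxx := Subgroup.mem_zpowers x
  obtain ⟨ρ₁, ρ₂, h⟩ := exists_isLinked_of_isPreprimitive hw hne
    (smul_mk_eq_of_commute hxx (.one_right x)) (smul_mk_eq_of_commute hxx hxt) hu₂
    (smul_mk_eq_of_commute hyB (.one_right y)) hv₁ (card_quotient_le A)
    (card_quotient_le _) (card_quotient_le B) hΩ
  exact ⟨ρ₁, ρ₂, x, y, h⟩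

end Existence

theorem stmt_2_general {T₁ T₂ ι K : Type*} [Group T₁] [Group T₂] [Finite T₁] [Finite T₂]
    [IsSimpleGroup T₁] [IsSimpleGroup T₂] (hT₁ : ¬ ∀ x y : T₁, x * y = y * x)
    (hT₂ : ¬ ∀ x y : T₂, x * y = y * x) [Fintype ι] [DecidableEq ι] [Field K] [Finite K]
    (hι : (Nat.card T₁ + Nat.card T₂) ^ 2 ≤ Nat.card ι) :
    ∃ H₁ H₂ : Subgroup
        (Matrix.SpecialLinearGroup ι K ⧸ Subgroup.center (Matrix.SpecialLinearGroup ι K)),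
      Nonempty (H₁ ≃* T₁) ∧ Nonempty (H₂ ≃* T₂) ∧ H₁ ⊔ H₂ = ⊤ := by
  obtain ⟨ρ₁, ρ₂, x, y, ω, p, r, hpr, h⟩ := exists_isLinked (Ω := ι) hT₁ hT₂ hι
  obtain ⟨ρ₁, rfl⟩ := exists_alternatingGroup_subtype_comp_eq hT₁ ρ₁
  obtain ⟨ρ₂, rfl⟩ := exists_alternatingGroup_subtype_comp_eq hT₂ ρ₂
  obtain ⟨c, hc⟩ := IsCyclic.exists_monoid_generator (α := Kˣ)
  have hcard : 6 ≤ Fintype.card ι := by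
    have h₁ := Finite.one_lt_card (α := T₁)
    have h₂ := Finite.one_lt_card (α := T₂)
    rw [← Nat.card_eq_fintype_card]
    nlinarith
  refine exists_sup_eq_top_quotient_center hT₁ hT₂ ?_ ?_ (h.range_sup_range_eq_top hpr hcard hc)
  · refine evenPermMatrixHom_injective.comp ((injective_or_eq_one ρ₁).resolve_right ?_)
    rintro rfl
    exact h.left_apply_ne rfl
  · refine (MulAut.conj _).injective.comp
      (evenPermMatrixHom_injective.comp ((injective_or_eq_one ρ₂).resolve_right ?_))
    rintro rfl
    exact h.right_apply_ne rfl

/-- Type-A case of Theorem 2.1(i): there is a function `f : ℕ → ℕ → ℕ` such that for any two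
finite non-abelian simple groups `T₁, T₂` of orders `t₁, t₂`, every `n > f t₁ t₂` and every
finite field `K`, the projective special linear group `PSL_n(K)` is generated by a copy of
`T₁` and a copy of `T₂`. -/
theorem stmt_2 :
    ∃ f : ℕ → ℕ → ℕ,
      ∀ (T₁ T₂ : Type) [Group T₁] [Group T₂] [Finite T₁] [Finite T₂]
        [IsSimpleGroup T₁] [IsSimpleGroup T₂],
        (¬ ∀ x y : T₁, x * y = y * x) → (¬ ∀ x y : T₂, x * y = y * x) →
        ∀ n : ℕ, n > f (Nat.card T₁) (Nat.card T₂) →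
          ∀ (K : Type) [Field K] [Fintype K],
            ∃ H₁ H₂ : Subgroup
                (Matrix.SpecialLinearGroup (Fin n) K ⧸
                  Subgroup.center (Matrix.SpecialLinearGroup (Fin n) K)),
              Nonempty (H₁ ≃* T₁) ∧ Nonempty (H₂ ≃* T₂) ∧ H₁ ⊔ H₂ = ⊤ :=
  ⟨fun t₁ t₂ => (t₁ + t₂) ^ 2, fun _ _ _ _ _ _ _ _ hT₁ hT₂ _ hn _ _ _ =>
    stmt_2_general hT₁ hT₂ (by simpa using hn.le)⟩
end

section
/- Let G be a group that has at least one finite non-abelian simple group among its quotients (i.e. there is a surjective homomorphism from G onto some finite simple non-commutative group). Then the set of natural numbers n for which there exists a surjective homomorphism from the free product G * G onto the alternating group Alt(n) is infinite. -/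
/-!
A perfect group acts by even permutations, so it suffices to let `S` act on one finite set in two
ways such that the two images generate a transitive group of prime degree containing a 3-cycle:
transitive groups of prime degree are primitive, and by Jordan's theorem a primitive group with a
3-cycle contains the alternating group.

Delete one point from `n + 1` copies of `S`; by Dirichlet's theorem the size `(n + 1) * |S| - 1` is
prime for infinitely many `n`. The first action multiplies on the left in the first `n` copies and
fixes the rest. The second is its conjugate under a shear between the copies. Fix `a ≠ 1` in `S`.
The shear is chosen so that the two permutations given by `a` commute away from an invariant set on
which a single point is moved by both, and the commutator of two permutations whose supports share
exactly one point is a 3-cycle. Since `S` is not cyclic, the shear is still free to link consecutive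
copies at the elements outside `⟨a⟩`, which gives transitivity.
-/

open Equiv Equiv.Perm MulAction
open scoped commutatorElement

section Commutator

variable {α : Type*} {f g : Perm α} {o : α}

theorem perm_apply_mem_iff_of_mapsTo {U : Set α} [Finite U] (hf : Set.MapsTo f U U) {x : α} :
    f x ∈ U ↔ x ∈ U :=
  ⟨fun hx => f.symm_apply_apply x ▸ perm_symm_mapsTo_of_mapsTo f hf hx, @hf x⟩

variable [DecidableEq α]

theorem commutator_eq_swap_mul_swap_s3 (h : ∀ x, x ≠ o → f x = x ∨ g x = x)
    (hf : f o ≠ o) (hg : g o ≠ o) : ⁅f, g⁆ = swap o (g o) * swap o (f o) := by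
  have hgf : g (f o) = f o := (h _ hf).resolve_left fun e => hf (f.injective e)
  have hfg : f (g o) = g o := (h _ hg).resolve_right fun e => hg (g.injective e)
  rw [commutatorElement_def, mul_assoc, ← mul_inv_rev, mul_inv_eq_iff_eq_mul]
  ext x
  simp only [Perm.mul_apply]
  obtain rfl | hx := eq_or_ne x o
  · rw [hfg, hgf, swap_apply_right, swap_apply_left]
  · grind [f.injective.eq_iff, g.injective.eq_iff]

theorem isThreeCycle_commutator_s3 [Fintype α] (h : ∀ x, x ≠ o → f x = x ∨ g x = x)
    (hf : f o ≠ o) (hg : g o ≠ o) : IsThreeCycle ⁅f, g⁆ := by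
  have hne : f o ≠ g o := fun e =>
    (h _ hf).elim (fun h' => hf (f.injective h')) fun h' => hf (g.injective (h'.trans e))
  rw [commutator_eq_swap_mul_swap_s3 h hf hg]
  exact isThreeCycle_swap_mul_swap_same hg.symm hf.symm hne.symm

theorem isThreeCycle_commutator_of_mapsTo [Fintype α] {U : Set α} (hfU : Set.MapsTo f U U)
    (hgU : Set.MapsTo g U U) (ho : o ∈ U) (hcomm : ∀ x ∉ U, f (g x) = g (f x))
    (h : ∀ x ∈ U, x ≠ o → f x = x ∨ g x = x) (hf : f o ≠ o) (hg : g o ≠ o) :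
    IsThreeCycle ⁅f, g⁆ := by
  classical
  have hfU_iff (x) : f x ∈ U ↔ x ∈ U := perm_apply_mem_iff_of_mapsTo hfU
  have hgU_iff (x) : g x ∈ U ↔ x ∈ U := perm_apply_mem_iff_of_mapsTo hgU
  have hU : Set.MapsTo (⇑⁅f, g⁆) U U :=
    (hfU.comp hgU).comp <|
      (perm_symm_mapsTo_of_mapsTo f hfU).comp (perm_symm_mapsTo_of_mapsTo g hgU)
  have hoff : ∀ x, ⁅f, g⁆ x ≠ x → x ∈ U := fun x => by
    contrapose!
    intro hx
    have := hcomm (f⁻¹ (g⁻¹ x)) (mt (fun h => by simpa using hgU (hfU h)) hx)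
    simpa [commutatorElement_def] using this
  rw [← ofSubtype_subtypePerm (fun _ => perm_apply_mem_iff_of_mapsTo hU) hoff, IsThreeCycle,
    cycleType_ofSubtype]
  exact isThreeCycle_commutator_s3 (f := f.subtypePerm hfU_iff) (g := g.subtypePerm hgU_iff)
    (o := ⟨o, ho⟩)
    (fun x hx => by simpa [Subtype.ext_iff] using h x x.2 (by simpa [Subtype.ext_iff] using hx))
    (by simpa [Subtype.ext_iff] using hf) (by simpa [Subtype.ext_iff] using hg)

end Commutator

section Alternating

variable {α : Type*} [Fintype α] [DecidableEq α]

theorem range_le_alternatingGroup {S : Type*} [Group S] [Group.IsPerfect S] (f : S →* Perm α) :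
    f.range ≤ alternatingGroup α := by
  rintro _ ⟨s, rfl⟩
  exact Abelianization.commutator_subset_ker (sign.comp f) Group.IsPerfect.mem_commutator

theorem eq_alternatingGroup_of_prime_card {H : Subgroup (Perm α)} [IsPretransitive H α]
    (hα : (Nat.card α).Prime) (hH : H ≤ alternatingGroup α) {σ : Perm α} (hσ : IsThreeCycle σ)
    (hσH : σ ∈ H) : H = alternatingGroup α :=
  hH.antisymm <| alternatingGroup_le_of_isPreprimitive_of_isThreeCycle_mem
    (IsPreprimitive.of_prime_card hα) hσ hσH

theorem exists_surjective_alternatingGroup_fin {K : Type*} [Group K] {f : K →* Perm α}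
    (hf : f.range = alternatingGroup α) :
    ∃ ψ : K →* alternatingGroup (Fin (Nat.card α)), Function.Surjective ψ :=
  let e := (MulEquiv.subgroupCongr hf).trans (altCongrHom (Finite.equivFin α))
  ⟨e.toMonoidHom.comp f.rangeRestrict, e.surjective.comp f.rangeRestrict_surjective⟩

end Alternating

theorem isPerfect_of_isSimpleGroup_s3 {S : Type*} [Group S] [IsSimpleGroup S]
    (hna : ¬ IsMulCommutative S) : Group.IsPerfect S :=
  ⟨(inferInstance : (commutator S).Normal).eq_bot_or_eq_top.resolve_left
    (mt (commutator_eq_bot_iff S).1 hna)⟩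

theorem zpowers_ne_top {S : Type*} [Group S] [Group.IsPerfect S] [Nontrivial S] (a : S) :
    Subgroup.zpowers a ≠ ⊤ := fun h =>
  have : IsCyclic S := isCyclic_iff_exists_zpowers_eq_top.2 ⟨a, h⟩
  Group.IsPerfect.not_isMulCommutative S inferInstance

theorem coprod_map_surjective {G H K L : Type*} [Group G] [Group H] [Group K] [Group L]
    {φ : G →* K} {ψ : H →* L} (hφ : Function.Surjective φ) (hψ : Function.Surjective ψ) :
    Function.Surjective (Monoid.Coprod.map φ ψ) := by
  rw [← MonoidHom.range_eq_top] at *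
  rw [Monoid.Coprod.range_eq, Monoid.Coprod.map_comp_inl, Monoid.Coprod.map_comp_inr,
    MonoidHom.range_comp, MonoidHom.range_comp, hφ, hψ, ← MonoidHom.range_eq_map,
    ← MonoidHom.range_eq_map, Monoid.Coprod.range_inl_sup_range_inr]

theorem exists_prime_succ_mul_sub_one_gt {d : ℕ} (hd : d ≠ 0) (B : ℕ) :
    ∃ n ≠ 0, ((n + 1) * d - 1).Prime ∧ B < (n + 1) * d - 1 := by
  have : NeZero d := ⟨hd⟩
  obtain ⟨p, hpB, hp, hpmod⟩ :=
    Nat.forall_exists_prime_gt_and_eq_mod (q := d) (a := -1) isUnit_one.neg (max B d)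
  obtain ⟨k, hk⟩ : d ∣ p + 1 := by
    rw [← ZMod.natCast_eq_zero_iff, Nat.cast_add, hpmod, Nat.cast_one, neg_add_cancel]
  have hk1 : 1 < k := lt_of_mul_lt_mul_left (a := d) (by grind) (by grind)
  have hpk : (k - 1 + 1) * d - 1 = p := by
    rw [Nat.sub_add_cancel hk1.le, mul_comm, ← hk, Nat.add_sub_cancel]
  exact ⟨k - 1, by grind, by rwa [hpk], by grind⟩

/-- `n + 1` copies of `S` with the identity of the last copy removed. The deleted point makes room
for exactly `n` disjoint regular orbits of `S`, in several different ways. -/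
abbrev PuncturedCopies (n : ℕ) (S : Type*) [One S] : Type _ :=
  {x : Fin (n + 1) × S // x ≠ (Fin.last n, 1)}

theorem card_puncturedCopies (n : ℕ) (S : Type*) [One S] [Finite S] :
    Nat.card (PuncturedCopies n S) = (n + 1) * Nat.card S - 1 := by
  classical
  have := Fintype.ofFinite S
  rw [Nat.card_eq_fintype_card, Fintype.card_subtype_compl, Fintype.card_prod, Fintype.card_fin,
    Fintype.card_subtype_eq, Nat.card_eq_fintype_card]

section RegularVia

variable {ι S Ω : Type*} [Group S]

/-- The action of `S` on `Ω` by left multiplication on the regular orbits `e ({i} × S)`, fixing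
every point outside the range of `e`. -/
noncomputable def regularVia (e : ι × S ↪ Ω) : S →* Perm Ω :=
  (viaEmbeddingHom e).comp
    { toFun s := prodCongrRight fun _ => Equiv.mulLeft s
      map_one' := by ext x <;> simp
      map_mul' s t := by ext x <;> simp }

theorem regularVia_apply (e : ι × S ↪ Ω) (s : S) (x : ι × S) :
    regularVia e s (e x) = e (x.1, s * x.2) := by
  simp [regularVia, viaEmbeddingHom_apply, viaEmbedding_apply, prodCongrRight]

theorem regularVia_apply_of_notMem_range (e : ι × S ↪ Ω) (s : S) {x : Ω} (hx : x ∉ Set.range e) :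
    regularVia e s x = x :=
  viaEmbedding_apply_of_notMem _ _ _ hx

theorem orbit_regularVia {e : ι × S ↪ Ω} {H : Subgroup (Perm Ω)} (hH : (regularVia e).range ≤ H)
    (i : ι) (s : S) : orbit H (e (i, s)) = orbit H (e (i, 1)) :=
  orbit_eq_iff.2
    ⟨⟨regularVia e s, hH ⟨s, rfl⟩⟩, by simp [Subgroup.smul_def, regularVia_apply]⟩

end RegularVia

namespace PuncturedCopies

section Shear

variable {n : ℕ} {S : Type*} [Group S] (c : S → Perm (Fin (n + 1))) (hc : c 1 = 1)

/-- The embedding of `n` copies of `S` which permutes the elements with `S`-coordinate `t` between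
the `n + 1` copies by `c t`. -/
def shear : Fin n × S ↪ PuncturedCopies n S where
  toFun x := ⟨(c x.2 x.1.castSucc, x.2), by
    intro h
    obtain ⟨h₁, h₂⟩ := Prod.mk.inj h
    exact x.1.castSucc_ne_last (by rwa [h₂, hc] at h₁)⟩
  inj' := by
    rintro ⟨i, s⟩ ⟨j, t⟩ h
    obtain ⟨hij, rfl : s = t⟩ := Prod.mk.inj (congrArg Subtype.val h)
    exact Prod.ext (Fin.castSucc_injective n ((c s).injective hij)) rfl

@[simp]
theorem coe_shear (i : Fin n) (s : S) :
    (shear c hc (i, s) : Fin (n + 1) × S) = (c s i.castSucc, s) := rfl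

variable {c} {hc}

theorem regularVia_shear_apply {x : PuncturedCopies n S} {i : Fin n}
    (hx : x.1.1 = c x.1.2 i.castSucc) (s : S) :
    (regularVia (shear c hc) s x : Fin (n + 1) × S) = (c (s * x.1.2) i.castSucc, s * x.1.2) := by
  obtain ⟨⟨j, t⟩, h⟩ := x
  obtain rfl : j = c t i.castSucc := hx
  exact congrArg Subtype.val (regularVia_apply (shear c hc) s (i, t))

theorem regularVia_shear_apply_of_eq_last {x : PuncturedCopies n S}
    (hx : x.1.1 = c x.1.2 (Fin.last n)) (s : S) : regularVia (shear c hc) s x = x := by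
  refine regularVia_apply_of_notMem_range _ s ?_
  rintro ⟨⟨i, t⟩, rfl⟩
  exact i.castSucc_ne_last ((c t).injective hx)

theorem exists_shear_eq {x : PuncturedCopies n S} (hx : x.1.1 ≠ c x.1.2 (Fin.last n)) :
    ∃ i, shear c hc (i, x.1.2) = x := by
  obtain ⟨i, hi⟩ := Fin.exists_castSucc_eq.2 (mt (symm_apply_eq (c x.1.2)).1 hx)
  exact ⟨i, Subtype.ext (Prod.ext ((symm_apply_eq _).1 hi.symm).symm rfl)⟩

end Shear

section Twist

open Classical in
/-- How the second action of `S` shears the `n + 1` copies at the coordinate `t`: the identity stays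
put, the other powers of `a` exchange the first and the last copy, and everything else moves on to
the next copy, which is what makes the two actions together transitive. -/
noncomputable def twist {n : ℕ} {S : Type*} [Group S] (a t : S) : Perm (Fin (n + 1)) :=
  if t = 1 then 1 else if t ∈ Subgroup.zpowers a then swap 0 (Fin.last n) else finRotate (n + 1)

variable {n : ℕ} {S : Type*} [Group S] {a t : S}

theorem twist_one (a : S) : (twist a 1 : Perm (Fin (n + 1))) = 1 := if_pos rfl

theorem twist_of_mem (h1 : t ≠ 1) (ht : t ∈ Subgroup.zpowers a) :
    twist a t = swap 0 (Fin.last n) := by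
  rw [twist, if_neg h1, if_pos ht]

theorem twist_of_notMem (ht : t ∉ Subgroup.zpowers a) : twist a t = finRotate (n + 1) := by
  rw [twist, if_neg (ne_of_mem_of_not_mem (one_mem _) ht).symm, if_neg ht]

theorem twist_last (h1 : t ≠ 1) : twist a t (Fin.last n) = 0 := by
  by_cases ht : t ∈ Subgroup.zpowers a
  · rw [twist_of_mem h1 ht, swap_apply_right]
  · rw [twist_of_notMem ht, finRotate_last]

theorem twist_apply_of_mem (ht : t ∈ Subgroup.zpowers a) {i : Fin (n + 1)} (h0 : i ≠ 0)
    (hl : i ≠ Fin.last n) : twist a t i = i := by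
  obtain rfl | h1 := eq_or_ne t 1
  · rw [twist_one, one_apply]
  · rw [twist_of_mem h1 ht, swap_apply_of_ne_of_ne h0 hl]

theorem twist_zero_of_mem (ht : t ∈ Subgroup.zpowers a) :
    twist a t (0 : Fin (n + 1)) = 0 ∨ twist a t (0 : Fin (n + 1)) = Fin.last n := by
  obtain rfl | h1 := eq_or_ne t 1
  · exact .inl (by rw [twist_one, one_apply])
  · exact .inr (by rw [twist_of_mem h1 ht, swap_apply_left])

end Twist

section Actions

variable {n : ℕ} {S : Type*} [Group S]

/-- The action of `S` on its punctured copies by left multiplication in all copies but the last. -/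
noncomputable def straightAction (n : ℕ) (S : Type*) [Group S] : S →* Perm (PuncturedCopies n S) :=
  regularVia (shear 1 rfl)

/-- The action of `S` on its punctured copies with orbits sheared by `twist a`. -/
noncomputable def twistedAction (n : ℕ) (a : S) : S →* Perm (PuncturedCopies n S) :=
  regularVia (shear (twist a) (twist_one a))

theorem straightAction_apply {x : PuncturedCopies n S} (hx : x.1.1 ≠ Fin.last n) (s : S) :
    (straightAction n S s x : Fin (n + 1) × S) = (x.1.1, s * x.1.2) := by
  obtain ⟨i, hi⟩ := Fin.exists_castSucc_eq.2 hx
  rw [← hi]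
  exact regularVia_shear_apply hi.symm s

theorem straightAction_apply_of_eq_last {x : PuncturedCopies n S} (hx : x.1.1 = Fin.last n)
    (s : S) : straightAction n S s x = x :=
  regularVia_shear_apply_of_eq_last hx s

variable {a : S} {x : PuncturedCopies n S}

theorem snd_ne_one (hx : x.1.1 = Fin.last n) : x.1.2 ≠ 1 := fun h => x.2 (Prod.ext hx h)

theorem twistedAction_apply_of_eq_zero (h0 : x.1.1 = 0) (h1 : x.1.2 ≠ 1) (s : S) :
    twistedAction n a s x = x :=
  regularVia_shear_apply_of_eq_last (by rw [h0, twist_last h1]) s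

theorem twistedAction_apply {i : Fin (n + 1)} (hi : i ≠ Fin.last n) (hx : x.1.1 = twist a x.1.2 i)
    (s : S) :
    (twistedAction n a s x : Fin (n + 1) × S) = (twist a (s * x.1.2) i, s * x.1.2) := by
  obtain ⟨i, rfl⟩ := Fin.exists_castSucc_eq.2 hi
  exact regularVia_shear_apply hx s

theorem twistedAction_apply_of_eq_last [NeZero n] (hx : x.1.1 = Fin.last n)
    (hxa : x.1.2 ∈ Subgroup.zpowers a) (s : S) :
    (twistedAction n a s x : Fin (n + 1) × S) = (twist a (s * x.1.2) 0, s * x.1.2) :=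
  twistedAction_apply Fin.last_pos'.ne
    (by rw [hx, twist_of_mem (snd_ne_one hx) hxa, swap_apply_left]) s

theorem twistedAction_self_apply (h0 : x.1.1 ≠ 0)
    (hl : x.1.2 ∈ Subgroup.zpowers a → x.1.1 ≠ Fin.last n) :
    (twistedAction n a a x : Fin (n + 1) × S) = (x.1.1, a * x.1.2) := by
  have ha : a ∈ Subgroup.zpowers a := Subgroup.mem_zpowers a
  by_cases hxa : x.1.2 ∈ Subgroup.zpowers a
  · rw [twistedAction_apply (hl hxa) (twist_apply_of_mem hxa h0 (hl hxa)).symm,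
      twist_apply_of_mem (mul_mem ha hxa) h0 (hl hxa)]
  · have hax : a * x.1.2 ∉ Subgroup.zpowers a := mt (Subgroup.mul_mem_cancel_left _ ha).1 hxa
    set i := (finRotate (n + 1)).symm x.1.1
    have hix : finRotate (n + 1) i = x.1.1 := apply_symm_apply ..
    have hil : i ≠ Fin.last n := fun h => h0 (by rw [← hix, h, finRotate_last])
    rw [twistedAction_apply hil (by rw [twist_of_notMem hxa, hix]), twist_of_notMem hax, hix]

end Actions

section ThreeCycle

variable {n : ℕ} {S : Type*} [Group S] {a : S}

/-- The powers of `a` in the first and in the last copy, where the two actions of `a` interfere. -/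
def core (n : ℕ) (a : S) : Set (PuncturedCopies n S) :=
  {x | x.1.2 ∈ Subgroup.zpowers a ∧ (x.1.1 = 0 ∨ x.1.1 = Fin.last n)}

theorem straightAction_mapsTo_core : Set.MapsTo (straightAction n S a) (core n a) (core n a) := by
  rintro x ⟨hxa, hx⟩
  by_cases hl : x.1.1 = Fin.last n
  · rw [straightAction_apply_of_eq_last hl]
    exact ⟨hxa, hx⟩
  · rw [core, Set.mem_ofPred, straightAction_apply hl]
    exact ⟨mul_mem (Subgroup.mem_zpowers a) hxa, hx⟩

/-- The identity of the first copy. -/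
def origin (n : ℕ) [NeZero n] (S : Type*) [One S] : PuncturedCopies n S :=
  ⟨(0, 1), fun h => Fin.last_pos'.ne (congrArg Prod.fst h)⟩

variable [NeZero n]

theorem twistedAction_origin (s : S) :
    (twistedAction n a s (origin n S) : Fin (n + 1) × S) = (twist a s 0, s) := by
  have := twistedAction_apply (x := origin n S) (a := a) Fin.last_pos'.ne
    (by simp [origin, twist_one]) s
  simpa [origin] using this

theorem twistedAction_mapsTo_core : Set.MapsTo (twistedAction n a a) (core n a) (core n a) := by
  have ha : a ∈ Subgroup.zpowers a := Subgroup.mem_zpowers a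
  rintro x ⟨hxa, h0 | hl⟩
  · by_cases h1 : x.1.2 = 1
    · obtain rfl : x = origin n S := Subtype.ext (Prod.ext h0 h1)
      rw [core, Set.mem_ofPred, twistedAction_origin]
      exact ⟨ha, twist_zero_of_mem ha⟩
    · rw [twistedAction_apply_of_eq_zero h0 h1]
      exact ⟨hxa, .inl h0⟩
  · rw [core, Set.mem_ofPred, twistedAction_apply_of_eq_last hl hxa]
    exact ⟨mul_mem ha hxa, twist_zero_of_mem (mul_mem ha hxa)⟩

theorem straightAction_twistedAction_comm {x : PuncturedCopies n S} (hx : x ∉ core n a) :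
    straightAction n S a (twistedAction n a a x) =
      twistedAction n a a (straightAction n S a x) := by
  have hcore : x.1.2 ∈ Subgroup.zpowers a → x.1.1 ≠ 0 ∧ x.1.1 ≠ Fin.last n := fun h => by
    simpa [core, h] using hx
  have hax : a * x.1.2 ∈ Subgroup.zpowers a → x.1.2 ∈ Subgroup.zpowers a :=
    (Subgroup.mul_mem_cancel_left _ (Subgroup.mem_zpowers a)).1
  by_cases h0 : x.1.1 = 0
  · have hl : x.1.1 ≠ Fin.last n := h0 ▸ Fin.last_pos'.ne
    have hα := straightAction_apply hl a
    have hxa : x.1.2 ∉ Subgroup.zpowers a := fun h => (hcore h).1 h0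
    rw [twistedAction_apply_of_eq_zero h0 (ne_of_mem_of_not_mem (one_mem _) hxa).symm,
      twistedAction_apply_of_eq_zero (by rw [hα, h0])]
    rw [hα]
    exact (ne_of_mem_of_not_mem (one_mem _) (mt hax hxa)).symm
  have hβ := twistedAction_self_apply h0 fun h => (hcore h).2
  by_cases hl : x.1.1 = Fin.last n
  · rw [straightAction_apply_of_eq_last hl, straightAction_apply_of_eq_last (by rw [hβ, hl])]
  · have hα := straightAction_apply hl a
    have hαβ := straightAction_apply (x := twistedAction n a a x) (by rwa [hβ]) a
    have hβα := twistedAction_self_apply (x := straightAction n S a x) (a := a) (by rwa [hα])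
      fun _ => by rwa [hα]
    exact Subtype.ext (by rw [hαβ, hβα, hα, hβ])

theorem isThreeCycle_commutator_straightAction_twistedAction
    [Fintype (PuncturedCopies n S)] [DecidableEq (PuncturedCopies n S)] (ha : a ≠ 1) :
    IsThreeCycle ⁅straightAction n S a, twistedAction n a a⁆ := by
  refine isThreeCycle_commutator_of_mapsTo (o := origin n S) straightAction_mapsTo_core
    twistedAction_mapsTo_core ⟨one_mem _, .inl rfl⟩
    (fun x hx => straightAction_twistedAction_comm hx) ?_ ?_ ?_
  · rintro x ⟨-, h0 | hl⟩ hx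
    · exact .inr (twistedAction_apply_of_eq_zero h0 (fun h1 => hx (Subtype.ext (Prod.ext h0 h1))) a)
    · exact .inl (straightAction_apply_of_eq_last hl a)
  · intro h
    have := straightAction_apply (x := origin n S) Fin.last_pos'.ne a
    rw [h] at this
    simpa [origin, ha.symm] using congrArg Prod.snd this
  · intro h
    have := twistedAction_origin (n := n) (a := a) a
    rw [h] at this
    exact ha (congrArg Prod.snd this).symm

end ThreeCycle

section Generation

variable {n : ℕ} {S : Type*} [Group S] {a : S}

theorem isPretransitive_straightAction_sup_twistedAction [NeZero n] (ha : Subgroup.zpowers a ≠ ⊤) :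
    IsPretransitive ↥((straightAction n S).range ⊔ (twistedAction n a).range)
      (PuncturedCopies n S) := by
  set H := (straightAction n S).range ⊔ (twistedAction n a).range
  let e₁ : Fin n × S ↪ PuncturedCopies n S := shear 1 rfl
  let e₂ : Fin n × S ↪ PuncturedCopies n S := shear (twist a) (twist_one a)
  have orbit_e₁ (i : Fin n) (t : S) : orbit H (e₁ (i, t)) = orbit H (e₁ (i, 1)) :=
    orbit_regularVia (H := H) le_sup_left i t
  have orbit_e₂ (i : Fin n) (t : S) : orbit H (e₂ (i, t)) = orbit H (e₁ (i, 1)) :=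
    (orbit_regularVia (H := H) le_sup_right i t).trans
      (congrArg _ (Subtype.ext (Prod.ext (by simp [e₁, twist_one]) rfl)))
  obtain ⟨b, hb⟩ : ∃ b, b ∉ Subgroup.zpowers a := by simpa [Subgroup.eq_top_iff'] using ha
  have orbit_succ (i : ℕ) (hi : i + 1 < n) :
      orbit H (e₁ (⟨i + 1, hi⟩, 1)) = orbit H (e₁ (⟨i, by lia⟩, 1)) := by
    have hij : twist a b (Fin.castSucc ⟨i, by lia⟩) = Fin.castSucc ⟨i + 1, hi⟩ := by
      rw [twist_of_notMem hb]
      exact finRotate_of_lt (by lia)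
    have : e₂ (⟨i, by lia⟩, b) = e₁ (⟨i + 1, hi⟩, b) := Subtype.ext (Prod.ext hij rfl)
    rw [← orbit_e₁ _ b, ← this, orbit_e₂]
  have orbit_zero (i : ℕ) (hi : i < n) :
      orbit H (e₁ (⟨i, hi⟩, 1)) = orbit H (e₁ (⟨0, NeZero.pos n⟩, 1)) := by
    induction i with
    | zero => rfl
    | succ i ih => rw [orbit_succ, ih]
  refine (isPretransitive_iff_orbit_eq_univ (e₁ (⟨0, NeZero.pos n⟩, 1))).2
    (Set.eq_univ_of_forall fun x => ?_)
  rw [← orbit_eq_iff]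
  by_cases hx : x.1.1 = Fin.last n
  · obtain ⟨i, hi⟩ : ∃ i, e₂ (i, x.1.2) = x :=
      exists_shear_eq (by rw [hx, twist_last (snd_ne_one hx)]; exact Fin.last_pos'.ne')
    rw [← hi, orbit_e₂, orbit_zero]
  · obtain ⟨i, hi⟩ : ∃ i, e₁ (i, x.1.2) = x := exists_shear_eq hx
    rw [← hi, orbit_e₁, orbit_zero]

theorem range_sup_range_eq_alternatingGroup [Group.IsPerfect S] [NeZero n]
    [Fintype (PuncturedCopies n S)] [DecidableEq (PuncturedCopies n S)] (h1 : a ≠ 1)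
    (ha : Subgroup.zpowers a ≠ ⊤) (hp : (Nat.card (PuncturedCopies n S)).Prime) :
    (straightAction n S).range ⊔ (twistedAction n a).range =
      alternatingGroup (PuncturedCopies n S) := by
  set H := (straightAction n S).range ⊔ (twistedAction n a).range
  have : IsPretransitive H (PuncturedCopies n S) :=
    isPretransitive_straightAction_sup_twistedAction ha
  have hα : straightAction n S a ∈ H := Subgroup.mem_sup_left ⟨a, rfl⟩
  have hβ : twistedAction n a a ∈ H := Subgroup.mem_sup_right ⟨a, rfl⟩
  exact eq_alternatingGroup_of_prime_card hp
    (sup_le (range_le_alternatingGroup _) (range_le_alternatingGroup _))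
    (isThreeCycle_commutator_straightAction_twistedAction h1)
    (mul_mem (mul_mem (mul_mem hα hβ) (inv_mem hα)) (inv_mem hβ))

end Generation

end PuncturedCopies

open PuncturedCopies in
theorem exists_surjective_coprod_alternatingGroup {S : Type*} [Group S] [Finite S] [Nontrivial S]
    [Group.IsPerfect S] {n : ℕ} (hn : n ≠ 0) (hp : ((n + 1) * Nat.card S - 1).Prime) :
    ∃ χ : Monoid.Coprod S S →* alternatingGroup (Fin ((n + 1) * Nat.card S - 1)),
      Function.Surjective χ := by
  classical
  have := NeZero.mk hn
  have := Fintype.ofFinite (PuncturedCopies n S)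
  obtain ⟨a, ha⟩ := exists_ne (1 : S)
  rw [← card_puncturedCopies] at hp ⊢
  exact exists_surjective_alternatingGroup_fin
    (f := Monoid.Coprod.lift (straightAction n S) (twistedAction n a))
    (by rw [Monoid.Coprod.range_lift, range_sup_range_eq_alternatingGroup ha (zpowers_ne_top a) hp])

theorem stmt_3_general {G H S : Type*} [Group G] [Group H] [Group S] [Finite S] [Nontrivial S]
    [Group.IsPerfect S] {φ : G →* S} {ψ : H →* S} (hφ : Function.Surjective φ)
    (hψ : Function.Surjective ψ) :
    {n : ℕ | ∃ χ : Monoid.Coprod G H →* alternatingGroup (Fin n),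
      Function.Surjective χ}.Infinite := by
  refine Set.infinite_of_forall_exists_gt fun B => ?_
  obtain ⟨n, hn, hp, hB⟩ := exists_prime_succ_mul_sub_one_gt (Nat.card_pos (α := S)).ne' B
  obtain ⟨χ, hχ⟩ := exists_surjective_coprod_alternatingGroup hn hp
  exact ⟨_, ⟨χ.comp (Monoid.Coprod.map φ ψ), hχ.comp (coprod_map_surjective hφ hψ)⟩, hB⟩

/-- If a group `G` has a finite non-abelian simple quotient, then the free product `G * G`
maps onto `Alt(n)` for infinitely many `n`. -/
theorem stmt_3 (G : Type) [Group G]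
    (S : Type) [Group S] [Finite S] [IsSimpleGroup S]
    (hna : ¬ ∀ x y : S, x * y = y * x)
    (φ : G →* S) (hφ : Function.Surjective φ) :
    {n : ℕ | ∃ ψ : Monoid.Coprod G G →* alternatingGroup (Fin n),
      Function.Surjective ψ}.Infinite := by
  have : Group.IsPerfect S := isPerfect_of_isSimpleGroup_s3 fun h => hna h.is_comm.comm
  exact stmt_3_general hφ hφ
end
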